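/- arXiv:2306.07870 — 4 statements merged into one kernel-verified Lean document; each statement's English description precedes it below -/
import Mathlib

section
/- Let p be a binary word of length l with r runs, r_i of which are of size i, and let r_{2,b} be the number of runs of p of size 2 that are either the first or the last run of p. For any n ≥ 3: if l ≥ 3, then B_{n,p}(3) = r_1 · binomial(n − r − 1, l − r + 1) + (r_2 − r_{2,b}) · binomial(n − r − 1, l − r) + r_{2,b} · binomial(n − r, l − r + 1); if l < 3, then B_{n,p}(3) = binomial(n, 3) when r = 1 and B_{n,p}(3) = 3(n − 3) when r = 2. -/
/-- `occ p w` is the number of occurrences of `p` as a subsequence of `w`,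
i.e. the number of choices of indices `i₁ < ⋯ < i_l` in `w` matching `p`. -/
def occ (p w : List Bool) : ℕ := w.sublists.count p

/-- `B n p k` is the number of binary words of length `n` with exactly `k` occurrences of `p`. -/
noncomputable def B (n : ℕ) (p : List Bool) (k : ℕ) : ℕ :=
  Nat.card {w : List Bool // w.length = n ∧ occ p w = k}

/-- The list of runs (maximal blocks of consecutive equal letters) of a binary word. -/
def runs (p : List Bool) : List (List Bool) := p.splitBy (· == ·)

/-- The number of runs of a binary word. -/
def numRuns (p : List Bool) : ℕ := (runs p).length

/-- The number of runs of size `i` of a binary word. -/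
def numRunsOfSize (p : List Bool) (i : ℕ) : ℕ := ((runs p).map List.length).count i

/-- `maxOcc n p` is the maximum number of occurrences of `p` among binary words of length `n`. -/
noncomputable def maxOcc (n : ℕ) (p : List Bool) : ℕ :=
  sSup {k | ∃ w : List Bool, w.length = n ∧ occ p w = k}

/-- `p` has an internal zero at `n` if the sequence `(B n p k)_{k ≥ 0}` has an internal zero. -/
def HasInternalZeroAt (p : List Bool) (n : ℕ) : Prop :=
  ∃ k₁ k₂ k₃ : ℕ, k₁ < k₂ ∧ k₂ < k₃ ∧ B n p k₁ ≠ 0 ∧ B n p k₂ = 0 ∧ B n p k₃ ≠ 0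

/-- The number of runs of size `i` that are the first or last run of `p`. -/
def numBoundaryRunsOfSize (p : List Bool) (i : ℕ) : ℕ :=
  (if ((runs p).map List.length).headD 0 = i then 1 else 0) +
  (if 1 < numRuns p ∧ ((runs p).map List.length).getLastD 0 = i then 1 else 0)

namespace BThree

open PowerSeries

theorem loop_acc (l : List Bool) : ∀ (a : Bool) (g : List Bool) (gs : List (List Bool)),
    List.splitBy.loop (· == ·) l a g gs
      = gs.reverse ++ List.splitBy.loop (· == ·) l a g [] := by
  induction l with
  | nil => intro a g gs; simp [List.splitBy.loop]
  | cons b l ih =>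
    intro a g gs
    rw [List.splitBy.loop, List.splitBy.loop]
    cases (a == b)
    · simp only
      rw [ih b [] ((a :: g).reverse :: gs), ih b [] [(a :: g).reverse]]
      simp
    · simp only
      exact ih _ _ _

theorem loop_len (l : List Bool) : ∀ (a : Bool), ∃ h t, ∀ g : List Bool,
    (List.splitBy.loop (· == ·) l a g []).map List.length = (h + g.length + 1) :: t := by
  induction l with
  | nil => intro a; exact ⟨0, [], fun g => by simp [List.splitBy.loop]⟩
  | cons b l ih =>
    intro a
    by_cases hab : a = b
    · subst hab
      obtain ⟨h, t, H⟩ := ih a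
      refine ⟨h + 1, t, fun g => ?_⟩
      rw [List.splitBy.loop]
      simp only [beq_self_eq_true]
      rw [H]
      simp; omega
    · refine ⟨0, (List.splitBy.loop (· == ·) l b [] []).map List.length, fun g => ?_⟩
      rw [List.splitBy.loop]
      have : (a == b) = false := by simpa using hab
      simp only [this]
      rw [loop_acc]
      simp

/-- Run lengths. -/
def lens (p : List Bool) : List ℕ := (runs p).map List.length

theorem lens_single (a : Bool) : lens [a] = [1] := by
  simp [lens, runs, List.splitBy, List.splitBy.loop]

theorem lens_ne (a : Bool) (q : List Bool) : lens (a :: (!a) :: q) = 1 :: lens ((!a) :: q) := by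
  have : (a == !a) = false := by cases a <;> rfl
  simp only [lens, runs, List.splitBy]
  rw [List.splitBy.loop]
  simp only [this]
  rw [loop_acc]
  simp

theorem lens_eq (a : Bool) (q : List Bool) :
    ∃ h t, lens (a :: q) = (h + 1) :: t ∧ lens (a :: a :: q) = (h + 2) :: t := by
  obtain ⟨h, t, H⟩ := loop_len q a
  refine ⟨h, t, by simpa [lens, runs, List.splitBy] using H [], ?_⟩
  simp only [lens, runs, List.splitBy]
  rw [List.splitBy.loop]
  simp only [beq_self_eq_true]
  rw [H]
  simp

/-! occurrences -/

theorem occ_nil (w : List Bool) : occ [] w = 1 := by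
  unfold occ
  rw [(List.sublists_perm_sublists' w).count_eq]
  induction w with
  | nil => rfl
  | cons b w ih =>
    rw [List.sublists'_cons, List.count_append, ih, List.count_eq_zero_of_not_mem]
    simp

theorem occ_cons_nil (a : Bool) (q : List Bool) : occ (a :: q) [] = 0 := by
  simp [occ]

theorem occ_same (a : Bool) (q w : List Bool) :
    occ (a :: q) (a :: w) = occ (a :: q) w + occ q w := by
  unfold occ
  rw [(List.sublists_perm_sublists' w).count_eq, (List.sublists_perm_sublists' w).count_eq,
    (List.sublists_perm_sublists' _).count_eq, List.sublists'_cons, List.count_append,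
    List.count_map_of_injective _ _ (List.cons_injective)]

theorem occ_diff {a b : Bool} (h : a ≠ b) (q w : List Bool) :
    occ (a :: q) (b :: w) = occ (a :: q) w := by
  unfold occ
  rw [(List.sublists_perm_sublists' w).count_eq,
    (List.sublists_perm_sublists' _).count_eq, List.sublists'_cons, List.count_append,
    List.count_eq_zero_of_not_mem (l := List.map _ _)]
  · simp
  · simp; intros; exact fun h' => h h'.symm

theorem occ_d1 (a : Bool) (q w : List Bool) : occ (a :: q) ((!a) :: w) = occ (a :: q) w :=
  occ_diff (by cases a <;> simp) q w

theorem occ_d2 (a : Bool) (q w : List Bool) : occ ((!a) :: q) (a :: w) = occ ((!a) :: q) w :=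
  occ_diff (by cases a <;> simp) q w

theorem occ_pos (a : Bool) (q w : List Bool) (h : 0 < occ (a :: q) w) : 0 < occ q w := by
  induction w generalizing a q with
  | nil => simp [occ_cons_nil] at h
  | cons b w ih =>
    have key : 0 < occ q w := by
      by_cases hab : a = b
      · subst hab
        rw [occ_same] at h
        by_contra hq
        have := mt (ih a q) hq
        omega
      · rw [occ_diff hab] at h
        exact ih a q h
    cases q with
    | nil => simp [occ_nil]
    | cons c q =>
      by_cases hc : c = b
      · subst hc; rw [occ_same]; omega
      · rw [occ_diff hc]; exact key

theorem occ_two (a : Bool) (q w : List Bool) (h : 0 < occ (a :: a :: q) w) :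
    2 ≤ occ (a :: q) w := by
  induction w with
  | nil => simp [occ_cons_nil] at h
  | cons b w ih =>
    by_cases hab : a = b
    · subst hab
      rw [occ_same] at h ⊢
      by_cases h2 : 0 < occ (a :: a :: q) w
      · have := ih h2; omega
      · have := occ_pos a q w (by omega); omega
    · rw [occ_diff hab] at h ⊢
      exact ih h

/-! generating functions -/

/-- number of words of length `n` satisfying `P` -/
noncomputable def cnt (P : List Bool → Prop) (n : ℕ) : ℕ :=
  Nat.card {w : List Bool // w.length = n ∧ P w}

theorem fin_len (P : List Bool → Prop) (n : ℕ) : Finite {w : List Bool // w.length = n ∧ P w} := by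
  have : Finite {w : List Bool | w.length = n} := List.finite_length_eq Bool n
  exact Set.Finite.subset (s := {w : List Bool | w.length = n}) this (fun w hw => hw.1)

theorem cnt_zero (P : List Bool → Prop) [Decidable (P [])] :
    cnt P 0 = if P [] then 1 else 0 := by
  unfold cnt
  split_ifs with h
  · rw [Nat.card_eq_one_iff_unique]
    exact ⟨⟨fun x y => Subtype.ext (by
      rw [List.length_eq_zero_iff.1 x.2.1, List.length_eq_zero_iff.1 y.2.1])⟩, ⟨[], rfl, h⟩⟩
  · rw [Nat.card_eq_zero]
    left
    exact ⟨fun x => h (by simpa [List.length_eq_zero_iff.1 x.2.1] using x.2.2)⟩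

theorem cnt_succ (P : List Bool → Prop) (a : Bool) (n : ℕ) :
    cnt P (n + 1) = cnt (fun w => P (a :: w)) n + cnt (fun w => P ((!a) :: w)) n := by
  unfold cnt
  have := fin_len (fun w => P (a :: w)) n
  have := fin_len (fun w => P ((!a) :: w)) n
  rw [← Nat.card_sum]
  symm
  refine Nat.card_eq_of_bijective (fun s => match s with
    | Sum.inl w => ⟨a :: w.1, by simp [w.2.1], w.2.2⟩
    | Sum.inr w => ⟨(!a) :: w.1, by simp [w.2.1], w.2.2⟩) ⟨?_, ?_⟩
  · rintro (⟨x, hx⟩ | ⟨x, hx⟩) (⟨y, hy⟩ | ⟨y, hy⟩) h <;> simp at h ⊢ <;> assumption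
  · rintro ⟨w, hw, hP⟩
    cases w with
    | nil => simp at hw
    | cons b w =>
      by_cases hb : b = a
      · subst hb
        exact ⟨Sum.inl ⟨w, by simpa using hw, hP⟩, rfl⟩
      · have : b = !a := by cases a <;> cases b <;> simp_all
        subst this
        exact ⟨Sum.inr ⟨w, by simpa using hw, hP⟩, rfl⟩

noncomputable def gf (P : List Bool → Prop) : ℤ⟦X⟧ := PowerSeries.mk fun n => (cnt P n : ℤ)

theorem gf_congr {P Q : List Bool → Prop} (h : ∀ w, P w ↔ Q w) : gf P = gf Q := by
  have : P = Q := funext fun w => propext (h w)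
  rw [this]

theorem gf_false {P : List Bool → Prop} (h : ∀ w, ¬ P w) : gf P = 0 := by
  ext n
  have : IsEmpty {w : List Bool // w.length = n ∧ P w} := ⟨fun w => h _ w.2.2⟩
  simp [gf, cnt]

/-- The basic recursion, when the empty word does not satisfy `P`. -/
theorem gf_rec (P : List Bool → Prop) (a : Bool) (h : ¬ P []) :
    gf P = X * (gf (fun w => P (a :: w)) + gf (fun w => P ((!a) :: w))) := by
  classical
  ext n
  cases n with
  | zero => simp [gf, cnt_zero, h]
  | succ n => rw [coeff_succ_X_mul]; simp [gf, cnt_succ P a]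

theorem gf_rec1 (P : List Bool → Prop) (a : Bool) (h : P []) :
    gf P = 1 + X * (gf (fun w => P (a :: w)) + gf (fun w => P ((!a) :: w))) := by
  classical
  ext n
  cases n with
  | zero => simp [gf, cnt_zero, h]
  | succ n => rw [map_add, coeff_succ_X_mul]; simp [gf, cnt_succ P a, coeff_one]

/-- `1/(1-X)` -/
noncomputable def Y : ℤ⟦X⟧ := PowerSeries.mk 1

theorem hY : Y * (1 - X) = 1 := mk_one_mul_one_sub_eq_one ℤ

/-- step: letter `!a` is neutral, letter `a` leads to `Q`. -/
theorem gf_step {P Q : List Bool → Prop} (a : Bool) (h : ¬ P []) (h1 : ∀ w, P (a :: w) ↔ Q w)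
    (h2 : ∀ w, P ((!a) :: w) ↔ P w) : gf P = X * Y * gf Q := by
  have := gf_rec P a h
  rw [gf_congr h1, gf_congr h2] at this
  linear_combination (Y) * this + (-gf P) * hY

theorem gf_or {P Q R : List Bool → Prop} (h : ∀ w, P w ↔ Q w ∨ R w) (hd : ∀ w, Q w → ¬ R w) :
    gf P = gf Q + gf R := by
  ext n
  simp only [gf, coeff_mk, map_add]
  unfold cnt
  have := fin_len Q n
  have := fin_len R n
  rw [← Nat.cast_add, ← Nat.card_sum]
  congr 1
  symm
  refine Nat.card_eq_of_bijective (fun s => match s with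
    | Sum.inl w => ⟨w.1, w.2.1, (h _).2 (Or.inl w.2.2)⟩
    | Sum.inr w => ⟨w.1, w.2.1, (h _).2 (Or.inr w.2.2)⟩) ⟨?_, ?_⟩
  · rintro (⟨x, hx⟩ | ⟨x, hx⟩) (⟨y, hy⟩ | ⟨y, hy⟩) h <;> simp at h ⊢
    · exact h
    · subst h; exact hd _ hx.2 hy.2
    · subst h; exact hd _ hy.2 hx.2
    · exact h
  · rintro ⟨w, hw, hP⟩
    rcases (h w).1 hP with hq | hq
    · exact ⟨Sum.inl ⟨w, hw, hq⟩, rfl⟩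
    · exact ⟨Sum.inr ⟨w, hw, hq⟩, rfl⟩

noncomputable def f (k : ℕ) (p : List Bool) : ℤ⟦X⟧ := gf fun w => occ p w = k

noncomputable def g (i j : ℕ) (a : Bool) (q : List Bool) : ℤ⟦X⟧ :=
  gf fun w => occ (a :: q) w = i ∧ occ q w = j

theorem ne_not {a b : Bool} (h : a ≠ b) : a = !b := by cases a <;> cases b <;> simp_all

theorem g01_nil (a : Bool) : g 0 1 a [] = Y := by
  have h := gf_rec1 (fun w => occ [a] w = 0 ∧ occ [] w = 1) a (by simp [occ_cons_nil, occ_nil])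
  rw [gf_false (P := fun w => occ [a] (a :: w) = 0 ∧ occ [] (a :: w) = 1)
    (by intro w; simp [occ_same, occ_nil]),
    gf_congr (P := fun w => occ [a] ((!a) :: w) = 0 ∧ occ [] ((!a) :: w) = 1)
    (Q := fun w => occ [a] w = 0 ∧ occ [] w = 1) (by intro w; simp [occ_d1, occ_nil])] at h
  unfold g
  linear_combination Y * h - hY * (gf (fun w => occ [a] w = 0 ∧ occ [] w = 1))

theorem g0_nil (a : Bool) (j : ℕ) (hj : j ≠ 1) : g 0 j a [] = 0 :=
  gf_false (by intro w; simp [occ_nil]; omega)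

theorem g0_same (a : Bool) (j : ℕ) (hj : 0 < j) (q : List Bool) :
    g 0 j a (a :: q) = X * Y * g 0 j a q := by
  apply gf_step a
  · simp only [occ_cons_nil]; omega
  · intro w
    have := occ_pos a (a :: q) w
    simp only [occ_same]; omega
  · intro w
    simp only [occ_d1]

theorem gf_first {P Q : List Bool → Prop} (b : Bool) (h : ¬ P []) (h1 : ∀ w, P (b :: w) ↔ Q w)
    (h2 : ∀ w, ¬ P ((!b) :: w)) : gf P = X * gf Q := by
  rw [gf_rec P b h, gf_congr h1, gf_false h2, add_zero]

theorem gf_first' {P Q : List Bool → Prop} (b : Bool) (h : ¬ P []) (h1 : ∀ w, ¬ P (b :: w))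
    (h2 : ∀ w, P ((!b) :: w) ↔ Q w) : gf P = X * gf Q := by
  rw [gf_rec P b h, gf_false h1, gf_congr h2, zero_add]

theorem gf_zero {P : List Bool → Prop} (b : Bool) (h : ¬ P []) (h1 : ∀ w, ¬ P (b :: w))
    (h2 : ∀ w, ¬ P ((!b) :: w)) : gf P = 0 := by
  rw [gf_rec P b h, gf_false h1, gf_false h2, zero_add, mul_zero]

theorem g01_diff {a b : Bool} (h : a ≠ b) (q : List Bool) :
    g 0 1 a (b :: q) = X * g 0 1 b q := by
  obtain rfl := ne_not h
  apply gf_first b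
  · simp only [occ_cons_nil]; omega
  · intro w
    have := occ_pos b q w
    have := occ_pos (!b) (b :: q) w
    simp only [occ_same, occ_d1, occ_d2]; omega
  · intro w
    simp only [occ_same, occ_d1, occ_d2]; omega

theorem g11_nil (a : Bool) : g 1 1 a [] = X * Y * Y := by
  rw [show X * Y * Y = X * Y * g 0 1 a [] by rw [g01_nil]]
  apply gf_step a
  · simp only [occ_cons_nil]; omega
  · intro w
    simp only [occ_same, occ_nil, and_true]; omega
  · intro w
    simp only [occ_d1, occ_nil]

theorem g11_same (a : Bool) (q : List Bool) : g 1 1 a (a :: q) = 0 := by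
  apply gf_false
  intro w
  have := occ_two a q w
  omega

theorem g11_diff {a b : Bool} (h : a ≠ b) (q : List Bool) :
    g 1 1 a (b :: q) = X * g 0 1 a (b :: q) := by
  obtain rfl := ne_not h
  apply gf_first' b
  · simp only [occ_cons_nil]; omega
  · intro w
    have := occ_pos b q w
    have := occ_pos (!b) (b :: q) w
    simp only [occ_same, occ_d1, occ_d2]; omega
  · intro w
    simp only [occ_same, occ_d1, occ_d2]; omega

theorem g12_same (a : Bool) (q : List Bool) : g 1 2 a (a :: q) = X * Y * g 1 1 a q := by
  apply gf_step a
  · simp only [occ_cons_nil]; omega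
  · intro w
    have := occ_pos a q w
    have := occ_pos a (a :: q) w
    have := occ_two a q w
    simp only [occ_same]; omega
  · intro w
    simp only [occ_d1]

theorem g21_nil (a : Bool) : g 2 1 a [] = X * Y * (X * Y * Y) := by
  rw [← g11_nil a]
  apply gf_step a
  · simp only [occ_cons_nil]; omega
  · intro w
    simp only [occ_same, occ_nil, and_true]; omega
  · intro w
    simp only [occ_d1, occ_nil]

theorem g21_same (a : Bool) (q : List Bool) : g 2 1 a (a :: q) = 0 := by
  apply gf_false
  intro w
  have := occ_two a q w
  omega

theorem g21_diff {a b : Bool} (h : a ≠ b) (q : List Bool) :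
    g 2 1 a (b :: q) = X * X * g 0 1 a (b :: q) := by
  rw [mul_assoc, ← g11_diff h]
  obtain rfl := ne_not h
  apply gf_first' b
  · simp only [occ_cons_nil]; omega
  · intro w
    have := occ_pos b q w
    have := occ_pos (!b) (b :: q) w
    simp only [occ_same, occ_d1, occ_d2]; omega
  · intro w
    simp only [occ_same, occ_d1, occ_d2]; omega

/-- triple joint generating function -/
noncomputable def H (i s t : ℕ) (b : Bool) (q : List Bool) : ℤ⟦X⟧ :=
  gf fun w => occ ((!b) :: b :: q) w = i ∧ occ (b :: q) w = s ∧ occ q w = t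

theorem H011_same (b : Bool) (q : List Bool) : H 0 1 1 b (b :: q) = 0 := by
  apply gf_false
  intro w
  have := occ_two b q w
  omega

theorem H011_other (b : Bool) (q : List Bool) (hq : ∀ w, occ q (b :: w) = occ q w) :
    H 0 1 1 b q = X * g 0 1 b q := by
  apply gf_first b
  · simp only [occ_cons_nil]; omega
  · intro w
    have := occ_pos b q w
    have := occ_pos (!b) (b :: q) w
    simp only [occ_same, occ_d2, hq]; omega
  · intro w
    simp only [occ_same, occ_d1]; omega

theorem H021_same (b : Bool) (q : List Bool) : H 0 2 1 b (b :: q) = 0 := by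
  apply gf_false
  intro w
  have := occ_two b q w
  omega

theorem H021_other (b : Bool) (q : List Bool) (hq : ∀ w, occ q (b :: w) = occ q w) :
    H 0 2 1 b q = X * (X * g 0 1 b q) := by
  rw [← H011_other b q hq]
  apply gf_first b
  · simp only [occ_cons_nil]; omega
  · intro w
    have := occ_pos b q w
    have := occ_pos (!b) (b :: q) w
    simp only [occ_same, occ_d2, hq]; omega
  · intro w
    simp only [occ_same, occ_d1]; omega

theorem H012_same (b : Bool) (q : List Bool) : H 0 1 2 b (b :: q) = X * g 1 1 b q := by
  apply gf_first b
  · simp only [occ_cons_nil]; omega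
  · intro w
    have := occ_pos b q w
    have := occ_two b q w
    have := occ_pos b (b :: q) w
    have := occ_pos (!b) (b :: b :: q) w
    simp only [occ_same, occ_d2]; omega
  · intro w
    simp only [occ_same, occ_d1]; omega

theorem H012_other (b : Bool) (q : List Bool) (hq : ∀ w, occ q (b :: w) = occ q w) :
    H 0 1 2 b q = 0 := by
  unfold H
  apply gf_zero b
  · simp only [occ_cons_nil]; omega
  · intro w
    have := occ_pos b q w
    have := occ_pos (!b) (b :: q) w
    simp only [occ_same, occ_d2, hq]; omega
  · intro w
    simp only [occ_same, occ_d1]; omega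

theorem H111_ne (b : Bool) (c : Bool) (q : List Bool) : H 1 1 1 b (c :: q) = 0 := by
  by_cases hc : b = c
  · subst hc
    apply gf_false
    intro w
    have := occ_two b q w
    omega
  · have hc' : c = !b := by cases b <;> cases c <;> simp_all
    subst hc'
    unfold H
    apply gf_zero b
    · simp only [occ_cons_nil]; omega
    · intro w
      have := occ_pos b ((!b) :: q) w
      have := occ_pos (!b) (b :: (!b) :: q) w
      simp only [occ_same, occ_d2]; omega
    · intro w
      have := occ_pos b ((!b) :: q) w
      have := occ_pos (!b) q w
      simp only [occ_same, occ_d1]; omega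

theorem H111_nil (b : Bool) : H 1 1 1 b [] = X * (X * Y) := by
  rw [← g01_nil b, ← H011_other b [] (by simp [occ_nil])]
  apply gf_first' b
  · simp only [occ_cons_nil]; omega
  · intro w
    have := occ_pos (!b) [b] w
    simp only [occ_same, occ_d2, occ_nil]; omega
  · intro w
    simp only [occ_same, occ_d1, occ_nil, and_true]; omega

theorem g12_diff {a b : Bool} (h : a ≠ b) (q : List Bool) :
    g 1 2 a (b :: q) = X * H 1 1 1 b q := by
  obtain rfl := ne_not h
  apply gf_first b
  · simp only [occ_cons_nil]; omega
  · intro w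
    have := occ_pos b q w
    have := occ_pos (!b) (b :: q) w
    simp only [occ_same, occ_d1, occ_d2]; omega
  · intro w
    simp only [occ_same, occ_d1, occ_d2]; omega

theorem g03_diff {a b : Bool} (h : a ≠ b) (q : List Bool) :
    g 0 3 a (b :: q) = X * (g 0 3 b q + (H 0 1 2 b q + H 0 2 1 b q)) := by
  obtain rfl := ne_not h
  have e1 : H 0 1 2 b q + H 0 2 1 b q = gf (fun w => occ ((!b) :: b :: q) w = 0 ∧
      0 < occ (b :: q) w ∧ occ (b :: q) w + occ q w = 3) := by
    symm
    apply gf_or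
    · intro w
      have := occ_pos b q w
      omega
    · intro w; omega
  have e2 : g 0 3 b q + (H 0 1 2 b q + H 0 2 1 b q) = gf (fun w => occ ((!b) :: b :: q) w = 0 ∧
      occ (b :: q) w + occ q w = 3) := by
    rw [e1]
    symm
    apply gf_or
    · intro w
      have := occ_pos (!b) (b :: q) w
      omega
    · intro w; omega
  rw [e2]
  apply gf_first b
  · simp only [occ_cons_nil]; omega
  · intro w
    simp only [occ_same, occ_d1, occ_d2]
  · intro w
    have := occ_pos b q w
    have := occ_pos (!b) (b :: q) w
    simp only [occ_same, occ_d1, occ_d2]; omega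

theorem f3_cons (a : Bool) (q : List Bool) :
    f 3 (a :: q) = X * Y * (g 0 3 a q + (g 1 2 a q + g 2 1 a q)) := by
  have e1 : g 1 2 a q + g 2 1 a q = gf (fun w =>
      0 < occ (a :: q) w ∧ occ (a :: q) w + occ q w = 3) := by
    symm
    apply gf_or
    · intro w
      have := occ_pos a q w
      omega
    · intro w; omega
  have e2 : g 0 3 a q + (g 1 2 a q + g 2 1 a q) = gf (fun w =>
      occ (a :: q) w + occ q w = 3) := by
    rw [e1]
    symm
    apply gf_or
    · intro w
      omega
    · intro w; omega
  rw [e2]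
  apply gf_step a
  · simp only [occ_cons_nil]; omega
  · intro w
    simp only [occ_same]
  · intro w
    simp only [occ_d1]

/-- weight of the runs after the first one -/
noncomputable def rho : List ℕ → ℤ⟦X⟧
  | [] => 0
  | [m] => if m = 1 then X ^ 2 else if m = 2 then X else 0
  | m :: m' :: t => (if m = 1 then X ^ 2 else if m = 2 then X * (1 - X) else 0) + rho (m' :: t)

/-- weight of the first run -/
noncomputable def hw (m : ℕ) : ℤ⟦X⟧ := if m = 1 then X ^ 2 else if m = 2 then X else 0

theorem rho_formula (L : List ℕ) (hL : L ≠ []) :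
    rho L = (L.count 1 : ℤ⟦X⟧) * X ^ 2
      + ((L.count 2 : ℤ⟦X⟧) - (if L.getLastD 0 = 2 then 1 else 0)) * (X * (1 - X))
      + (if L.getLastD 0 = 2 then 1 else 0) * X := by
  induction L with
  | nil => exact absurd rfl hL
  | cons m t ih =>
    cases t with
    | nil =>
      by_cases h1 : m = 1
      · subst h1; simp [rho]
      · by_cases h2 : m = 2
        · subst h2; simp [rho]
        · simp [rho, h1, h2]
    | cons m' t =>
      have ih := ih (by simp)
      have e : (m :: m' :: t).getLastD 0 = (m' :: t).getLastD 0 := by simp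
      have c1 : (m :: m' :: t).count 1 = (m' :: t).count 1 + if m = 1 then 1 else 0 := by
        rw [List.count_cons]; simp
      have c2 : (m :: m' :: t).count 2 = (m' :: t).count 2 + if m = 2 then 1 else 0 := by
        rw [List.count_cons]; simp
      rw [e, rho, ih, c1, c2]
      generalize (m' :: t).count 1 = k1
      generalize (m' :: t).count 2 = k2
      generalize (m' :: t).getLastD 0 = k3
      by_cases h1 : m = 1
      · subst h1; simp; ring
      · by_cases h2 : m = 2
        · subst h2; simp; ring
        · simp [h1, h2]

theorem lens_sum (p : List Bool) : (lens p).sum = p.length := by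
  unfold lens runs
  rw [← List.length_flatten, List.flatten_splitBy]

theorem sum_aux (L : List ℕ) (h : 0 ∉ L) : L.length + L.count 2 ≤ L.sum := by
  induction L with
  | nil => simp
  | cons m t ih =>
    simp only [List.mem_cons, not_or] at h
    have := ih h.2
    rw [List.count_cons, List.length_cons, List.sum_cons]
    by_cases h2 : m = 2
    · subst h2; simp; omega
    · simp [h2]; omega

theorem lens_pos (p : List Bool) : 0 ∉ lens p := by
  simp only [lens, List.mem_map, not_exists, not_and, runs]
  intro x hx h0
  rw [List.length_eq_zero_iff] at h0
  subst h0
  exact List.nil_notMem_splitBy _ _ hx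

theorem bool_cases (a b : Bool) : b = a ∨ b = !a := by cases a <;> cases b <;> simp

theorem ne_not_self (a : Bool) : a ≠ !a := by cases a <;> simp

theorem g01_closed (q : List Bool) : ∀ a, ∃ d, (a :: q).length = (lens (a :: q)).length + d ∧
    X * g 0 1 a q = X ^ (a :: q).length * Y ^ (d + 1) := by
  induction q with
  | nil => intro a; exact ⟨0, by simp [lens_single], by simp [g01_nil]⟩
  | cons b q ih =>
    intro a
    rcases bool_cases a b with rfl | rfl
    · obtain ⟨d, h1, h2⟩ := ih b
      obtain ⟨h, t, e1, e2⟩ := lens_eq b q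
      refine ⟨d + 1, ?_, ?_⟩
      · rw [e2]; rw [e1] at h1; simp at h1 ⊢; omega
      · rw [g0_same b 1 one_pos, List.length_cons, pow_succ]
        linear_combination (X * Y) * h2
    · obtain ⟨d, h1, h2⟩ := ih (!a)
      refine ⟨d, ?_, ?_⟩
      · rw [lens_ne]; simp at h1 ⊢; omega
      · rw [g01_diff (ne_not_self a), List.length_cons, pow_succ]
        linear_combination X * h2

theorem occ_other (b : Bool) (q w : List Bool) : occ ((!b) :: q) (b :: w) = occ ((!b) :: q) w :=
  occ_d2 b q w

theorem extra (b : Bool) (q : List Bool) (h : ℕ) (t : List ℕ) (hL : lens (b :: q) = h :: t) :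
    H 0 1 2 b q + H 0 2 1 b q + g 0 1 b q * rho t = g 0 1 b q * rho (h :: t) := by
  cases q with
  | nil =>
    rw [lens_single] at hL
    simp only [List.cons.injEq] at hL
    obtain ⟨rfl, rfl⟩ := hL
    rw [H012_other b [] (by simp [occ_nil]), H021_other b [] (by simp [occ_nil])]
    simp [rho]; ring
  | cons c q =>
    rcases bool_cases b c with rfl | rfl
    · rw [H012_same, H021_same]
      cases q with
      | nil =>
        obtain ⟨h', t', e1, e2⟩ := lens_eq c []
        rw [lens_single] at e1
        rw [e2] at hL
        simp only [List.cons.injEq] at hL e1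
        obtain ⟨rfl, rfl⟩ := hL
        obtain ⟨h0, h0'⟩ := e1
        have : h' = 0 := by omega
        subst this; subst h0'
        rw [g11_nil, g0_same c 1 one_pos, g01_nil]
        simp [rho]; ring
      | cons c' q =>
        rcases bool_cases c c' with rfl | rfl
        · obtain ⟨h', t', e1, e2⟩ := lens_eq c' (c' :: q)
          obtain ⟨h2, t2, e3, e4⟩ := lens_eq c' q
          rw [e4] at e1
          rw [e2] at hL
          simp only [List.cons.injEq] at hL e1
          obtain ⟨rfl, rfl⟩ := hL
          rw [g11_same]
          have n2 : h' ≠ 0 := by omega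
          cases t' <;> simp [rho, n2]
        · obtain ⟨h', t', e1, e2⟩ := lens_eq c ((!c) :: q)
          rw [lens_ne] at e1
          rw [e2] at hL
          simp only [List.cons.injEq] at hL e1
          obtain ⟨rfl, rfl⟩ := hL
          obtain ⟨h0, h0'⟩ := e1
          have : h' = 0 := by omega
          subst this; subst h0'
          obtain ⟨h3, t3, e3, -⟩ := lens_eq (!c) q
          rw [e3, g11_diff (ne_not_self c), g0_same c 1 one_pos]
          simp [rho]
          linear_combination (-X ^ 2 * g 0 1 c ((!c) :: q)) * hY
    · rw [H012_other b _ (occ_other b q), H021_other b _ (occ_other b q)]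
      rw [lens_ne] at hL
      simp only [List.cons.injEq] at hL
      obtain ⟨rfl, rfl⟩ := hL
      obtain ⟨h3, t3, e3, -⟩ := lens_eq (!b) q
      rw [e3]
      simp [rho]; ring

theorem g03_closed (q : List Bool) : ∀ a h t, lens (a :: q) = h :: t →
    g 0 3 a q = g 0 1 a q * rho t := by
  induction q with
  | nil =>
    intro a h t hL
    rw [lens_single] at hL
    simp only [List.cons.injEq] at hL
    obtain ⟨rfl, rfl⟩ := hL
    rw [g0_nil a 3 (by decide)]; simp [rho]
  | cons b q ih =>
    intro a h t hL
    rcases bool_cases a b with rfl | rfl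
    · obtain ⟨h', t', e1, e2⟩ := lens_eq b q
      rw [e2] at hL
      simp only [List.cons.injEq] at hL
      obtain ⟨rfl, rfl⟩ := hL
      rw [g0_same b 1 one_pos, g0_same b 3 (by decide), ih b _ _ e1]
      ring
    · rw [lens_ne] at hL
      simp only [List.cons.injEq] at hL
      obtain ⟨rfl, rfl⟩ := hL
      obtain ⟨h', t', e1, -⟩ := lens_eq (!a) q
      rw [e1, g03_diff (ne_not_self a), g01_diff (ne_not_self a), ih _ _ _ e1]
      linear_combination X * extra (!a) q _ _ e1

theorem f3_closed (a : Bool) (q : List Bool) (h : ℕ) (t : List ℕ) (hL : lens (a :: q) = h :: t)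
    (hl : 3 ≤ (a :: q).length) :
    f 3 (a :: q) = Y * (X * g 0 1 a q) * (hw h + rho t) := by
  rw [f3_cons, g03_closed q a h t hL]
  cases q with
  | nil => simp at hl
  | cons b q =>
    rcases bool_cases a b with rfl | rfl
    · rw [g12_same, g21_same]
      cases q with
      | nil => simp at hl
      | cons c q =>
        rcases bool_cases b c with rfl | rfl
        · obtain ⟨h', t', e1, e2⟩ := lens_eq c (c :: q)
          obtain ⟨h2, t2, e3, e4⟩ := lens_eq c q
          rw [e4] at e1
          rw [e2] at hL
          simp only [List.cons.injEq] at hL e1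
          obtain ⟨rfl, rfl⟩ := hL
          have n2 : h' ≠ 0 := by omega
          rw [g11_same]; simp [hw, n2]; ring
        · obtain ⟨h', t', e1, e2⟩ := lens_eq b ((!b) :: q)
          rw [lens_ne] at e1
          rw [e2] at hL
          simp only [List.cons.injEq] at hL e1
          obtain ⟨rfl, rfl⟩ := hL
          have : h' = 0 := by omega
          subst this
          rw [g11_diff (ne_not_self b), g0_same b 1 one_pos]
          simp [hw]; ring
    · rw [lens_ne] at hL
      simp only [List.cons.injEq] at hL
      obtain ⟨rfl, rfl⟩ := hL
      rw [g12_diff (ne_not_self a), g21_diff (ne_not_self a)]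
      cases q with
      | nil => simp at hl
      | cons c q => rw [H111_ne]; simp [hw]; ring

theorem coeff_XY (n m k : ℕ) :
    coeff n (X ^ m * Y ^ (k + 1)) = if m ≤ n then (((k + (n - m)).choose k : ℕ) : ℤ) else 0 := by
  rw [coeff_X_pow_mul', Y, mk_one_pow_eq_mk_choose_add]
  simp

theorem coeff_f (n : ℕ) (p : List Bool) : coeff n (f 3 p) = (B n p 3 : ℤ) := by
  simp [f, gf, cnt, B]

theorem choose_aux (n l r d e : ℕ) (hl : l = r + d) (he : 0 < e + d) :
    (if l + 1 + e ≤ n then (((e + d + (n - (l + 1 + e))).choose (e + d) : ℕ) : ℤ) else 0)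
     = ((n - r - 1).choose (e + d) : ℕ) := by
  split_ifs with h
  · congr 2; omega
  · rw [Nat.choose_eq_zero_of_lt (by omega)]; simp

theorem choose_aux2 (n l r d : ℕ) (hl : l = r + d) :
    (if l + 1 ≤ n then (((1 + d + (n - (l + 1))).choose (1 + d) : ℕ) : ℤ) else 0)
     = ((n - r).choose (1 + d) : ℕ) := by
  split_ifs with h
  · congr 2; omega
  · rw [Nat.choose_eq_zero_of_lt (by omega)]; simp

theorem main3 (p : List Bool) (n : ℕ) (hl : 3 ≤ p.length) :
    B n p 3 = numRunsOfSize p 1 * (n - numRuns p - 1).choose (p.length + 1 - numRuns p)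
        + (numRunsOfSize p 2 - numBoundaryRunsOfSize p 2)
          * (n - numRuns p - 1).choose (p.length - numRuns p)
        + numBoundaryRunsOfSize p 2 * (n - numRuns p).choose (p.length + 1 - numRuns p) := by
  cases p with
  | nil => simp at hl
  | cons a q =>
    obtain ⟨h0, t, hL, -⟩ := lens_eq a q
    generalize h0 + 1 = h at hL
    obtain ⟨d, hd, hg⟩ := g01_closed q a
    have hf := f3_closed a q h t hL hl
    have hnr : numRuns (a :: q) = (lens (a :: q)).length := by simp [numRuns, lens]
    have hsum := lens_sum (a :: q)
    have hc : ∀ i, numRunsOfSize (a :: q) i = (h :: t).count i := by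
      intro i; rw [← hL]; rfl
    have hb : numBoundaryRunsOfSize (a :: q) 2 = (if h = 2 then 1 else 0) +
        (if t ≠ [] ∧ t.getLastD 0 = 2 then 1 else 0) := by
      have hL' : (runs (a :: q)).map List.length = h :: t := hL
      rw [hL] at hnr
      simp only [numBoundaryRunsOfSize, hL', hnr]
      cases t <;> simp
    have hsa := sum_aux _ (lens_pos (a :: q))
    rw [hsum, ← hnr] at hsa
    change _ + numRunsOfSize (a :: q) 2 ≤ _ at hsa
    have hle : numBoundaryRunsOfSize (a :: q) 2 ≤ numRunsOfSize (a :: q) 2 := by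
      rw [hb, hc, List.count_cons]
      have : (if t ≠ [] ∧ t.getLastD 0 = 2 then 1 else 0) ≤ t.count 2 := by
        split_ifs with hh
        · apply List.count_pos_iff.2
          rw [← hh.2, List.getLastD_eq_getLast?, List.getLast?_eq_getLast_of_ne_nil hh.1]
          simp
        · exact Nat.zero_le _
      simp only [beq_iff_eq]
      omega
    have hW : hw h + rho t = (numRunsOfSize (a :: q) 1 : ℤ⟦X⟧) * X ^ 2
      + ((numRunsOfSize (a :: q) 2 - numBoundaryRunsOfSize (a :: q) 2 : ℕ) : ℤ⟦X⟧)
        * (X * (1 - X))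
      + (numBoundaryRunsOfSize (a :: q) 2 : ℤ⟦X⟧) * X := by
      rw [Nat.cast_sub hle, hb, hc, hc]
      by_cases ht : t = []
      · subst ht
        rw [hL] at hsum
        simp at hsum
        have h1 : h ≠ 1 := by simp at hl; omega
        have h2 : h ≠ 2 := by simp at hl; omega
        simp [hw, rho, h1, h2]
      · rw [rho_formula t ht, List.count_cons, List.count_cons]
        by_cases h1 : h = 1
        · subst h1; simp [hw, ht]; ring
        · by_cases h2 : h = 2
          · subst h2
            generalize t.getLastD 0 = k3
            by_cases h3 : k3 = 2 <;> simp [hw, ht, h3] <;> ring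
          · simp [hw, h1, h2, ht]
    rw [hW, hg] at hf
    rw [← hnr] at hd
    generalize numRunsOfSize (a :: q) 1 = r1 at *
    generalize numRunsOfSize (a :: q) 2 = r2 at *
    generalize numBoundaryRunsOfSize (a :: q) 2 = b at *
    generalize hs : r2 - b = s at *
    generalize numRuns (a :: q) = r at *
    generalize (a :: q).length = l at *
    have hf' : f 3 (a :: q) = (r1 : ℤ) • (X ^ (l + 1 + 1) * Y ^ (1 + d + 1))
        + (s : ℤ) • (X ^ (l + 1 + 0) * Y ^ (0 + d + 1))
        + (b : ℤ) • (X ^ (l + 1) * Y ^ (1 + d + 1)) := by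
      rw [hf]
      simp only [zsmul_eq_mul, Int.cast_natCast]
      linear_combination (s * X ^ (l + 1) * Y ^ (d + 1)) * hY
    have key := congrArg (coeff n) hf'
    rw [coeff_f, map_add, map_add, map_smul, map_smul, map_smul, coeff_XY, coeff_XY, coeff_XY,
      choose_aux2 n l r d hd, choose_aux n l r d 1 hd (by omega)] at key
    have e1 : l + 1 - r = 1 + d := by omega
    have e2 : l - r = d := by omega
    rw [e1, e2]
    by_cases hs0 : s = 0
    · subst hs0
      zify
      rw [key]; simp
    · rw [choose_aux n l r d 0 hd (by omega)] at key
      zify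
      rw [key]; simp

theorem one_run (n : ℕ) (p : List Bool) (h : f 3 p = X ^ 3 * Y ^ (3 + 1)) (hn : 3 ≤ n) :
    B n p 3 = n.choose 3 := by
  have key := congrArg (coeff n) h
  rw [coeff_f, coeff_XY, if_pos hn, Nat.add_sub_cancel' hn] at key
  exact_mod_cast key

theorem B_single (n : ℕ) (a : Bool) (hn : 3 ≤ n) : B n [a] 3 = n.choose 3 := by
  apply one_run n _ _ hn
  have g12 : g 1 2 a [] = 0 := gf_false (by intro w; simp [occ_nil])
  rw [f3_cons, g0_nil a 3 (by decide), g12, g21_nil]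
  ring

theorem B_double (n : ℕ) (a : Bool) (hn : 3 ≤ n) : B n [a, a] 3 = n.choose 3 := by
  apply one_run n _ _ hn
  rw [f3_cons, g0_same a 3 (by decide), g0_nil a 3 (by decide), g12_same, g11_nil, g21_same]
  ring

theorem B_two (n : ℕ) (a : Bool) (hn : 3 ≤ n) : B n [a, !a] 3 = 3 * (n - 3) := by
  have h : f 3 [a, !a] = (3 : ℤ) • (X ^ 4 * Y ^ (1 + 1)) := by
    have hn := ne_not_self a
    rw [f3_cons, g03_diff hn, g0_nil _ 3 (by decide), g12_diff hn, H111_nil, g21_diff hn,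
      g01_diff hn, H012_other _ _ (by simp [occ_nil]), H021_other _ _ (by simp [occ_nil]), g01_nil]
    simp only [zsmul_eq_mul]
    push_cast
    ring
  have key := congrArg (coeff n) h
  rw [coeff_f, map_smul, coeff_XY] at key
  zify
  rw [key]
  split_ifs with h4
  · rw [Nat.choose_one_right]; simp; omega
  · have : n = 3 := by omega
    subst this; simp

end BThree

theorem B_three_eq (p : List Bool) (l r r₁ r₂ r2b : ℕ) (hl : p.length = l)
    (hr : numRuns p = r) (hr₁ : numRunsOfSize p 1 = r₁) (hr₂ : numRunsOfSize p 2 = r₂)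
    (hr2b : numBoundaryRunsOfSize p 2 = r2b) (n : ℕ) (hn : 3 ≤ n) :
    (3 ≤ l → B n p 3 = r₁ * (n - r - 1).choose (l + 1 - r)
        + (r₂ - r2b) * (n - r - 1).choose (l - r)
        + r2b * (n - r).choose (l + 1 - r)) ∧
    (l < 3 →
      (r = 1 → B n p 3 = n.choose 3) ∧
      (r = 2 → B n p 3 = 3 * (n - 3))) := by
  subst hl hr hr₁ hr₂ hr2b
  refine ⟨fun h => BThree.main3 p n h, fun h => ?_⟩
  rcases p with _ | ⟨a, _ | ⟨b, _ | ⟨c, q⟩⟩⟩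
  · simp [numRuns, runs]
  · refine ⟨fun _ => BThree.B_single n a hn, fun h2 => ?_⟩
    have := congrArg List.length (BThree.lens_single a)
    simp [BThree.lens] at this
    simp [numRuns, this] at h2
  · rcases BThree.bool_cases a b with rfl | rfl
    · refine ⟨fun _ => BThree.B_double n b hn, fun h2 => ?_⟩
      obtain ⟨h', t, e1, e2⟩ := BThree.lens_eq b []
      have e3 := congrArg List.length (e1.symm.trans (BThree.lens_single b))
      have e4 := congrArg List.length e2
      simp [BThree.lens] at e3 e4
      simp [numRuns, e4, e3] at h2
    · refine ⟨fun h2 => ?_, fun _ => BThree.B_two n a hn⟩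
      have := congrArg List.length (BThree.lens_ne a [])
      rw [BThree.lens_single] at this
      simp [BThree.lens] at this
      simp [numRuns, this] at h2
  · simp only [List.length_cons] at h; omega
end

section
/- Let p be a binary word of length l with r runs, r_i of which are of size i; let r_{3,b} be the number of runs of p of size 3 that are the first or last run; and let r_{(1,2),b} be 2 if the first two runs of both p and its reverse p^r have sizes 1 and 2 respectively, 1 if this holds for exactly one of p or p^r, and 0 otherwise. For any n ≥ 5: if l ≥ 4, then B_{n,p}(4) = r_1 · binomial(n − r − 2, l − r + 1) + binomial(r_1, 2) · binomial(n − r − 1, l − r + 1) + (r_3 − r_{3,b}) · binomial(n − r − 1, l − r) + r_{3,b} · binomial(n − r, l − r + 1) + r_{(1,2),b} · binomial(n − r − 2, l − r); otherwise, B_{n,p}(4) = 0 if l = 2 and r = 1; binomial(n, 4) if l = 1 or l = 3 with r = 1; (n − 4)^2 if l = 3 and r = 2; 5n − 19 if l = 2 and r = 2; and 7n − 31 if l = 3 and r = 3. -/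
/-- `r12b p` is `2` if the first two runs of both `p` and its reverse have sizes `1` and `2`
respectively, `1` if this holds for exactly one of them, and `0` otherwise. -/
def r12b (p : List Bool) : ℕ :=
  (if ((runs p).map List.length).take 2 = [1, 2] then 1 else 0) +
  (if ((runs p.reverse).map List.length).take 2 = [1, 2] then 1 else 0)


namespace BFour

open PowerSeries

theorem occ_nil_left (w : List Bool) : occ [] w = 1 := by
  unfold occ
  rw [(List.sublists_perm_sublists' w).count_eq]
  induction w with
  | nil => simp
  | cons c w ih =>
    rw [List.sublists'_cons, List.count_append, ih]
    simp [List.count_eq_zero]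

theorem occ_cons_nil (x : Bool) (q : List Bool) : occ (x :: q) [] = 0 := by
  simp [occ]

theorem occ_cons_cons (x c : Bool) (q w : List Bool) :
    occ (x :: q) (c :: w) = occ (x :: q) w + if c = x then occ q w else 0 := by
  unfold occ
  rw [(List.sublists_perm_sublists' (c :: w)).count_eq,
    (List.sublists_perm_sublists' w).count_eq, (List.sublists_perm_sublists' w).count_eq,
    List.sublists'_cons, List.count_append]
  congr 1
  split_ifs with h
  · subst h
    exact List.count_map_of_injective _ _ List.cons_injective _
  · simp only [List.count_eq_zero, List.mem_map, not_exists, not_and]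
    intro a _ h'
    simp at h'
    exact h h'.1

open Classical in
/-- number of words of length `n` satisfying `P`. -/
noncomputable def cnt : ℕ → (List Bool → Prop) → ℤ
  | 0, P => if P [] then 1 else 0
  | n + 1, P => cnt n (fun w => P (true :: w)) + cnt n (fun w => P (false :: w))

theorem cnt_step (x : Bool) (n : ℕ) (P : List Bool → Prop) :
    cnt (n + 1) P = cnt n (fun w => P (x :: w)) + cnt n (fun w => P ((!x) :: w)) := by
  cases x <;> simp [cnt, add_comm]

theorem cnt_add (n : ℕ) (P Q R : List Bool → Prop) (h : ∀ w, P w ↔ Q w ∨ R w)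
    (h' : ∀ w, ¬ (Q w ∧ R w)) : cnt n P = cnt n Q + cnt n R := by
  induction n generalizing P Q R with
  | zero =>
    have h1 := h []
    have h2 := h' []
    simp only [cnt]
    by_cases hq : Q [] <;> by_cases hr : R [] <;> simp_all
  | succ n ih =>
    simp only [cnt]
    rw [ih _ _ _ (fun w => h (true :: w)) (fun w => h' (true :: w)),
      ih _ _ _ (fun w => h (false :: w)) (fun w => h' (false :: w))]
    ring

theorem cnt_false (n : ℕ) (P : List Bool → Prop) (h : ∀ w, ¬ P w) : cnt n P = 0 := by
  have := cnt_add n P P P (by simp) (by simpa using h)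
  linarith

theorem cnt_eq_card (n : ℕ) (P : List Bool → Prop) :
    cnt n P = (Nat.card {w : List Bool // w.length = n ∧ P w} : ℤ) := by
  have hfin : ∀ (n : ℕ) (P : List Bool → Prop), {w : List Bool | w.length = n ∧ P w}.Finite :=
    fun n P => (List.finite_length_eq Bool n).subset (fun w h => h.1)
  have hc : ∀ (n : ℕ) (P : List Bool → Prop),
      Nat.card {w : List Bool // w.length = n ∧ P w} = {w : List Bool | w.length = n ∧ P w}.ncard :=
    fun n P => rfl
  rw [hc]
  induction n generalizing P with
  | zero =>
    simp only [cnt]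
    by_cases hP : P []
    · have : {w : List Bool | w.length = 0 ∧ P w} = {[]} := by
        ext w; simp only [Set.mem_ofPred_eq, List.length_eq_zero_iff, Set.mem_singleton_iff]
        constructor
        · exact fun h => h.1
        · rintro rfl; exact ⟨rfl, hP⟩
      rw [this]; simp [hP]
    · have : {w : List Bool | w.length = 0 ∧ P w} = ∅ := by
        ext w; simp only [Set.mem_ofPred_eq, List.length_eq_zero_iff, Set.mem_empty_iff_false]
        simp only [iff_false]
        rintro ⟨rfl, h⟩; exact hP h
      rw [this]; simp [hP]
  | succ n ih =>
    simp only [cnt]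
    rw [ih, ih]
    have h1 : {w : List Bool | w.length = n + 1 ∧ P w} =
        (List.cons true) '' {w : List Bool | w.length = n ∧ P (true :: w)} ∪
        (List.cons false) '' {w : List Bool | w.length = n ∧ P (false :: w)} := by
      ext w
      cases w with
      | nil => simp
      | cons c w => cases c <;> simp
    rw [h1, Set.ncard_union_eq ?_ ((hfin _ _).image _) ((hfin _ _).image _),
      Set.ncard_image_of_injective _ List.cons_injective,
      Set.ncard_image_of_injective _ List.cons_injective]
    · push_cast; rfl
    · rw [Set.disjoint_left]
      rintro w ⟨a, _, rfl⟩ ⟨b, _, h⟩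
      simp at h

/-- generating function of the words satisfying `P` -/
noncomputable def gf (P : List Bool → Prop) : ℤ⟦X⟧ := PowerSeries.mk (fun n => cnt n P)

theorem gf_step (x : Bool) (P : List Bool → Prop) (h : ¬ P []) :
    gf P = X * (gf (fun w => P (x :: w)) + gf (fun w => P ((!x) :: w))) := by
  ext n
  cases n with
  | zero => simp [gf, cnt, h]
  | succ n => simp [gf, PowerSeries.coeff_succ_X_mul, cnt_step x]

theorem gf_add (P Q R : List Bool → Prop) (h : ∀ w, P w ↔ Q w ∨ R w)
    (h' : ∀ w, ¬ (Q w ∧ R w)) : gf P = gf Q + gf R := by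
  ext n
  simp [gf, cnt_add n P Q R h h']

theorem gf_false (P : List Bool → Prop) (h : ∀ w, ¬ P w) : gf P = 0 := by
  ext n
  simp [gf, cnt_false n P h]

theorem gf_congr (P Q : List Bool → Prop) (h : ∀ w, P w ↔ Q w) : gf P = gf Q := by
  have : P = Q := funext fun w => propext (h w)
  rw [this]

/-- `u = 1/(1-X)` -/
noncomputable def u : ℤ⟦X⟧ := PowerSeries.mk 1

theorem u_mul : u * (1 - X) = 1 := mk_one_mul_one_sub_eq_one ℤ

theorem loop_eq {T R : ℤ⟦X⟧} (h : T = X * (T + R)) : T = u * X * R := by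
  linear_combination T * u_mul.symm + u * h

/-- weighted sum of occurrence numbers of the suffixes of `q` -/
def phi : List ℕ → List Bool → List Bool → ℕ
  | [], _, _ => 0
  | a :: _, [], _ => a
  | a :: as, x :: q, w => a * occ (x :: q) w + phi as q w

/-- new weights after reading `c` -/
def upd (c : Bool) : ℕ → List ℕ → List Bool → List ℕ
  | carry, [], _ => if carry = 0 then [] else [carry]
  | carry, a :: _, [] => [a + carry]
  | carry, a :: as, x :: q => (a + carry) :: upd c (if c = x then a else 0) as q

theorem phi_upd (c : Bool) (carry : ℕ) (a : List ℕ) (q w : List Bool) :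
    phi (upd c carry a q) q w = carry * occ q w + phi a q (c :: w) := by
  induction a generalizing carry q with
  | nil =>
    cases q <;> by_cases h : carry = 0 <;> simp [upd, phi, h, occ_nil_left]
  | cons a as ih =>
    cases q with
    | nil => simp [upd, phi, occ_nil_left, add_comm]
    | cons x q =>
      simp only [upd, phi, ih, occ_cons_cons]
      split_ifs <;> ring

/-- guard: the word has no occurrence of the pattern extended by the guard letter -/
def guard (g : Option Bool) (q w : List Bool) : Prop :=
  match g with
  | none => True
  | some y => occ (y :: q) w = 0

def St (g : Option Bool) (q : List Bool) (a : List ℕ) (k : ℕ) (w : List Bool) : Prop :=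
  guard g q w ∧ 1 ≤ occ q w ∧ phi a q w = k

noncomputable def T (g : Option Bool) (q : List Bool) (a : List ℕ) (k : ℕ) : ℤ⟦X⟧ :=
  gf (St g q a k)

theorem phi_tail (a : List ℕ) (x : Bool) (q w : List Bool) (h : occ (x :: q) w = 0) :
    phi a (x :: q) w = phi a.tail q w := by
  cases a <;> simp [phi, h]

theorem St_nil (g : Option Bool) (x : Bool) (q : List Bool) (a : List ℕ) (k : ℕ) :
    ¬ St g (x :: q) a k [] := by
  simp [St, occ_cons_nil]

theorem step_diff (x g : Bool) (hg : g = !x) (q : List Bool) (a : List ℕ) (k : ℕ) :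
    T (some g) (x :: q) a k =
      X * (T (some x) q (upd x 0 a (x :: q)).tail k +
        T (some g) (x :: q) (upd x 0 a (x :: q)) k) := by
  subst hg
  unfold T
  rw [gf_step x _ (St_nil _ _ _ _ _)]
  rw [gf_false (fun w => St (some (!x)) (x :: q) a k ((!x) :: w)), add_zero]
  · congr 1
    apply gf_add
    · intro w
      have h1 := phi_upd x 0 a (x :: q) w
      rw [zero_mul, zero_add] at h1
      have h2 := phi_tail (upd x 0 a (x :: q)) x q w
      simp only [St, guard, occ_cons_cons]
      simp
      rw [← h1]
      constructor
      · rintro ⟨h3, h4, h5⟩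
        by_cases h6 : occ (x :: q) w = 0
        · left; rw [← h2 h6]; exact ⟨h6, by omega, h5⟩
        · right; exact ⟨h3, by omega, h5⟩
      · rintro (⟨h3, h4, h5⟩ | ⟨h3, h4, h5⟩)
        · refine ⟨?_, by omega, by rw [h2 h3]; exact h5⟩
          clear * - h3
          induction w with
          | nil => simp [occ_cons_nil]
          | cons c w ih =>
            rw [occ_cons_cons] at h3 ⊢
            have := ih (by omega)
            split_ifs <;> omega
        · exact ⟨h3, by omega, h5⟩
    · rintro w ⟨⟨h1, _⟩, ⟨_, h2, _⟩⟩
      simp only [guard] at h1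
      omega
  · intro w
    simp only [St, guard, occ_cons_cons]
    simp
    omega

theorem step_same (x : Bool) (q : List Bool) (a : List ℕ) (k : ℕ) :
    T (some x) (x :: q) a k =
      X * (T (some x) (x :: q) (upd (!x) 0 a (x :: q)) k +
        T (some x) q (upd x 0 a (x :: q)).tail k) := by
  unfold T
  rw [gf_step x _ (St_nil _ _ _ _ _), add_comm]
  congr 2
  · apply gf_congr
    intro w
    have h1 := phi_upd (!x) 0 a (x :: q) w
    simp only [St, guard, occ_cons_cons, h1]
    simp
  · apply gf_congr
    intro w
    have h1 := phi_upd x 0 a (x :: q) w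
    rw [zero_mul, zero_add] at h1
    have h2 := phi_tail (upd x 0 a (x :: q)) x q w
    simp only [St, guard, occ_cons_cons]
    simp
    rw [← h1]
    constructor
    · rintro ⟨⟨h3, h4⟩, h5, h6⟩
      exact ⟨h4, by omega, by rw [← h2 h4]; exact h6⟩
    · rintro ⟨h3, h4, h5⟩
      refine ⟨⟨?_, h3⟩, by omega, by rw [h2 h3]; exact h5⟩
      clear * - h3
      induction w with
      | nil => simp [occ_cons_nil]
      | cons c w ih =>
        rw [occ_cons_cons] at h3 ⊢
        have := ih (by omega)
        split_ifs <;> omega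

theorem step_none (x : Bool) (q : List Bool) (a : List ℕ) (k : ℕ) :
    T none (x :: q) a k =
      X * (T none (x :: q) (upd (!x) 0 a (x :: q)) k +
        (T (some x) q (upd x 0 a (x :: q)).tail k +
        T none (x :: q) (upd x 0 a (x :: q)) k)) := by
  unfold T
  rw [gf_step x _ (St_nil _ _ _ _ _), add_comm]
  congr 2
  · apply gf_congr
    intro w
    have h1 := phi_upd (!x) 0 a (x :: q) w
    simp only [St, guard, occ_cons_cons, h1]
    simp
  · apply gf_add
    · intro w
      have h1 := phi_upd x 0 a (x :: q) w
      rw [zero_mul, zero_add] at h1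
      have h2 := phi_tail (upd x 0 a (x :: q)) x q w
      simp only [St, guard, occ_cons_cons]
      simp
      rw [← h1]
      constructor
      · rintro ⟨h4, h5⟩
        by_cases h6 : occ (x :: q) w = 0
        · left; rw [← h2 h6]; exact ⟨h6, by omega, h5⟩
        · right; exact ⟨by omega, h5⟩
      · rintro (⟨h3, h4, h5⟩ | ⟨h4, h5⟩)
        · exact ⟨by omega, by rw [h2 h3]; exact h5⟩
        · exact ⟨by omega, h5⟩
    · rintro w ⟨⟨h1, _⟩, ⟨_, h2, _⟩⟩
      simp only [guard] at h1
      omega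

theorem occ_tail_pos (x : Bool) (q w : List Bool) (h : 1 ≤ occ (x :: q) w) : 1 ≤ occ q w := by
  induction w generalizing q x with
  | nil => simp [occ_cons_nil] at h
  | cons c w ih =>
    cases q with
    | nil => simp [occ_nil_left]
    | cons y q =>
      rw [occ_cons_cons] at h ⊢
      by_cases h2 : 1 ≤ occ (x :: y :: q) w
      · have := ih _ _ h2; omega
      · split_ifs at h <;> omega

theorem phi_ge (a : List ℕ) (q w : List Bool) (h : 1 ≤ occ q w) (hl : a.length ≤ q.length + 1) :
    a.sum ≤ phi a q w := by
  induction a generalizing q with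
  | nil => simp
  | cons a as ih =>
    cases q with
    | nil =>
      have : as = [] := by simpa using hl
      simp [phi, this]
    | cons x q =>
      have := ih q (occ_tail_pos _ _ _ h) (by simpa using hl)
      simp only [List.sum_cons, phi]
      nlinarith

theorem T_dead (g : Option Bool) (q : List Bool) (a : List ℕ) (k : ℕ) (h : k < a.sum)
    (hl : a.length ≤ q.length + 1) : T g q a k = 0 := by
  apply gf_false
  rintro w ⟨_, h1, h2⟩
  have := phi_ge a q w h1 hl
  omega

theorem phi_single (a : ℕ) (q w : List Bool) : phi [a] q w = a * occ q w := by
  cases q <;> simp [phi, occ_nil_left]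

theorem T_two (g : Option Bool) (q : List Bool) : T g q [2] 4 = T g q [1] 2 := by
  apply gf_congr
  intro w
  simp only [St, phi_single]
  constructor <;> rintro ⟨h1, h2, h3⟩ <;> exact ⟨h1, h2, by omega⟩

theorem T_three (g : Option Bool) (q : List Bool) : T g q [3] 4 = 0 := by
  apply gf_false
  rintro w ⟨_, h1, h2⟩
  rw [phi_single] at h2
  omega

theorem T_four (g : Option Bool) (q : List Bool) : T g q [4] 4 = T g q [1] 1 := by
  apply gf_congr
  intro w
  simp only [St, phi_single]
  constructor <;> rintro ⟨h1, h2, h3⟩ <;> exact ⟨h1, h2, by omega⟩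

theorem cnt_avoid (x : Bool) (n : ℕ) : cnt n (fun w => occ [x] w = 0) = 1 := by
  induction n with
  | zero => simp [cnt, occ_cons_nil]
  | succ n ih =>
    rw [cnt_step x, cnt_false, zero_add]
    · rw [← ih]
      congr 1
      ext w
      simp [occ_cons_cons]
    · intro w
      simp [occ_cons_cons, occ_nil_left]

theorem T_nil (x : Bool) (k : ℕ) : T (some x) [] [k] k = u := by
  ext n
  have : St (some x) [] [k] k = fun w => occ [x] w = 0 := by
    ext w
    simp [St, guard, phi, occ_nil_left]
  simp [T, gf, u, this, cnt_avoid]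

theorem T_nil' (x : Bool) (a k : ℕ) (h : a ≠ k) : T (some x) [] [a] k = 0 := by
  apply gf_false
  rintro w ⟨_, h1, h2⟩
  rw [phi_single, occ_nil_left] at h2
  omega

theorem B_eq_coeff (n : ℕ) (p : List Bool) : (B n p 4 : ℤ) = coeff n (T none p [1] 4) := by
  simp only [T, gf, coeff_mk]
  rw [cnt_eq_card, B]
  have : ∀ w, St none p [1] 4 w ↔ occ p w = 4 := by
    intro w
    simp only [St, guard, phi_single]
    constructor
    · rintro ⟨_, _, h⟩; omega
    · intro h; exact ⟨trivial, by omega, by omega⟩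
  simp only [this]


theorem T_two_two (g : Option Bool) (q : List Bool) : T g q [2] 2 = T g q [1] 1 := by
  apply gf_congr
  intro w
  simp only [St, phi_single]
  constructor <;> rintro ⟨h1, h2, h3⟩ <;> exact ⟨h1, h2, by omega⟩

theorem upd_single (x : Bool) (c a : ℕ) (q : List Bool) (hq : q.head? ≠ some x) :
    upd x c [a] q = [a + c] := by
  cases q with
  | nil => simp [upd]
  | cons y q =>
    have : x ≠ y := fun h => hq (by simp [h])
    simp [upd, this]

theorem A_same (x : Bool) (q : List Bool) (k : ℕ) :
    T (some x) (x :: q) [1] k = u * X * T (some x) q [1] k := by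
  apply loop_eq
  conv_lhs => rw [step_same]
  simp [upd]

theorem A_diff (x g : Bool) (hg : g = !x) (q : List Bool) (k : ℕ) :
    T (some g) (x :: q) [1] k =
      X * (T (some x) q [1] k + T (some g) (x :: q) [1, 1] k) := by
  rw [step_diff x g hg]
  simp [upd]

theorem A_none (x : Bool) (q : List Bool) (k : ℕ) :
    T none (x :: q) [1] k =
      u * X * (T (some x) q [1] k + T none (x :: q) [1, 1] k) := by
  apply loop_eq
  conv_lhs => rw [step_none]
  simp [upd]

theorem D1 (g : Option Bool) (x : Bool) (q : List Bool) : T g (x :: q) [1, 1] 1 = 0 := by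
  simp [T_dead]

theorem D2_one (x g : Bool) (hg : g = !x) (q : List Bool) (hq : q.head? ≠ some x) :
    T (some g) (x :: q) [1, 1] 2 = X * T (some x) q [1] 1 := by
  rw [step_diff x g hg]
  simp [upd, upd_single x _ _ q hq]
  rw [T_dead (some g) (x :: q) [1, 2] 2 (by simp) (by simp), add_zero]
  rw [T_two_two]

theorem D2_two (x g : Bool) (hg : g = !x) (q : List Bool) :
    T (some g) (x :: x :: q) [1, 1] 2 = 0 := by
  rw [step_diff x g hg]
  simp [upd]
  simp [T_dead]

theorem D4_one (x g : Bool) (hg : g = !x) (q : List Bool) (hq : q.head? ≠ some x) :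
    T (some g) (x :: q) [1, 1] 4 =
      X * T (some x) q [1] 2 + X ^ 3 * T (some x) q [1] 1 := by
  rw [step_diff x g hg]
  simp [upd, upd_single x _ _ q hq]
  rw [step_diff x g hg]
  simp [upd, upd_single x _ _ q hq]
  rw [step_diff x g hg]
  simp [upd, upd_single x _ _ q hq]
  simp [T_dead, T_two, T_three, T_four]
  ring

theorem H4 (x g : Bool) (hg : g = !x) (q : List Bool) :
    T (some g) (x :: x :: q) [1, 2, 1] 4 = 0 := by
  rw [step_diff x g hg]
  cases q with
  | nil => simp [upd, T_dead]
  | cons y q => by_cases h : x = y <;> simp [upd, h, T_dead]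

theorem D4_two (x g : Bool) (hg : g = !x) (q : List Bool) :
    T (some g) (x :: x :: q) [1, 1] 4 = X * T (some x) (x :: q) [2, 1] 4 := by
  rw [step_diff x g hg]
  simp [upd, H4 x g hg]

/-- `E31`: weights (3,1) in a same-guard state -/
theorem F4_nil (x : Bool) : T (some x) [x] [3, 1] 4 = u * X * u := by
  apply loop_eq
  conv_lhs => rw [step_same]
  simp [upd, T_nil]

theorem F4_diff (x : Bool) (q : List Bool) :
    T (some x) (x :: (!x) :: q) [3, 1] 4 = X * T (some x) ((!x) :: q) [1] 1 := by
  rw [step_same]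
  simp [upd, T_dead, T_four]

theorem F4_same (x : Bool) (q : List Bool) :
    T (some x) (x :: x :: q) [3, 1] 4 = 0 := by
  rw [← mul_zero (u * X)]
  apply loop_eq
  conv_lhs => rw [step_same]
  simp [upd, T_dead]

theorem E4_nil (x : Bool) : T (some x) [x] [2, 1] 4 = 0 := by
  rw [← mul_zero (u * X)]
  apply loop_eq
  conv_lhs => rw [step_same]
  simp [upd, T_three]

theorem E4_same (x : Bool) (q : List Bool) :
    T (some x) (x :: x :: q) [2, 1] 4 = u * X * T (some x) (x :: q) [3, 1] 4 := by
  apply loop_eq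
  conv_lhs => rw [step_same]
  simp [upd]

theorem E4_diff_nil (x : Bool) : T (some x) [x, !x] [2, 1] 4 = X ^ 3 * u := by
  rw [step_same]
  simp [upd, T_three]
  rw [step_same]
  simp [upd, T_dead]
  rw [step_diff _ _ (by simp)]
  simp [upd, T_dead, T_nil]
  ring

theorem E4_diff_cons (x y : Bool) (q : List Bool) :
    T (some x) (x :: (!x) :: y :: q) [2, 1] 4 = 0 := by
  rw [step_same]
  simp [upd, T_three]
  rw [step_same]
  by_cases h : x = y
  · simp [upd, T_dead, h]
  · have : y = !x := by cases x <;> cases y <;> simp_all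
    subst this
    simp [upd, T_dead]
    rw [step_diff _ _ (by simp)]
    simp [upd, T_dead]

/-- the initial state -/
theorem H4' (x : Bool) (q : List Bool) :
    T none (x :: x :: q) [1, 2, 1] 4 = 0 := by
  have hd : ∀ y q, T none (x :: x :: y :: q) [1, 2, 1] 4 = 0 ∧ T none [x, x] [1, 2, 1] 4 = 0 := by
    intro y q
    constructor
    · by_cases h : x = y
      · subst h
        rw [← mul_zero (u * X)]
        apply loop_eq
        conv_lhs => rw [step_none]
        simp [upd, T_dead]
      · have : y = !x := by cases x <;> cases y <;> simp_all
        subst this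
        rw [step_none]
        simp [upd, T_dead]
    · rw [← mul_zero (u * X)]
      apply loop_eq
      conv_lhs => rw [step_none]
      simp [upd, T_dead]
  cases q with
  | nil => exact (hd x []).2
  | cons y q => exact (hd y q).1

theorem N4_two (x : Bool) (q : List Bool) :
    T none (x :: x :: q) [1, 1] 4 = u * X * T (some x) (x :: q) [2, 1] 4 := by
  apply loop_eq
  conv_lhs => rw [step_none]
  simp [upd, H4']

theorem N4_one (x : Bool) (q : List Bool) :
    T none (x :: (!x) :: q) [1, 1] 4 =
      X * T (some x) ((!x) :: q) [1] 2 + X ^ 3 * T (some x) ((!x) :: q) [1] 1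
      + X * T none (x :: (!x) :: q) [1, 1, 1] 4 := by
  rw [step_none]
  simp [upd]
  rw [step_none x _ [1, 2]]
  simp [upd]
  rw [step_none x _ [1, 3]]
  simp [upd]
  simp [T_dead, T_two, T_three, T_four]
  ring

theorem K4_same (x : Bool) (q : List Bool) :
    T none (x :: (!x) :: (!x) :: q) [1, 1, 1] 4 =
      X ^ 2 * T (some !x) ((!x) :: q) [3, 1] 4 := by
  rw [step_none]
  simp [upd, T_dead]
  rw [step_none]
  simp [upd, T_dead]
  rw [step_diff (!x) x (by simp) _ [2, 1], step_diff (!x) x (by simp) _ [3, 1]]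
  cases q with
  | nil => simp [upd, T_dead]; ring
  | cons y q =>
    by_cases h : y = x
    · subst h
      simp [upd, T_dead]
      ring
    · have : y = !x := by cases x <;> cases y <;> simp_all
      subst this
      simp [upd, T_dead]
      ring

theorem K4_diff_cons (x y : Bool) (q : List Bool) :
    T none (x :: (!x) :: x :: y :: q) [1, 1, 1] 4 = 0 := by
  rw [step_none]
  simp [upd, T_dead]
  rw [step_none]
  simp [upd, T_dead]
  rw [step_diff (!x) x (by simp)]
  by_cases h : y = x
  · subst h
    simp [upd, T_dead]
    rw [step_diff y _ (by simp)]
    simp [upd, T_dead]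
  · have : y = !x := by cases x <;> cases y <;> simp_all
    subst this
    simp [upd, T_dead]

theorem K4_diff_nil (x : Bool) :
    T none [x, !x, x] [1, 1, 1] 4 = X ^ 3 * u := by
  rw [step_none]
  simp [upd, T_dead]
  rw [step_none]
  simp [upd, T_dead]
  rw [step_diff (!x) x (by simp)]
  simp [upd, T_dead]
  rw [step_diff x _ (by simp)]
  simp [upd, T_dead, T_nil]
  ring

theorem K4_nil (x : Bool) :
    T none [x, !x] [1, 1, 1] 4 = 2 * X ^ 3 * u := by
  rw [step_none]
  simp [upd]
  rw [step_none x _ [1, 2, 1], step_none x _ [1, 1, 2]]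
  simp [upd, T_dead]
  rw [step_diff (!x) x (by simp) _ [2, 1], step_diff (!x) x (by simp) _ [3, 1],
    step_diff (!x) x (by simp) _ [2, 2]]
  simp [upd, T_dead, T_nil, T_three]
  ring


/-- the word with run sizes `S` beginning with letter `x` -/
def mkw : Bool → List ℕ → List Bool
  | _, [] => []
  | x, s :: S => List.replicate s x ++ mkw (!x) S

theorem mkw_head (x : Bool) (S : List ℕ) (hS : ∀ s ∈ S, 0 < s) :
    (mkw (!x) S).head? ≠ some x := by
  cases S with
  | nil => simp [mkw]
  | cons s S =>
    obtain ⟨s, rfl⟩ : ∃ t, s = t + 1 := ⟨s - 1, by have := hS s (by simp); omega⟩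
    simp [mkw, List.replicate_succ]

theorem mkw_eq_nil (x : Bool) (S : List ℕ) (hS : ∀ s ∈ S, 0 < s) : mkw x S = [] ↔ S = [] := by
  cases S with
  | nil => simp [mkw]
  | cons s S =>
    have := hS s (by simp)
    simp [mkw]
    omega

theorem mkw_eq_one (x : Bool) (S : List ℕ) (hS : ∀ s ∈ S, 0 < s) : mkw x S = [x] ↔ S = [1] := by
  cases S with
  | nil => simp [mkw]
  | cons s S =>
    obtain ⟨s, rfl⟩ : ∃ t, s = t + 1 := ⟨s - 1, by have := hS s (by simp); omega⟩
    simp [mkw, List.replicate_succ]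
    intro _
    exact mkw_eq_nil _ _ (fun t ht => hS t (by simp [ht]))

theorem A_rep (x : Bool) (s : ℕ) (q : List Bool) (k : ℕ) :
    T (some x) (List.replicate s x ++ q) [1] k = (u * X) ^ s * T (some x) q [1] k := by
  induction s with
  | zero => simp
  | succ s ih =>
    rw [List.replicate_succ, List.cons_append, A_same, ih]
    ring

theorem E_two (x : Bool) (q : List Bool) (hq : q.head? ≠ some x) :
    T (some x) (x :: q) [2, 1] 4 = if q = [!x] then X ^ 3 * u else 0 := by
  rcases q with _ | ⟨y, _ | ⟨z, q⟩⟩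
  · simp [E4_nil]
  · have : y = !x := by cases x <;> cases y <;> simp_all
    subst this
    simp [E4_diff_nil]
  · have : y = !x := by cases x <;> cases y <;> simp_all
    subst this
    simp [E4_diff_cons]

theorem E_three (x : Bool) (q : List Bool) (hq : q.head? ≠ some x) :
    T (some x) (x :: x :: q) [2, 1] 4 =
      u * X * (if q = [] then u * X * u else X * T (some x) q [1] 1) := by
  rw [E4_same]
  rcases q with _ | ⟨y, q⟩
  · simp [F4_nil]
  · have : y = !x := by cases x <;> cases y <;> simp_all
    subst this
    simp [F4_diff]

theorem E_four (x : Bool) (q : List Bool) :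
    T (some x) (x :: x :: x :: q) [2, 1] 4 = 0 := by
  rw [E4_same, F4_same, mul_zero]

/-- weight of the interior words with exactly one occurrence -/
noncomputable def W : List ℕ → ℤ⟦X⟧
  | [] => u
  | s :: S => X * (u * X) ^ (s - 1) * W S

def i3 : List ℕ → ℕ
  | [] => 0
  | s :: S => (if s = 3 ∧ S ≠ [] then 1 else 0) + i3 S

def e3 : List ℕ → ℕ
  | [] => 0
  | s :: S => (if s = 3 ∧ S = [] then 1 else 0) + e3 S

def e21 : List ℕ → ℕ
  | [] => 0
  | s :: S => (if s = 2 ∧ S = [1] then 1 else 0) + e21 S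

noncomputable def Q (c i b f : ℕ) : ℤ⟦X⟧ :=
  (c : ℤ⟦X⟧) * X ^ 3 + (c.choose 2 : ℤ⟦X⟧) * X ^ 2 + (i : ℤ⟦X⟧) * X * (1 - X) + (b : ℤ⟦X⟧) * X
    + (f : ℤ⟦X⟧) * X ^ 2 * (1 - X)

theorem int1 (S : List ℕ) (hS : ∀ s ∈ S, 0 < s) (x : Bool) :
    T (some !x) (mkw x S) [1] 1 = W S := by
  induction S generalizing x with
  | nil => simp [mkw, W, T_nil]
  | cons s S ih =>
    obtain ⟨s, rfl⟩ : ∃ t, s = t + 1 := ⟨s - 1, by have := hS s (by simp); omega⟩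
    have ih' := ih (fun t ht => hS t (by simp [ht])) (!x)
    rw [Bool.not_not] at ih'
    simp only [mkw, W, List.replicate_succ, List.cons_append]
    rw [A_diff x _ rfl, D1, add_zero, A_rep, ih']
    simp [mul_assoc]

theorem int2 (S : List ℕ) (hS : ∀ s ∈ S, 0 < s) (x : Bool) :
    T (some !x) (mkw x S) [1] 2 = W S * X * ((S.count 1 : ℕ) : ℤ⟦X⟧) := by
  induction S generalizing x with
  | nil => simp [mkw, T_nil']
  | cons s S ih =>
    obtain ⟨s, rfl⟩ : ∃ t, s = t + 1 := ⟨s - 1, by have := hS s (by simp); omega⟩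
    have hS' : ∀ t ∈ S, 0 < t := fun t ht => hS t (by simp [ht])
    have ih' := ih hS' (!x)
    have h1 := int1 S hS' (!x)
    rw [Bool.not_not] at ih' h1
    simp only [mkw, W, List.replicate_succ, List.cons_append]
    rw [A_diff x _ rfl, A_rep, ih']
    cases s with
    | zero =>
      simp only [List.replicate_zero, List.nil_append]
      rw [D2_one x _ rfl _ (mkw_head x S hS'), h1]
      simp
      ring
    | succ s =>
      rw [List.replicate_succ, List.cons_append, D2_two x _ rfl]
      simp
      ring

theorem choose_succ_two (c : ℕ) : (c + 1).choose 2 = c.choose 2 + c := by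
  rw [Nat.choose_succ_succ' c 1, Nat.choose_one_right]; ring

theorem int4 (S : List ℕ) (hS : ∀ s ∈ S, 0 < s) (x : Bool) :
    T (some !x) (mkw x S) [1] 4 = W S * Q (S.count 1) (i3 S) (e3 S) (e21 S) := by
  induction S generalizing x with
  | nil => simp [mkw, T_nil', Q, i3, e3, e21]
  | cons s S ih =>
    obtain ⟨s, rfl⟩ : ∃ t, s = t + 1 := ⟨s - 1, by have := hS s (by simp); omega⟩
    have hS' : ∀ t ∈ S, 0 < t := fun t ht => hS t (by simp [ht])
    have ih' := ih hS' (!x)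
    have h1 := int1 S hS' (!x)
    have h2 := int2 S hS' (!x)
    rw [Bool.not_not] at ih' h1 h2
    have hh := mkw_head x S hS'
    have hu := u_mul
    simp only [mkw, W, List.replicate_succ, List.cons_append]
    rw [A_diff x _ rfl, A_rep, ih']
    rcases s with _ | _ | _ | s
    · simp only [List.replicate_zero, List.nil_append]
      rw [D4_one x _ rfl _ hh, h1, h2]
      simp [Q, i3, e3, e21, choose_succ_two]
      ring
    · simp only [List.replicate_succ, List.replicate_zero, List.nil_append, List.cons_append]
      rw [D4_two x _ rfl, E_two x _ hh]
      simp only [mkw_eq_one _ _ hS']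
      by_cases h : S = [1]
      · subst h
        simp [Q, i3, e3, e21, W]
        linear_combination (-u * X ^ 5) * hu
      · simp [Q, i3, e3, e21, h]
        ring
    · simp only [List.replicate_succ, List.replicate_zero, List.nil_append, List.cons_append]
      rw [D4_two x _ rfl, E_three x _ hh, h1]
      simp only [mkw_eq_nil _ _ hS']
      by_cases h : S = []
      · subst h
        simp [Q, i3, e3, e21, W]
        ring
      · simp [Q, i3, e3, e21, h]
        linear_combination (-W S * X ^ 4 * u) * hu
    · simp only [List.replicate_succ, List.cons_append]
      rw [D4_two x _ rfl, E_four]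
      simp [Q, i3, e3, e21]
      ring

theorem main_gf (s : ℕ) (S : List ℕ) (hs : 0 < s) (hS : ∀ s ∈ S, 0 < s)
    (h4 : 4 ≤ s + S.sum) (x : Bool) :
    T none (mkw x (s :: S)) [1] 4 = u * W (s :: S) * Q ((s :: S).count 1) (i3 S)
      (e3 S + if s = 3 then 1 else 0) (e21 S + if s = 1 ∧ S.head? = some 2 then 1 else 0) := by
  obtain ⟨s, rfl⟩ : ∃ t, s = t + 1 := ⟨s - 1, by omega⟩
  have h1 := int1 S hS (!x)
  have h2 := int2 S hS (!x)
  have ih' := int4 S hS (!x)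
  rw [Bool.not_not] at ih' h1 h2
  have hh := mkw_head x S hS
  have hu := u_mul
  simp only [mkw, W, List.replicate_succ, List.cons_append]
  rw [A_none, A_rep, ih']
  rcases s with _ | _ | _ | s
  · simp only [List.replicate_zero, List.nil_append]
    rcases S with _ | ⟨t, S⟩
    · simp at h4
    obtain ⟨t, rfl⟩ : ∃ v, t = v + 1 := ⟨t - 1, by have := hS t (by simp); omega⟩
    have hS' : ∀ t ∈ S, 0 < t := fun t ht => hS t (by simp [ht])
    simp only [mkw, List.replicate_succ, List.cons_append] at h1 h2 ⊢
    rw [N4_one, h1, h2]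
    rcases t with _ | _ | t
    · rcases S with _ | ⟨v, S⟩
      · simp at h4
      obtain ⟨v, rfl⟩ : ∃ z, v = z + 1 := ⟨v - 1, by have := hS v (by simp); omega⟩
      have hne : List.replicate v x ++ mkw (!x) S ≠ [] := by
        intro h
        have h' := (mkw_eq_nil (!x) S (fun t ht => hS t (by simp [ht]))).1 (by
          simp at h; exact h.2)
        simp at h
        simp [h'] at h4
        omega
      obtain ⟨y, q, hyq⟩ := List.exists_cons_of_ne_nil hne
      simp only [mkw, List.replicate_succ, List.cons_append, List.replicate_zero, List.nil_append,
        Bool.not_not]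
      rw [hyq, K4_diff_cons]
      simp [Q, choose_succ_two]
      ring
    · have hne : S ≠ [] := by rintro rfl; simp at h4
      have h3 := int1 S hS' x
      simp only [List.replicate_succ, List.cons_append, List.replicate_zero, List.nil_append,
        Bool.not_not]
      rw [K4_same]
      have hF : T (some !x) ((!x) :: mkw x S) [3, 1] 4 = X * W S := by
        rw [← h3]
        have hn : mkw x S ≠ [] := by rwa [ne_eq, mkw_eq_nil _ _ hS']
        have hd := mkw_head (!x) S hS'
        rw [Bool.not_not] at hd
        obtain ⟨y, q, hyq⟩ := List.exists_cons_of_ne_nil hn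
        rw [hyq] at hd ⊢
        have : y = x := by cases x <;> cases y <;> simp_all
        subst this
        have := F4_diff (!y) q
        rwa [Bool.not_not] at this
      rw [hF]
      simp [Q, choose_succ_two, W]
      linear_combination (-u * X ^ 5 * W S) * hu
    · have hF : ∀ q, T (some !x) ((!x) :: (!x) :: q) [3, 1] 4 = 0 := fun q => F4_same _ _
      simp only [List.replicate_succ, List.cons_append]
      rw [K4_same, hF]
      simp [Q, choose_succ_two]
      ring
  · simp only [List.replicate_succ, List.replicate_zero, List.nil_append, List.cons_append]
    rw [N4_two, E_two x _ hh]
    simp only [mkw_eq_one _ _ hS]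
    rw [if_neg (by rintro rfl; simp at h4)]
    simp [Q]
    ring
  · simp only [List.replicate_succ, List.replicate_zero, List.nil_append, List.cons_append]
    rw [N4_two, E_three x _ hh, h1]
    simp only [mkw_eq_nil _ _ hS]
    rw [if_neg (by rintro rfl; simp at h4)]
    simp [Q]
    ring
  · simp only [List.replicate_succ, List.cons_append]
    rw [N4_two, E_four]
    simp [Q]
    ring


theorem exists_mkw (p : List Bool) (hp : p ≠ []) :
    ∃ x s S, p = mkw x (s :: S) ∧ 0 < s ∧ ∀ t ∈ S, 0 < t := by
  induction p with
  | nil => exact absurd rfl hp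
  | cons c p ih =>
    by_cases h : p = []
    · subst h
      exact ⟨c, 1, [], by simp [mkw], by simp, by simp⟩
    · obtain ⟨x, s, S, h1, h2, h3⟩ := ih h
      by_cases hc : c = x
      · subst hc
        refine ⟨c, s + 1, S, ?_, by omega, h3⟩
        rw [h1]
        simp [mkw, List.replicate_succ]
      · have : x = !c := by cases x <;> cases c <;> simp_all
        subst this
        refine ⟨c, 1, s :: S, ?_, by omega, ?_⟩
        · rw [h1]
          simp [mkw]
        · intro t ht
          rcases List.mem_cons.1 ht with rfl | ht
          · exact h2
          · exact h3 t ht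

theorem runs_mkw (S : List ℕ) (hS : ∀ s ∈ S, 0 < s) (x : Bool) :
    (runs (mkw x S)).map List.length = S := by
  induction S generalizing x with
  | nil => simp [mkw, runs]
  | cons s S ih =>
    have hS' : ∀ t ∈ S, 0 < t := fun t ht => hS t (by simp [ht])
    have hs := hS s (by simp)
    have hh := mkw_head x S hS'
    have ih' := ih hS' (!x)
    unfold runs at ih' ⊢
    rw [mkw, List.splitBy_append, List.map_append, ih', List.splitBy_of_isChain]
    · simp
    · simp; omega
    · apply List.isChain_replicate_of_rel
      simp
    · intro a ha b hb
      have h1 : a = x := by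
        have := List.mem_of_mem_getLast? ha
        exact (List.mem_replicate.1 this).2
      subst h1
      have : a ≠ b := by
        rintro rfl
        exact hh hb
      simpa using this

theorem runs_reverse (p : List Bool) : runs p.reverse = ((runs p).map List.reverse).reverse := by
  unfold runs
  have h := List.splitBy_eq_iff.1 (rfl : p.splitBy (· == ·) = p.splitBy (· == ·))
  obtain ⟨h1, h2, h3, h4⟩ := h
  generalize p.splitBy (· == ·) = L at *
  rw [List.splitBy_eq_iff]
  refine ⟨?_, ?_, ?_, ?_⟩
  · rw [h1, List.reverse_flatten]
  · simpa using h2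
  · intro m hm
    simp only [List.mem_reverse, List.mem_map] at hm
    obtain ⟨a, ha, rfl⟩ := hm
    rw [List.isChain_reverse]
    refine (h3 a ha).imp ?_
    intro x y hxy
    exact beq_iff_eq.2 (beq_iff_eq.1 hxy).symm
  · rw [List.isChain_reverse, List.isChain_map]
    refine h4.imp ?_
    rintro a b ⟨ha, hb, hab⟩
    refine ⟨by simpa using hb, by simpa using ha, ?_⟩
    simp only [List.getLast_reverse, List.head_reverse]
    rw [beq_eq_false_iff_ne] at hab ⊢
    exact fun h => hab h.symm

theorem length_mkw (x : Bool) (S : List ℕ) : (mkw x S).length = S.sum := by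
  induction S generalizing x with
  | nil => simp [mkw]
  | cons s S ih => simp [mkw, ih]

theorem len_le_sum (S : List ℕ) (hS : ∀ s ∈ S, 0 < s) : S.length ≤ S.sum := by
  induction S with
  | nil => simp
  | cons s S ih =>
    have := ih (fun t ht => hS t (by simp [ht]))
    have := hS s (by simp)
    simp
    omega

theorem W_eq (S : List ℕ) (hS : ∀ s ∈ S, 0 < s) :
    W S = X ^ S.sum * u ^ (S.sum - S.length + 1) := by
  induction S with
  | nil => simp [W]
  | cons s S ih =>
    have hS' : ∀ t ∈ S, 0 < t := fun t ht => hS t (by simp [ht])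
    have h1 := len_le_sum S hS'
    obtain ⟨s, rfl⟩ : ∃ t, s = t + 1 := ⟨s - 1, by have := hS s (by simp); omega⟩
    rw [W, ih hS']
    have : ((s + 1) :: S).sum - ((s + 1) :: S).length = s + (S.sum - S.length) := by
      simp; omega
    rw [this]
    simp only [List.sum_cons, Nat.add_sub_cancel]
    ring

theorem coeff_Xu (j m n : ℕ) : coeff n (X ^ j * u ^ (m + 1) : ℤ⟦X⟧) =
    if j ≤ n then ((m + (n - j)).choose m : ℤ) else 0 := by
  rw [PowerSeries.coeff_X_pow_mul', u, mk_one_pow_eq_mk_choose_add]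
  simp

theorem coeff_Xu' (j m n t : ℕ) (hm : 1 ≤ m) (ht : t = n + m - j) :
    coeff n (X ^ j * u ^ (m + 1) : ℤ⟦X⟧) = (t.choose m : ℤ) := by
  rw [coeff_Xu]
  split_ifs with h
  · congr 2; omega
  · rw [Nat.choose_eq_zero_of_lt (by omega)]; rfl

theorem e3_eq (S : List ℕ) : e3 S = if S.getLastD 0 = 3 then 1 else 0 := by
  induction S with
  | nil => simp [e3]
  | cons s S ih =>
    cases S with
    | nil => simp [e3]
    | cons t S => simp [e3] at *; rw [ih]

theorem e21_eq (S : List ℕ) : e21 S = if S.reverse.take 2 = [1, 2] then 1 else 0 := by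
  induction S with
  | nil => simp [e21]
  | cons s S ih =>
    rw [e21, ih]
    rcases S with _ | ⟨t, _ | ⟨v, S⟩⟩
    · simp
    · simp; grind
    · have h1 : ((s :: t :: v :: S).reverse.take 2) = ((t :: v :: S).reverse.take 2) := by
        rw [List.reverse_cons, List.take_append_of_le_length (by simp)]
      rw [h1]
      simp

theorem count3_eq (S : List ℕ) : S.count 3 = i3 S + e3 S := by
  induction S with
  | nil => simp [i3, e3]
  | cons s S ih =>
    rw [List.count_cons, ih, i3, e3]
    by_cases h : s = 3 <;> by_cases h' : S = [] <;> simp [h, h'] <;> omega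

theorem sum_ge_of_mem3 (S : List ℕ) (hS : ∀ s ∈ S, 0 < s) (h : 0 < i3 S) :
    S.length + 2 ≤ S.sum := by
  induction S with
  | nil => simp [i3] at h
  | cons s S ih =>
    have hS' : ∀ t ∈ S, 0 < t := fun t ht => hS t (by simp [ht])
    have h1 := len_le_sum S hS'
    have := hS s (by simp)
    rw [i3] at h
    simp only [List.length_cons, List.sum_cons]
    by_cases h3 : s = 3
    · omega
    · have := ih hS' (by simpa [h3] using h)
      omega

theorem sum_ge_of_e21 (S : List ℕ) (hS : ∀ s ∈ S, 0 < s) (h : 0 < e21 S) :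
    S.length + 1 ≤ S.sum := by
  induction S with
  | nil => simp [e21] at h
  | cons s S ih =>
    have hS' : ∀ t ∈ S, 0 < t := fun t ht => hS t (by simp [ht])
    have h1 := len_le_sum S hS'
    have := hS s (by simp)
    rw [e21] at h
    simp only [List.length_cons, List.sum_cons]
    by_cases h3 : s = 2
    · omega
    · have := ih hS' (by simpa [h3] using h)
      omega

theorem big_case (s : ℕ) (S : List ℕ) (hs : 0 < s) (hS : ∀ s ∈ S, 0 < s)
    (h4 : 4 ≤ s + S.sum) (x : Bool) (n l r : ℕ) (hl : l = s + S.sum) (hr : r = S.length + 1)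
    (c b f : ℕ) (hc : c = (s :: S).count 1) (hb : b = e3 S + if s = 3 then 1 else 0)
    (hf : f = e21 S + if s = 1 ∧ S.head? = some 2 then 1 else 0) :
    B n (mkw x (s :: S)) 4 = c * (n - r - 2).choose (l + 1 - r)
        + c.choose 2 * (n - r - 1).choose (l + 1 - r)
        + i3 S * (n - r - 1).choose (l - r)
        + b * (n - r).choose (l + 1 - r)
        + f * (n - r - 2).choose (l - r) := by
  have hS1 : ∀ t ∈ s :: S, 0 < t := by
    intro t ht
    rcases List.mem_cons.1 ht with rfl | ht
    · exact hs
    · exact hS t ht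
  have hlen := len_le_sum S hS
  obtain ⟨m, hm⟩ : ∃ m, l = r + m := ⟨l - r, by omega⟩
  zify
  rw [B_eq_coeff, main_gf s S hs hS h4, ← hc, ← hb, ← hf, W_eq _ hS1]
  have e1 : (s :: S).sum = l := by simp [hl]
  have e2 : (s :: S).sum - (s :: S).length = m := by simp; omega
  rw [e2, e1]
  have key : u * (X ^ l * u ^ (m + 1)) * Q c (i3 S) b f =
      C (c : ℤ) * (X ^ (l + 3) * u ^ (m + 1 + 1)) + C (c.choose 2 : ℤ) * (X ^ (l + 2) * u ^ (m + 1 + 1))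
      + C (i3 S : ℤ) * (X ^ (l + 1) * u ^ (m + 1)) + C (b : ℤ) * (X ^ (l + 1) * u ^ (m + 1 + 1))
      + C (f : ℤ) * (X ^ (l + 2) * u ^ (m + 1)) := by
    have hu := u_mul
    simp only [Q, map_natCast]
    linear_combination ((i3 S : ℤ⟦X⟧) * X ^ (l + 1) * u ^ (m + 1) +
      (f : ℤ⟦X⟧) * X ^ (l + 2) * u ^ (m + 1)) * hu
  rw [key]
  simp only [map_add, PowerSeries.coeff_C_mul]
  have a1 : l + 1 - r = m + 1 := by omega
  have a2 : l - r = m := by omega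
  rw [a1, a2]
  rw [coeff_Xu' (l + 3) (m + 1) n (n - r - 2) (by omega) (by omega),
    coeff_Xu' (l + 2) (m + 1) n (n - r - 1) (by omega) (by omega),
    coeff_Xu' (l + 1) (m + 1) n (n - r) (by omega) (by omega)]
  congr 1
  · congr 2
    by_cases h0 : i3 S = 0
    · simp [h0]
    · have := sum_ge_of_mem3 S hS (by omega)
      rw [coeff_Xu' (l + 1) m n (n - r - 1) (by omega) (by omega)]
  · by_cases h0 : f = 0
    · simp [h0]
    · have : 1 ≤ m := by
        by_cases h1 : e21 S = 0
        · rw [h1] at hf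
          have h2 : s = 1 ∧ S.head? = some 2 := by
            by_contra h; rw [if_neg h] at hf; omega
          rcases S with _ | ⟨t, S⟩
          · simp at h2
          · have h3 : t = 2 := by simpa using h2.2
            have := len_le_sum S (fun t ht => hS t (by simp [ht]))
            simp at hl hr
            omega
        · have := sum_ge_of_e21 S hS (by omega)
          omega
      rw [coeff_Xu' (l + 2) m n (n - r - 2) (by omega) (by omega)]

theorem gf_1 (x : Bool) : T none [x] [1] 4 = X ^ 4 * u ^ 5 := by
  have hx : T none [x] [1, 3] 4 = u * X * u := by
    apply loop_eq
    conv_lhs => rw [step_none]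
    simp [upd, T_dead, T_nil]
  have hx2 : T none [x] [1, 2] 4 = u * X * (u * X * u) := by
    apply loop_eq
    conv_lhs => rw [step_none]
    simp [upd, T_three, hx]
  have hx3 : T none [x] [1, 1] 4 = u * X * (u * X * (u * X * u)) := by
    apply loop_eq
    conv_lhs => rw [step_none]
    simp [upd, T_two, T_nil', hx2]
  rw [A_none, hx3]
  simp [T_nil']
  ring

theorem gf_2 (x : Bool) : T none [x, x] [1] 4 = 0 := by
  rw [A_none, N4_two, E4_nil, A_same, T_nil' _ _ _ (by decide)]
  ring

theorem gf_3 (x : Bool) : T none [x, x, x] [1] 4 = X ^ 4 * u ^ 5 := by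
  rw [A_none, N4_two, E4_same, F4_nil, A_same, A_same, T_nil' _ _ _ (by decide)]
  ring

theorem gf_11 (x : Bool) : T none [x, !x] [1] 4 = 4 * (X ^ 5 * u ^ 2) + X ^ 4 * u ^ 2 := by
  have h1 := int1 [1] (by simp) (!x)
  have h2 := int2 [1] (by simp) (!x)
  have h4 := int4 [1] (by simp) (!x)
  simp [mkw, W, Q, i3, e3, e21] at h1 h2 h4
  rw [A_none, N4_one, K4_nil, h1, h2, h4]
  ring

theorem gf_111 (x : Bool) :
    T none [x, !x, x] [1] 4 = 3 * (X ^ 6 * u ^ 2) + 4 * (X ^ 5 * u ^ 2) := by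
  have h1 := int1 [1, 1] (by simp) (!x)
  have h2 := int2 [1, 1] (by simp) (!x)
  have h4 := int4 [1, 1] (by simp) (!x)
  simp [mkw, W, Q, i3, e3, e21] at h1 h2 h4
  rw [A_none, N4_one, K4_diff_nil, h1, h2, h4]
  ring

theorem gf_12 (x : Bool) :
    T none [x, !x, !x] [1] 4 = X ^ 6 * u ^ 3 + X ^ 5 * u ^ 3 := by
  have h1 := int1 [2] (by simp) (!x)
  have h2 := int2 [2] (by simp) (!x)
  have h4 := int4 [2] (by simp) (!x)
  simp [mkw, W, Q, i3, e3, e21, List.replicate] at h1 h2 h4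
  rw [A_none, N4_one, K4_same, F4_nil, h1, h2, h4]
  ring

theorem gf_21 (x : Bool) :
    T none [x, x, !x] [1] 4 = X ^ 6 * u ^ 3 + X ^ 5 * u ^ 3 := by
  have h4 := int4 [1] (by simp) (!x)
  simp [mkw, W, Q, i3, e3, e21] at h4
  rw [A_none, N4_two, E4_diff_nil, A_same, h4]
  ring

theorem choose_sq (n : ℕ) (hn : 5 ≤ n) :
    ((2 + (n - 6)).choose 2 : ℤ) = if 6 ≤ n then ((2 + (n - 6)).choose 2 : ℤ) else 1 := by
  split_ifs with h
  · rfl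
  · have : n = 5 := by omega
    subst this
    simp

theorem small_sq (n : ℕ) (hn : 5 ≤ n) (p : List Bool)
    (h : T none p [1] 4 = X ^ 6 * u ^ 3 + X ^ 5 * u ^ 3) : B n p 4 = (n - 4) ^ 2 := by
  zify
  rw [B_eq_coeff, h, map_add, coeff_Xu' 6 2 n (n - 4) (by omega) (by omega),
    coeff_Xu' 5 2 n (n - 3) (by omega) (by omega)]
  obtain ⟨k, rfl⟩ : ∃ k, n = k + 4 := ⟨n - 4, by omega⟩
  have e : k + 4 - 3 = k + 1 := by omega
  have e' : k + 4 - 4 = k := by omega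
  rw [e, e', choose_succ_two]
  have h2 := Nat.triangle_succ k
  have h3 : 2 * k.choose 2 + k = k ^ 2 := by
    clear * -
    induction k with
    | zero => simp
    | succ k ih => rw [choose_succ_two]; nlinarith
  zify at h3
  rw [← h3]
  push_cast
  ring

theorem B_main (p : List Bool) (l r r₁ r₃ r3b rb : ℕ) (hl : p.length = l)
    (hr : numRuns p = r) (hr₁ : numRunsOfSize p 1 = r₁) (hr₃ : numRunsOfSize p 3 = r₃)
    (hr3b : numBoundaryRunsOfSize p 3 = r3b) (hrb : r12b p = rb)
    (n : ℕ) (hn : 5 ≤ n) :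
    (4 ≤ l → B n p 4 = r₁ * (n - r - 2).choose (l + 1 - r)
        + r₁.choose 2 * (n - r - 1).choose (l + 1 - r)
        + (r₃ - r3b) * (n - r - 1).choose (l - r)
        + r3b * (n - r).choose (l + 1 - r)
        + rb * (n - r - 2).choose (l - r)) ∧
    (l < 4 →
      (l = 2 ∧ r = 1 → B n p 4 = 0) ∧
      ((l = 1 ∨ l = 3) ∧ r = 1 → B n p 4 = n.choose 4) ∧
      (l = 3 ∧ r = 2 → B n p 4 = (n - 4) ^ 2) ∧
      (l = 2 ∧ r = 2 → B n p 4 = 5 * n - 19) ∧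
      (l = 3 ∧ r = 3 → B n p 4 = 7 * n - 31)) := by
  by_cases hp : p = []
  · subst hp
    simp at hl
    subst hl
    simp
  obtain ⟨x, s, S, rfl, hs, hS⟩ := exists_mkw p hp
  have hS1 : ∀ t ∈ s :: S, 0 < t := by
    intro t ht
    rcases List.mem_cons.1 ht with rfl | ht
    · exact hs
    · exact hS t ht
  have hruns := runs_mkw (s :: S) hS1 x
  have hrev : (runs (mkw x (s :: S)).reverse).map List.length = (s :: S).reverse := by
    rw [runs_reverse, List.map_reverse, List.map_map]
    have hcomp : (List.length ∘ List.reverse : List Bool → ℕ) = List.length := by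
      ext a
      simp
    rw [hcomp, hruns]
  have hnum : numRuns (mkw x (s :: S)) = S.length + 1 := by
    have := congrArg List.length hruns
    simpa [numRuns] using this
  rw [length_mkw, List.sum_cons] at hl
  rw [hnum] at hr
  rw [numRunsOfSize, hruns] at hr₁ hr₃
  rw [numBoundaryRunsOfSize, hruns, hnum] at hr3b
  rw [r12b, hruns, hrev] at hrb
  constructor
  · intro h4
    have hb : r3b = e3 S + if s = 3 then 1 else 0 := by
      rw [← hr3b, e3_eq]
      cases S with
      | nil => simp
      | cons t S => simp [add_comm]
    have hi : r₃ - r3b = i3 S := by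
      rw [← hr₃, hb, List.count_cons, count3_eq]
      by_cases h : s = 3 <;> simp [h] <;> omega
    rw [hi]
    apply big_case s S hs hS (by omega) x n l r hl.symm hr.symm r₁ r3b rb hr₁.symm hb
    rw [← hrb, ← e21_eq, e21]
    rw [if_neg (c := s = 2 ∧ S = [1])]
    · rw [zero_add, add_comm]
      congr 1
      cases S with
      | nil => simp
      | cons t S => simp
    · rintro ⟨rfl, rfl⟩
      simp at hl
      omega
  · intro hl4
    have hlen := len_le_sum S hS
    have key1 : ∀ m, S.length = 1 → S.sum = m → S = [m] := by
      intro m h1 h2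
      obtain ⟨a, rfl⟩ := List.length_eq_one_iff.1 h1
      simpa using h2
    refine ⟨?_, ?_, ?_, ?_, ?_⟩
    · rintro ⟨h1, h2⟩
      have : S = [] := List.length_eq_zero_iff.1 (by omega)
      subst this
      have : s = 2 := by simp at hl; omega
      subst this
      zify
      rw [B_eq_coeff]
      simp only [mkw, List.replicate, List.nil_append, List.cons_append]
      rw [gf_2]
      simp
    · rintro ⟨h1, h2⟩
      have : S = [] := List.length_eq_zero_iff.1 (by omega)
      subst this
      zify
      rw [B_eq_coeff]
      have hT : T none (mkw x [s]) [1] 4 = X ^ 4 * u ^ 5 := by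
        have : s = 1 ∨ s = 3 := by simp at hl; omega
        rcases this with rfl | rfl
        · simp only [mkw, List.replicate, List.nil_append, List.cons_append]
          exact gf_1 x
        · simp only [mkw, List.replicate, List.nil_append, List.cons_append]
          exact gf_3 x
      rw [hT, coeff_Xu' 4 4 n n (by omega) (by omega)]
    · rintro ⟨h1, h2⟩
      have h5 : S.length = 1 := by omega
      apply small_sq n hn
      by_cases h6 : s = 1
      · have := key1 2 h5 (by omega)
        subst this h6
        simp only [mkw, List.replicate, List.nil_append, List.cons_append]
        exact gf_12 x
      · have := key1 1 h5 (by omega)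
        subst this
        have : s = 2 := by simp at hl; omega
        subst this
        simp only [mkw, List.replicate, List.nil_append, List.cons_append]
        exact gf_21 x
    · rintro ⟨h1, h2⟩
      have h5 : S.length = 1 := by omega
      have := key1 1 h5 (by omega)
      subst this
      have : s = 1 := by simp at hl; omega
      subst this
      zify [show 19 ≤ 5 * n by omega]
      rw [B_eq_coeff]
      simp only [mkw, List.replicate, List.nil_append, List.cons_append]
      rw [gf_11, map_add, show (4 : ℤ⟦X⟧) = C (4 : ℤ) by simp, PowerSeries.coeff_C_mul,
        coeff_Xu' 5 1 n (n - 4) (by omega) (by omega), coeff_Xu' 4 1 n (n - 3) (by omega) (by omega)]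
      simp only [Nat.choose_one_right]
      omega
    · rintro ⟨h1, h2⟩
      obtain ⟨a, b, rfl⟩ := List.length_eq_two.1 (show S.length = 2 by omega)
      have ha := hS a (by simp)
      have hb := hS b (by simp)
      simp at hl
      obtain ⟨rfl, rfl, rfl⟩ : s = 1 ∧ a = 1 ∧ b = 1 := by omega
      zify [show 31 ≤ 7 * n by omega]
      rw [B_eq_coeff]
      simp only [mkw, List.replicate, List.nil_append, List.cons_append, Bool.not_not]
      rw [gf_111, map_add, show (4 : ℤ⟦X⟧) = C (4 : ℤ) by simp,
        show (3 : ℤ⟦X⟧) = C (3 : ℤ) by simp, PowerSeries.coeff_C_mul, PowerSeries.coeff_C_mul,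
        coeff_Xu' 5 1 n (n - 4) (by omega) (by omega), coeff_Xu' 6 1 n (n - 5) (by omega) (by omega)]
      simp only [Nat.choose_one_right]
      omega

end BFour

theorem B_four_eq (p : List Bool) (l r r₁ r₃ r3b rb : ℕ) (hl : p.length = l)
    (hr : numRuns p = r) (hr₁ : numRunsOfSize p 1 = r₁) (hr₃ : numRunsOfSize p 3 = r₃)
    (hr3b : numBoundaryRunsOfSize p 3 = r3b) (hrb : r12b p = rb)
    (n : ℕ) (hn : 5 ≤ n) :
    (4 ≤ l → B n p 4 = r₁ * (n - r - 2).choose (l + 1 - r)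
        + r₁.choose 2 * (n - r - 1).choose (l + 1 - r)
        + (r₃ - r3b) * (n - r - 1).choose (l - r)
        + r3b * (n - r).choose (l + 1 - r)
        + rb * (n - r - 2).choose (l - r)) ∧
    (l < 4 →
      (l = 2 ∧ r = 1 → B n p 4 = 0) ∧
      ((l = 1 ∨ l = 3) ∧ r = 1 → B n p 4 = n.choose 4) ∧
      (l = 3 ∧ r = 2 → B n p 4 = (n - 4) ^ 2) ∧
      (l = 2 ∧ r = 2 → B n p 4 = 5 * n - 19) ∧
      (l = 3 ∧ r = 3 → B n p 4 = 7 * n - 31)) := by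
  exact BFour.B_main p l r r₁ r₃ r3b rb hl hr hr₁ hr₃ hr3b hrb n hn
end

section
/- Let p be a binary word of length l with at most 3 runs. If p is alternating (all runs of size 1), then p does not have an internal zero at any n ≥ 7. If p is not alternating, then for every n ≥ l + 3, B_{n,p}(M_{n,p} − 1) = 0; in particular, p has an internal zero at every n ≥ l + 3. -/
namespace ThreeRuns

open List

lemma occ_nil (w : List Bool) : occ [] w = 1 := by
  unfold occ
  rw [(List.sublists_perm_sublists' w).count_eq]
  induction w with
  | nil => simp
  | cons c w ih =>
    rw [List.sublists'_cons, List.count_append, ih]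
    simp [List.count_eq_zero]

lemma occ_cons_nil (x : Bool) (p : List Bool) : occ (x :: p) [] = 0 := by
  unfold occ; simp

lemma occ_cons_same (x : Bool) (p w : List Bool) :
    occ (x :: p) (x :: w) = occ (x :: p) w + occ p w := by
  unfold occ
  rw [(List.sublists_perm_sublists' _).count_eq, (List.sublists_perm_sublists' w).count_eq,
    (List.sublists_perm_sublists' w).count_eq, List.sublists'_cons, List.count_append]
  congr 1
  exact List.count_map_of_injective _ _ (List.cons_injective) _

lemma occ_cons_ne {x c : Bool} (h : x ≠ c) (p w : List Bool) :
    occ (x :: p) (c :: w) = occ (x :: p) w := by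
  unfold occ
  rw [(List.sublists_perm_sublists' _).count_eq, (List.sublists_perm_sublists' w).count_eq,
    List.sublists'_cons, List.count_append]
  have : count (x :: p) (map (cons c) w.sublists') = 0 := by
    rw [List.count_eq_zero]
    intro hm
    rw [List.mem_map] at hm
    obtain ⟨q, _, hq⟩ := hm
    exact h (List.cons.inj hq).1.symm
  omega

lemma occ_replicate (a : Bool) (t : ℕ) (w : List Bool) :
    occ (replicate t a) w = (count a w).choose t := by
  induction w generalizing t with
  | nil =>
    cases t with
    | zero => simp [occ_nil]
    | succ t => rw [replicate_succ, occ_cons_nil]; simp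
  | cons c w ih =>
    cases t with
    | zero => simp [occ_nil]
    | succ t =>
      by_cases h : c = a
      · subst h
        rw [replicate_succ, occ_cons_same, ← replicate_succ, ih, ih, count_cons_self,
          Nat.choose_succ_succ']
        omega
      · rw [replicate_succ, occ_cons_ne (Ne.symm h), ← replicate_succ, ih, count_cons_of_ne h]

/-- occurrences of `b^s a^t` -/
def ee (a : Bool) (s t : ℕ) (w : List Bool) : ℕ := occ (replicate s (!a) ++ replicate t a) w

/-- occurrences of `a^r b^s a^t` in `a^k w` -/
def vv (a : Bool) (r s t k : ℕ) (w : List Bool) : ℕ :=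
  occ (replicate r a ++ (replicate s (!a) ++ replicate t a)) (replicate k a ++ w)

lemma ee_zero (a : Bool) (t : ℕ) (w : List Bool) : ee a 0 t w = (count a w).choose t := by
  simp [ee, occ_replicate]

lemma ee_nil (a : Bool) (s t : ℕ) : ee a (s+1) t [] = 0 := by
  simp [ee, replicate_succ, occ_cons_nil]

lemma ee_same (a : Bool) (s t : ℕ) (w : List Bool) : ee a (s+1) t (a :: w) = ee a (s+1) t w := by
  unfold ee
  rw [replicate_succ, cons_append, occ_cons_ne (by simp)]

lemma ee_ne (a : Bool) (s t : ℕ) (w : List Bool) :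
    ee a (s+1) t ((!a) :: w) = ee a (s+1) t w + ee a s t w := by
  unfold ee
  rw [replicate_succ, cons_append, occ_cons_same]

lemma vv_same (a : Bool) (r s t k : ℕ) (w : List Bool) :
    vv a r s t k (a :: w) = vv a r s t (k+1) w := by
  unfold vv
  congr 1
  rw [replicate_succ', append_assoc]; rfl

lemma vv_ne (a : Bool) (r s t k : ℕ) (w : List Bool) :
    vv a r (s+1) t k ((!a) :: w) = vv a r (s+1) t k w + k.choose r * ee a s t w := by
  induction k generalizing r with
  | zero =>
    cases r with
    | zero =>
      have := ee_ne a s t w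
      simpa [vv, ee] using this
    | succ r =>
      simp only [vv, replicate_zero, nil_append, replicate_succ, cons_append]
      rw [occ_cons_ne (by simp)]
      simp
  | succ k ih =>
    cases r with
    | zero =>
      have h := ih 0
      simp only [vv, replicate_zero, nil_append, replicate_succ, cons_append] at h ⊢
      rw [occ_cons_ne (by simp), occ_cons_ne (by simp), h]
      simp
    | succ r =>
      have h := ih r
      have h' := ih (r+1)
      simp only [vv, replicate_succ, cons_append] at h h' ⊢
      rw [occ_cons_same, occ_cons_same, h, h', Nat.choose_succ_succ']
      ring

lemma vv_nil (a : Bool) (r s t k : ℕ) : vv a r (s+1) t k [] = 0 := by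
  induction k generalizing r with
  | zero => cases r <;> simp [vv, replicate_succ, occ_cons_nil]
  | succ k ih =>
    cases r with
    | zero =>
      have h := ih 0
      simp only [vv, replicate_zero, nil_append, replicate_succ, cons_append] at h ⊢
      rw [occ_cons_ne (by simp), h]
    | succ r =>
      have h := ih r
      have h' := ih (r+1)
      simp only [vv, replicate_succ, cons_append] at h h' ⊢
      rw [occ_cons_same, h, h']

lemma bool_cases (a c : Bool) : c = a ∨ c = !a := by cases a <;> cases c <;> simp

lemma count_len (a : Bool) (w : List Bool) : count a w + count (!a) w = w.length := by
  induction w with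
  | nil => simp
  | cons c w ih =>
    rcases bool_cases a c with h | h <;> subst h <;> simp <;> omega

lemma ee_le (a : Bool) (s t : ℕ) (w : List Bool) :
    ee a s t w ≤ (count (!a) w).choose s * (count a w).choose t := by
  induction w generalizing s with
  | nil =>
    cases s with
    | zero => simp [ee_zero]
    | succ s => simp [ee_nil]
  | cons c w ih =>
    cases s with
    | zero => simp [ee_zero]
    | succ s =>
      rcases bool_cases a c with h | h <;> subst h
      · rw [ee_same]
        refine (ih _).trans ?_
        simp only [count_cons_self]
        rw [count_cons_of_ne (by simp)]
        exact Nat.mul_le_mul_left _ (Nat.choose_le_choose _ (by omega))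
      · rw [ee_ne]
        have h1 := ih s
        have h2 := ih (s+1)
        rw [count_cons_self, count_cons_of_ne (by simp), Nat.choose_succ_succ']
        nlinarith

lemma vv_le (a : Bool) (r s t G : ℕ) (w : List Bool) (k : ℕ)
    (hG : ∀ x u, x + u = k + count a w → x.choose r * u.choose t ≤ G) :
    vv a r (s+1) t k w ≤ G * (count (!a) w).choose (s+1) := by
  induction w generalizing k with
  | nil => simp [vv_nil]
  | cons c w ih =>
    rcases bool_cases a c with h | h <;> subst h
    · rw [vv_same, count_cons_of_ne (by simp)]
      apply ih
      intro x u h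
      apply hG
      simp; omega
    · rw [count_cons_of_ne (by simp)] at hG
      rw [vv_ne, count_cons_self, Nat.choose_succ_succ', mul_add, add_comm]
      apply add_le_add _ (ih k hG)
      calc k.choose r * ee a s t w ≤ k.choose r * ((count (!a) w).choose s * (count a w).choose t) :=
            Nat.mul_le_mul_left _ (ee_le _ _ _ _)
        _ = (k.choose r * (count a w).choose t) * (count (!a) w).choose s := by ring
        _ ≤ _ := Nat.mul_le_mul_right _ (hG _ _ rfl)

/-- equality structure for `ee` -/
lemma choose_lt {m t : ℕ} (ht : 1 ≤ t) (h : 0 < (m+1).choose t) : m.choose t < (m+1).choose t := by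
  obtain ⟨t, rfl⟩ := Nat.exists_eq_add_of_le' ht
  rw [Nat.choose_succ_succ'] at *
  have : t ≤ m := by
    by_contra hc
    rw [Nat.choose_eq_zero_of_lt (by omega), Nat.choose_eq_zero_of_lt (by omega)] at h
    omega
  have := Nat.choose_pos this
  omega

lemma all_a (a : Bool) (w : List Bool) (h : count (!a) w = 0) : w = replicate (count a w) a := by
  induction w with
  | nil => simp
  | cons c w ih =>
    rcases bool_cases a c with h' | h' <;> subst h'
    · rw [count_cons_of_ne (by simp)] at h
      rw [count_cons_self, replicate_succ, ← ih h]
    · simp at h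

lemma ee_eq (a : Bool) (s t : ℕ) (ht : 1 ≤ t) (w : List Bool)
    (hm : s + 1 ≤ count (!a) w) (hp : 0 < (count a w).choose t)
    (h : (count (!a) w).choose (s+1) * (count a w).choose t ≤ ee a (s+1) t w) :
    ∃ i j, w = replicate i (!a) ++ replicate j a := by
  induction w generalizing s with
  | nil => simp at hm
  | cons c w ih =>
    rcases bool_cases a c with h' | h' <;> subst h'
    · exfalso
      rw [count_cons_of_ne (by simp)] at h hm
      rw [count_cons_self] at h hp
      rw [ee_same] at h
      have h1 := ee_le c (s+1) t w
      have h2 := choose_lt ht hp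
      have h3 := Nat.choose_pos hm
      have := Nat.mul_lt_mul_of_pos_left h2 h3
      omega
    · rw [count_cons_self] at h hm
      rw [count_cons_of_ne (by simp)] at h hp
      rw [ee_ne, Nat.choose_succ_succ', add_mul] at h
      have h1 := ee_le a (s+1) t w
      have h2 := ee_le a s t w
      have key : ∃ i j, w = replicate i (!a) ++ replicate j a := by
        by_cases hc : s + 1 ≤ count (!a) w
        · exact ih s hc hp (by omega)
        · cases s with
          | zero =>
            exact ⟨0, _, by simpa using all_a a w (by omega)⟩
          | succ s =>
            exact ih s (by omega) hp (by omega)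
      obtain ⟨i, j, rfl⟩ := key
      exact ⟨i+1, j, by rw [replicate_succ, cons_append]⟩

lemma ee_block (a : Bool) (s t i j : ℕ) :
    ee a s t (replicate i (!a) ++ replicate j a) = i.choose s * j.choose t := by
  induction i generalizing s with
  | zero =>
    cases s with
    | zero => simp [ee_zero]
    | succ s =>
      simp only [replicate_zero, nil_append, Nat.choose_zero_succ, zero_mul]
      induction j with
      | zero => simp [ee_nil]
      | succ j ih => rw [replicate_succ, ee_same, ih]
  | succ i ih =>
    cases s with
    | zero => simp [ee_zero, count_replicate]
    | succ s =>
      rw [replicate_succ, cons_append, ee_ne, ih, ih, Nat.choose_succ_succ']; ring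

lemma vv_as (a : Bool) (r s t k j : ℕ) : vv a r (s+1) t k (replicate j a) = 0 := by
  induction j generalizing k with
  | zero => simp [vv_nil]
  | succ j ih => rw [replicate_succ, vv_same, ih]

lemma vv_block (a : Bool) (r s t k i j : ℕ) :
    vv a r (s+1) t k (replicate i (!a) ++ replicate j a) =
      k.choose r * i.choose (s+1) * j.choose t := by
  induction i with
  | zero => simp [vv_as]
  | succ i ih =>
    rw [replicate_succ, cons_append, vv_ne, ih, ee_block, Nat.choose_succ_succ']; ring

lemma vv_block' (a : Bool) (r s t k l i j : ℕ) :
    vv a r (s+1) t k (replicate l a ++ (replicate i (!a) ++ replicate j a)) =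
      (k+l).choose r * i.choose (s+1) * j.choose t := by
  induction l generalizing k with
  | zero => simp [vv_block]
  | succ l ih =>
    rw [replicate_succ, cons_append, vv_same, ih]; congr 3; omega

/-- positive optimum of the two outer factors -/
lemma g_eq_struct (a : Bool) (r s t G k : ℕ) (hr : 1 ≤ r) (hGp : 0 < G) (w : List Bool)
    (hG : ∀ x u, x + u = k + count a w → x.choose r * u.choose t ≤ G)
    (hm : s + 1 ≤ count (!a) w)
    (h : G * (count (!a) w).choose (s+1) ≤ k.choose r * ee a (s+1) t w) :
    (∃ i j, w = replicate i (!a) ++ replicate j a) ∧ k.choose r * (count a w).choose t = G := by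
  have h1 := ee_le a (s+1) t w
  have h2 := hG k (count a w) rfl
  have h3 := Nat.choose_pos hm
  have h4 : k.choose r * ee a (s+1) t w ≤
      (k.choose r * (count a w).choose t) * (count (!a) w).choose (s+1) := by
    calc _ ≤ k.choose r * ((count (!a) w).choose (s+1) * (count a w).choose t) :=
          Nat.mul_le_mul_left _ h1
      _ = _ := by ring
  have h5 : G ≤ k.choose r * (count a w).choose t :=
    Nat.le_of_mul_le_mul_right (h.trans h4) h3
  have h6 : k.choose r * (count a w).choose t = G := le_antisymm h2 h5
  refine ⟨?_, h6⟩
  have hk : 0 < k.choose r := by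
    rcases Nat.eq_zero_or_pos (k.choose r) with h0 | h0
    · rw [h0] at h6; omega
    · exact h0
  have hu : 0 < (count a w).choose t := by
    rcases Nat.eq_zero_or_pos ((count a w).choose t) with h0 | h0
    · rw [h0] at h6; omega
    · exact h0
  rcases Nat.eq_zero_or_pos t with h0 | h0
  · subst h0
    have h7 := hG (k + count a w) 0 rfl
    simp only [Nat.choose_zero_right, mul_one] at h7 h6
    have hc : count a w = 0 := by
      by_contra hc
      obtain ⟨c, hc'⟩ := Nat.exists_eq_succ_of_ne_zero hc
      have h8 : (k+1).choose r ≤ (k + count a w).choose r := Nat.choose_le_choose _ (by omega)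
      have h9 : (k).choose r ≤ (k+1).choose r := Nat.choose_le_choose _ (by omega)
      have := choose_lt (m := k) hr (by omega)
      omega
    exact ⟨count (!a) w, 0, by simpa using all_a (!a) w (by simpa using hc)⟩
  · apply ee_eq a s t h0 w hm hu
    apply Nat.le_of_mul_le_mul_left _ hk
    calc _ = G * (count (!a) w).choose (s+1) := by rw [← h6]; ring
      _ ≤ _ := h

lemma vv_eq (a : Bool) (r s t G k : ℕ) (hr : 1 ≤ r) (hGp : 0 < G) (w : List Bool)
    (hG : ∀ x u, x + u = k + count a w → x.choose r * u.choose t ≤ G)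
    (hm : s + 2 ≤ count (!a) w)
    (h : G * (count (!a) w).choose (s+2) ≤ vv a r (s+2) t k w) :
    ∃ l i j, w = replicate l a ++ (replicate i (!a) ++ replicate j a) := by
  induction w generalizing k with
  | nil => simp at hm
  | cons c w ih =>
    rcases bool_cases a c with h' | h' <;> subst h'
    · rw [count_cons_of_ne (by simp)] at h hm
      rw [vv_same] at h
      obtain ⟨l, i, j, rfl⟩ := ih (k+1) (by intro x u hx; apply hG; simp at hx ⊢; omega) hm h
      exact ⟨l+1, i, j, by rw [replicate_succ, cons_append]⟩
    · rw [count_cons_self] at h hm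
      rw [count_cons_of_ne (by simp)] at hG
      rw [vv_ne, Nat.choose_succ_succ', mul_add] at h
      have h1 := vv_le a r (s+1) t G w k hG
      obtain ⟨⟨i, j, rfl⟩, -⟩ := g_eq_struct a r s t G k hr hGp w hG (by omega) (by
        omega)
      exact ⟨0, i+1, j, by rw [replicate_succ]; rfl⟩

lemma le_choose {m s : ℕ} (h1 : 1 ≤ s) (h2 : s + 1 ≤ m) : m ≤ m.choose s := by
  obtain ⟨m, rfl⟩ := Nat.exists_eq_add_of_le' (show 1 ≤ m by omega)
  induction m generalizing s with
  | zero => omega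
  | succ m ih =>
    obtain ⟨s, rfl⟩ := Nat.exists_eq_add_of_le' h1
    rw [Nat.choose_succ_succ']
    by_cases hc : s + 1 + 1 ≤ m + 1
    · have := ih (s := s+1) (by omega) hc
      have := Nat.choose_pos (show s ≤ m + 1 by omega)
      omega
    · have : s = m := by omega
      subst this
      simp

/-- the gap for `s ≥ 2`, more than `s` letters `b` -/
lemma vv_gap (a : Bool) (r s t G k : ℕ) (hr : 1 ≤ r) (hGp : 0 < G) (w : List Bool)
    (hG : ∀ x u, x + u = k + count a w → x.choose r * u.choose t ≤ G)
    (hm : s + 3 ≤ count (!a) w) :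
    vv a r (s+2) t k w + 1 ≠ G * (count (!a) w).choose (s+2) := by
  induction w generalizing k with
  | nil => simp at hm
  | cons c w ih =>
    rcases bool_cases a c with h' | h' <;> subst h'
    · rw [count_cons_of_ne (by simp)] at hm ⊢
      rw [vv_same]
      exact ih (k+1) (by intro x u hx; apply hG; simp at hx ⊢; omega) hm
    · rw [count_cons_self] at hm ⊢
      rw [count_cons_of_ne (by simp)] at hG
      rw [vv_ne, Nat.choose_succ_succ', mul_add]
      have h1 := vv_le a r (s+1) t G w k hG
      have hge : count (!a) w ≤ (count (!a) w).choose (s+1) := le_choose (by omega) (by omega)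
      have h2 : k.choose r * ee a (s+1) t w ≤ G * (count (!a) w).choose (s+1) := by
        calc _ ≤ k.choose r * ((count (!a) w).choose (s+1) * (count a w).choose t) :=
              Nat.mul_le_mul_left _ (ee_le _ _ _ _)
          _ = (k.choose r * (count a w).choose t) * (count (!a) w).choose (s+1) := by ring
          _ ≤ _ := Nat.mul_le_mul_right _ (hG _ _ rfl)


      change vv a r (s+2) t k w ≤ G * (count (!a) w).choose (s+2) at h1
      change vv a r (s+2) t k w + _ + 1 ≠ _ + G * (count (!a) w).choose (s+2)
      intro h
      by_cases hc : G * (count (!a) w).choose (s+2) ≤ vv a r (s+2) t k w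
      · obtain ⟨l, i, j, hw⟩ := vv_eq a r s t G k hr hGp w hG (by omega) hc
        have hX : k.choose r * ee a (s+1) t w + 1 = G * (count (!a) w).choose (s+1) := by omega
        have he : ∃ q, ee a (s+1) t w = (count (!a) w).choose (s+1) * q := by
          refine ⟨j.choose t, ?_⟩
          rw [hw]
          clear * -
          induction l with
          | zero => simp [ee_block, count_replicate]
          | succ l ih => 
            rw [replicate_succ, cons_append, ee_same, ih, count_cons_of_ne (by simp)]
        obtain ⟨q, hq⟩ := he
        rw [hq] at hX
        have hd : (count (!a) w).choose (s+1) ∣ 1 := by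
          have e1 : (count (!a) w).choose (s+1) ∣
            k.choose r * ((count (!a) w).choose (s+1) * q) + 1 := by rw [hX]; exact dvd_mul_left _ _
          have e2 : (count (!a) w).choose (s+1) ∣
            k.choose r * ((count (!a) w).choose (s+1) * q) := ⟨k.choose r * q, by ring⟩
          exact (Nat.dvd_add_right e2).1 e1
        have := Nat.le_of_dvd one_pos hd
        omega
      · obtain ⟨⟨i, j, hw⟩, hg⟩ := g_eq_struct a r s t G k hr hGp w hG (by omega) (by omega)
        apply hc
        rw [hw, vv_block, ← hg, hw]
        simp [count_replicate]
        apply le_of_eq; ring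

/-- the gap for `s = 1` -/
lemma vv_gap_one (a : Bool) (r t G k : ℕ) (w : List Bool)
    (hG : ∀ x u, x + u = k + count a w → x.choose r * u.choose t ≤ G)
    (hG' : ∀ x u, x + u = k + count a w → x.choose r * u.choose t + 1 ≠ G) :
    vv a r 1 t k w + 1 ≠ G * (count (!a) w) := by
  induction w generalizing k with
  | nil => simp
  | cons c w ih =>
    rcases bool_cases a c with h' | h' <;> subst h'
    · rw [count_cons_of_ne (by simp)]
      rw [vv_same]
      exact ih (k+1) (by intro x u hx; apply hG; simp at hx ⊢; omega)
        (by intro x u hx; apply hG'; simp at hx ⊢; omega)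
    · rw [count_cons_self]
      rw [count_cons_of_ne (by simp)] at hG hG'
      rw [vv_ne, mul_add, ee_zero]
      have h1 := vv_le a r 0 t G w k hG
      rw [zero_add]
      simp only [zero_add, Nat.choose_one_right] at h1
      have h2 := hG k _ rfl
      have h3 := hG' k _ rfl
      have h4 := ih k hG hG'
      omega

lemma ee_lt (a : Bool) (s t : ℕ) (w : List Bool) (h : count (!a) w < s) : ee a s t w = 0 := by
  have := ee_le a s t w
  rw [Nat.choose_eq_zero_of_lt h] at this
  omega

lemma ee_exact (a : Bool) (t : ℕ) (w : List Bool) :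
    ∃ u ≤ count a w, ee a (count (!a) w) t w = u.choose t := by
  induction w with
  | nil => exact ⟨0, by simp, by simp [ee_zero]⟩
  | cons c w ih =>
    rcases bool_cases a c with h' | h' <;> subst h'
    · rw [count_cons_of_ne (show c ≠ !c by simp), count_cons_self]
      obtain ⟨u, hu, he⟩ := ih
      cases hc : count (!c) w with
      | zero => exact ⟨count c w + 1, le_rfl, by simp [ee_zero]⟩
      | succ m =>
        rw [hc] at he
        exact ⟨u, by omega, by rw [ee_same, he]⟩
    · obtain ⟨u, hu, he⟩ := ih
      rw [count_cons_self, count_cons_of_ne (by simp), ee_ne, ee_lt _ _ _ _ (by omega), he]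
      exact ⟨u, hu, by simp⟩

lemma vv_exact (a : Bool) (r s t k : ℕ) (w : List Bool) (hm : count (!a) w = s + 1) :
    ∃ x u, x + u ≤ k + count a w ∧ vv a r (s+1) t k w = x.choose r * u.choose t := by
  induction w generalizing k with
  | nil => simp at hm
  | cons c w ih =>
    rcases bool_cases a c with h' | h' <;> subst h'
    · rw [count_cons_of_ne (by simp)] at hm
      obtain ⟨x, u, hx, h⟩ := ih (k+1) hm
      exact ⟨x, u, by simp; omega, by rw [vv_same, h]⟩
    · rw [count_cons_self] at hm
      rw [count_cons_of_ne (by simp)]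
      obtain ⟨u, hu, he⟩ := ee_exact a t w
      have h0 := vv_le a r s t ((k + count a w).choose r * (k + count a w).choose t) w k (by
        intro x u hx
        exact Nat.mul_le_mul (Nat.choose_le_choose _ (by omega)) (Nat.choose_le_choose _ (by omega)))
      rw [Nat.choose_eq_zero_of_lt (show count (!a) w < s + 1 by omega), mul_zero] at h0
      refine ⟨k, u, by omega, ?_⟩
      rw [vv_ne, ← he]
      rw [show count (!a) w = s by omega]
      omega

lemma choose_pos_iff' {x r : ℕ} (h : 0 < x.choose r) : r ≤ x := by
  by_contra hc
  rw [Nat.choose_eq_zero_of_lt (by omega)] at h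
  omega

lemma choose_logconc (r x d : ℕ) :
    x.choose r * (x+1+d).choose r ≤ (x+1).choose r * (x+d).choose r := by
  by_cases hx : x < r
  · rw [Nat.choose_eq_zero_of_lt hx]; simp
  · obtain ⟨e, rfl⟩ := Nat.exists_eq_add_of_le (not_lt.1 hx)
    have h1 := Nat.choose_mul_succ_eq (r+e) r
    have h2 := Nat.choose_mul_succ_eq (r+e+d) r
    rw [show r + e + 1 - r = e + 1 by omega] at h1
    rw [show r + e + d + 1 - r = e + d + 1 by omega] at h2
    rw [show r + e + 1 + d = r + e + d + 1 by omega]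
    generalize (r+e).choose r = A at *
    generalize (r+e+1).choose r = B at *
    generalize (r+e+d).choose r = C at *
    generalize (r+e+d+1).choose r = D at *
    have hpos : 0 < (r+e+1) * (e+d+1) := by positivity
    apply Nat.le_of_mul_le_mul_right _ hpos
    calc A * D * ((r+e+1) * (e+d+1)) = (A * (r+e+1)) * (D * (e+d+1)) := by ring
      _ = (B * (e+1)) * (C * (r+e+d+1)) := by rw [h1, h2]
      _ = B * C * ((e+1) * (r+e+d+1)) := by ring
      _ ≤ B * C * ((r+e+1) * (e+d+1)) := Nat.mul_le_mul_left _ (by nlinarith [Nat.zero_le (r*d)])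

lemma choose_big {r x : ℕ} (hr : 2 ≤ r) (hx : r + 1 ≤ x) : x + 1 < (x+1).choose r := by
  obtain ⟨r, rfl⟩ := Nat.exists_eq_add_of_le' (show 1 ≤ r by omega)
  rw [Nat.choose_succ_succ']
  have h1 := le_choose (m := x) (s := r) (by omega) (by omega)
  have h2 := le_choose (m := x) (s := r+1) (by omega) (by omega)
  omega

lemma diff_one {r t x u : ℕ} (hr : 1 ≤ r) (hx : r ≤ x) (ht : 1 ≤ t) (hu : t ≤ u)
    (hz : r + t + 1 ≤ x + u)
    (h : (x+1).choose r * u.choose t + 1 = x.choose r * (u+1).choose t) : r = 1 ∧ t = 1 := by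
  have hX := le_choose (m := x+1) (s := r) hr (by omega)
  have hU := le_choose (m := u+1) (s := t) ht (by omega)
  have hX2 := @choose_big r x
  have hU2 := @choose_big t u
  obtain ⟨e, rfl⟩ := Nat.exists_eq_add_of_le hx
  obtain ⟨f, rfl⟩ := Nat.exists_eq_add_of_le hu
  have h1 := Nat.choose_mul_succ_eq (r+e) r
  have h2 := Nat.choose_mul_succ_eq (t+f) t
  rw [show r + e + 1 - r = e + 1 by omega] at h1
  rw [show t + f + 1 - t = f + 1 by omega] at h2
  generalize (r+e).choose r = A at *
  generalize (r+e+1).choose r = X at *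
  generalize (t+f).choose t = C at *
  generalize (t+f+1).choose t = U at *
  have key : X * U * ((r+e+1) * (f+1)) + (r+e+1) * (t+f+1) = X * U * ((e+1) * (t+f+1)) := by
    calc _ = X * (r+e+1) * (U * (f+1)) + (r+e+1) * (t+f+1) := by ring
      _ = (X * C + 1) * ((r+e+1) * (t+f+1)) := by rw [← h2]; ring
      _ = (A * (r+e+1)) * (U * (t+f+1)) := by rw [h]; ring
      _ = _ := by rw [h1]; ring
  have hD : (r+e+1) * (f+1) < (e+1) * (t+f+1) := by
    by_contra hc
    have := Nat.mul_le_mul_left (X*U) (not_lt.1 hc)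
    have : 0 < (r+e+1) * (t+f+1) := by positivity
    omega
  have hXU : (r+e+1) * (t+f+1) ≤ X * U := Nat.mul_le_mul hX hU
  obtain ⟨D, hD'⟩ := Nat.exists_eq_add_of_lt hD
  rw [hD'] at key
  have key2 : (r+e+1) * (t+f+1) = X * U * (D + 1) := by
    have : X * U * ((r+e+1)*(f+1) + D + 1) = X * U * ((r+e+1)*(f+1)) + X * U * (D+1) := by ring
    omega
  have hXpos : 0 < X * U := lt_of_lt_of_le (by positivity) hXU
  have hD0 : D = 0 := by
    by_contra hc
    have : 1 ≤ D := by omega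
    nlinarith
  subst hD0
  have e1 : X = r + e + 1 := by
    by_contra hc
    have : r + e + 1 < X := by omega
    have := Nat.mul_lt_mul_of_lt_of_le this hU (by omega)
    omega
  have e2 : U = t + f + 1 := by
    by_contra hc
    have : t + f + 1 < U := by omega
    have := Nat.mul_lt_mul_of_le_of_lt hX this (by omega)
    omega
  have hDD : (e+1) * t = r * (f+1) + 1 := by nlinarith
  have c1 : r = 1 ∨ e = 0 := by
    by_contra hc
    have := hX2 (by omega) (by omega)
    omega
  have c2 : t = 1 ∨ f = 0 := by
    by_contra hc
    have := hU2 (by omega) (by omega)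
    omega
  rcases c1 with rfl | rfl
  · rcases c2 with rfl | rfl
    · simp
    · refine ⟨rfl, ?_⟩
      have : 1 ≤ e := by omega
      nlinarith
  · rcases c2 with rfl | rfl
    · exfalso
      have : 1 ≤ f := by omega
      nlinarith
    · omega

lemma step_lemma {r s x y x' y' c c' K : ℕ} (hK : 2 ≤ K) (hx : x < x' + 1) (hy : y' < y + 1)
    (h : x.choose r * (y+1).choose s * c + 1 = K)
    (h' : (x'+1).choose r * y'.choose s * c' = K)
    (b : (x+1).choose r * y.choose s * c ≤ K)
    (b' : x'.choose r * (y'+1).choose s * c' ≤ K) :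
    x'.choose r * (y'+1).choose s * c' = K ∨ (x+1).choose r * y.choose s * c = K := by
  by_contra hc
  push Not at hc
  obtain ⟨d, rfl⟩ := Nat.exists_eq_add_of_le (show x ≤ x' by omega)
  obtain ⟨f, rfl⟩ := Nat.exists_eq_add_of_le (show y' ≤ y by omega)
  have l1 := choose_logconc r x d
  have l2 := choose_logconc s y' f
  have l3 := Nat.mul_le_mul (Nat.mul_le_mul l1 l2) (le_refl (c * c'))
  rw [show x + d + 1 = x + 1 + d by omega] at h'
  rw [show y' + f + 1 = y' + 1 + f by omega] at h
  have l4 : (x.choose r * (y'+1+f).choose s * c) * ((x+1+d).choose r * y'.choose s * c') ≤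
      ((x+d).choose r * (y'+1).choose s * c') * ((x+1).choose r * (y'+f).choose s * c) := by
    calc _ = _ := by ring
      _ ≤ _ := l3
      _ = _ := by ring
  rw [h'] at l4
  generalize x.choose r * (y'+1+f).choose s * c = P at *
  generalize (x+d).choose r * (y'+1).choose s * c' = Q at *
  generalize (x+1).choose r * (y'+f).choose s * c = R at *
  have : Q ≤ P := by omega
  have : R ≤ P := by omega
  have := Nat.mul_le_mul ‹Q ≤ P› ‹R ≤ P›
  subst h
  nlinarith

lemma contra3 {r s t n x y u K : ℕ} (hr : 1 ≤ r) (hs : 1 ≤ s) (ht : 1 ≤ t)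
    (hne : ¬ (r = 1 ∧ s = 1 ∧ t = 1)) (hn : r + s + t + 3 ≤ n) (hK : 2 ≤ K)
    (hmax : ∀ x y u, x + y + u = n → x.choose r * y.choose s * u.choose t ≤ K)
    (hsum : x + (y + 1) + u = n)
    (h : x.choose r * (y+1).choose s * u.choose t + 1 = K)
    (h' : (x+1).choose r * y.choose s * u.choose t = K) : False := by
  have hd : u.choose t ∣ 1 := by
    have e1 : u.choose t ∣ x.choose r * (y+1).choose s * u.choose t + 1 := by
      rw [h, ← h']; exact dvd_mul_left _ _
    exact (Nat.dvd_add_right (dvd_mul_left _ _)).1 e1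
  have hu1 : u.choose t = 1 := Nat.dvd_one.1 hd
  have hut : u = t := by
    have := choose_pos_iff' (show 0 < u.choose t by omega)
    by_contra hc
    have := le_choose (m := u) ht (by omega)
    omega
  rw [hu1, mul_one] at h h'
  have p1 : r ≤ x := choose_pos_iff' (by
    by_contra hc
    rw [show x.choose r = 0 by omega] at h; omega)
  have p2 : s ≤ y := choose_pos_iff' (by
    by_contra hc
    rw [show y.choose s = 0 by omega] at h'; omega)
  obtain ⟨rfl, rfl⟩ := diff_one hs p2 hr p1 (by omega)
    (show (y+1).choose s * x.choose r + 1 = y.choose s * (x+1).choose r by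
      rw [mul_comm, h, ← h', mul_comm])
  have hm := hmax x y (t+1) (by omega)
  have : 2 ≤ t := by omega
  simp only [Nat.choose_one_right, Nat.choose_succ_self_right] at hm h h'
  have : y = x + 1 := by nlinarith
  subst this
  have : 2 ≤ x := by omega
  have : x * (x+1) * 3 ≤ x * (x+1) * (t+1) := Nat.mul_le_mul_left _ (by omega)
  nlinarith

lemma pair3 {r s t n x y u x' y' u' K : ℕ} (hr : 1 ≤ r) (hs : 1 ≤ s) (ht : 1 ≤ t)
    (hne : ¬ (r = 1 ∧ s = 1 ∧ t = 1)) (hn : r + s + t + 3 ≤ n) (hK : 2 ≤ K)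
    (hmax : ∀ x y u, x + y + u = n → x.choose r * y.choose s * u.choose t ≤ K)
    (hsum : x + y + u = n) (hsum' : x' + y' + u' = n)
    (h : x.choose r * y.choose s * u.choose t + 1 = K)
    (h' : x'.choose r * y'.choose s * u'.choose t = K) (hx : x < x') (hy : y' < y) :
    (x'-1).choose r * (y'+1).choose s * u'.choose t = K := by
  obtain ⟨x', rfl⟩ := Nat.exists_eq_add_of_le' (show 1 ≤ x' by omega)
  obtain ⟨y, rfl⟩ := Nat.exists_eq_add_of_le' (show 1 ≤ y by omega)
  rcases step_lemma hK hx hy h h' (hmax _ _ _ (by omega)) (hmax _ _ _ (by omega)) with e | e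
  · simpa using e
  · exact (contra3 hr hs ht hne hn hK hmax hsum h e).elim

lemma gap3 {r s t n x y u K : ℕ} (hr : 1 ≤ r) (hs : 1 ≤ s) (ht : 1 ≤ t)
    (hne : ¬ (r = 1 ∧ s = 1 ∧ t = 1)) (hn : r + s + t + 3 ≤ n) (hK : 2 ≤ K)
    (hmax : ∀ x y u, x + y + u = n → x.choose r * y.choose s * u.choose t ≤ K)
    (hsum : x + y + u = n)
    (h : x.choose r * y.choose s * u.choose t + 1 = K) :
    ∀ d x' y' u', x' + y' + u' = n → x'.choose r * y'.choose s * u'.choose t = K →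
      (x - x') + (x' - x) + (y - y') + (y' - y) + (u - u') + (u' - u) ≤ d → False := by
  intro d
  induction d with
  | zero =>
    intro x' y' u' hs' h' hd
    have : x' = x := by omega
    have : y' = y := by omega
    have : u' = u := by omega
    subst_vars
    omega
  | succ d ih =>
    intro x' y' u' hs' h' hd
    by_cases hxx : x < x'
    · by_cases hyy : y' < y
      · exact ih _ _ _ (by omega) (pair3 hr hs ht hne hn hK hmax hsum hs' h h' hxx hyy) (by omega)
      · by_cases huu : u' < u
        · refine ih (x'-1) y' (u'+1) (by omega) ?_ (by omega)
          have := pair3 (r := r) (s := t) (t := s) (n := n) (x := x) (y := u) (u := y) (x' := x')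
            (y' := u') (u' := y') (K := K) hr ht hs (by tauto) (by omega) hK
            (by intro x y u hh; rw [mul_right_comm]; apply hmax; omega) (by omega) (by omega)
            (by rw [mul_right_comm]; exact h) (by rw [mul_right_comm]; exact h') hxx huu
          rw [mul_right_comm]; exact this
        · omega
    · by_cases hyy : y < y'
      · by_cases hx2 : x' < x
        · refine ih (x'+1) (y'-1) u' (by omega) ?_ (by omega)
          have := pair3 (r := s) (s := r) (t := t) (n := n) (x := y) (y := x) (u := u) (x' := y')
            (y' := x') (u' := u') (K := K) hs hr ht (by tauto) (by omega) hK
            (by intro x y u hh; rw [mul_comm (x.choose s)]; apply hmax; omega) (by omega) (by omega)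
            (by rw [mul_comm (y.choose s)]; exact h) (by rw [mul_comm (y'.choose s)]; exact h')
            hyy hx2
          rw [mul_comm ((x'+1).choose r)]; exact this
        · by_cases huu : u' < u
          · refine ih x' (y'-1) (u'+1) (by omega) ?_ (by omega)
            have := pair3 (r := s) (s := t) (t := r) (n := n) (x := y) (y := u) (u := x) (x' := y')
              (y' := u') (u' := x') (K := K) hs ht hr (by tauto) (by omega) hK
              (by intro x y u hh; have := hmax u x y (by omega); convert this using 1; ring)
              (by omega) (by omega)
              (by rw [← h]; ring) (by rw [← h']; ring) hyy huu
            rw [← this]; ring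
          · omega
      · by_cases huu : u < u'
        · by_cases hx2 : x' < x
          · refine ih (x'+1) y' (u'-1) (by omega) ?_ (by omega)
            have := pair3 (r := t) (s := r) (t := s) (n := n) (x := u) (y := x) (u := y) (x' := u')
              (y' := x') (u' := y') (K := K) ht hr hs (by tauto) (by omega) hK
              (by intro x y u hh; have := hmax y u x (by omega); convert this using 1; ring)
              (by omega) (by omega)
              (by rw [← h]; ring) (by rw [← h']; ring) huu hx2
            rw [← this]; ring
          · by_cases hy2 : y' < y
            · refine ih x' (y'+1) (u'-1) (by omega) ?_ (by omega)
              have := pair3 (r := t) (s := s) (t := r) (n := n) (x := u) (y := y) (u := x)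
                (x' := u') (y' := y') (u' := x') (K := K) ht hs hr (by tauto) (by omega) hK
                (by intro x y u hh; have := hmax u y x (by omega); convert this using 1; ring)
                (by omega) (by omega)
                (by rw [← h]; ring) (by rw [← h']; ring) huu hy2
              rw [← this]; ring
            · omega
        · have : x' = x := by omega
          have : y' = y := by omega
          have : u' = u := by omega
          subst_vars
          omega

lemma pair2 {r t n x u x' u' K : ℕ} (hr : 1 ≤ r) (ht : 1 ≤ t)
    (hne : ¬ (r = 1 ∧ t = 1)) (hn : r + t + 2 ≤ n) (hK : 2 ≤ K)
    (hmax : ∀ x u, x + u = n → x.choose r * u.choose t ≤ K)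
    (hsum : x + u = n) (hsum' : x' + u' = n)
    (h : x.choose r * u.choose t + 1 = K)
    (h' : x'.choose r * u'.choose t = K) (hx : x < x') :
    (x'-1).choose r * (u'+1).choose t = K := by
  obtain ⟨x', rfl⟩ := Nat.exists_eq_add_of_le' (show 1 ≤ x' by omega)
  obtain ⟨u, rfl⟩ := Nat.exists_eq_add_of_le' (show 1 ≤ u by omega)
  rcases step_lemma (c := 1) (c' := 1) hK hx (show u' < u + 1 by omega)
    (by simpa using h) (by simpa using h')
    (by simpa using hmax _ _ (by omega)) (by simpa using hmax _ _ (by omega)) with e | e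
  · simpa using e
  · exfalso
    rw [mul_one] at e
    have p1 : r ≤ x := choose_pos_iff' (by
      by_contra hc
      rw [show x.choose r = 0 by omega] at h; omega)
    have p2 : t ≤ u := choose_pos_iff' (by
      by_contra hc
      rw [show u.choose t = 0 by omega] at e; omega)
    have := diff_one ht p2 hr p1 (by omega)
      (show (u+1).choose t * x.choose r + 1 = u.choose t * (x+1).choose r by
        rw [mul_comm, h, ← e, mul_comm])
    tauto

lemma gap2 {r t n x u K : ℕ} (hr : 1 ≤ r) (ht : 1 ≤ t)
    (hne : ¬ (r = 1 ∧ t = 1)) (hn : r + t + 2 ≤ n) (hK : 2 ≤ K)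
    (hmax : ∀ x u, x + u = n → x.choose r * u.choose t ≤ K)
    (hsum : x + u = n)
    (h : x.choose r * u.choose t + 1 = K) :
    ∀ d x' u', x' + u' = n → x'.choose r * u'.choose t = K →
      (x - x') + (x' - x) ≤ d → False := by
  intro d
  induction d with
  | zero =>
    intro x' u' hs' h' hd
    have : x' = x := by omega
    have : u' = u := by omega
    subst_vars
    omega
  | succ d ih =>
    intro x' u' hs' h' hd
    by_cases hxx : x < x'
    · exact ih _ _ (by omega) (pair2 hr ht hne hn hK hmax hsum hs' h h' hxx) (by omega)
    · by_cases hx2 : x' < x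
      · refine ih (x'+1) (u'-1) (by omega) ?_ (by omega)
        have := pair2 (r := t) (t := r) (n := n) (x := u) (u := x) (x' := u') (u' := x') ht hr
          (by tauto) (by omega) hK (by intro x u hh; rw [mul_comm]; apply hmax; omega)
          (by omega) (by omega) (by rw [mul_comm]; exact h) (by rw [mul_comm]; exact h') (by omega)
        rw [mul_comm]; exact this
      · have : x' = x := by omega
        have : u' = u := by omega
        subst_vars
        omega

lemma gap2' {r t z G x0 u0 : ℕ} (hr : 1 ≤ r) (hne : ¬ (r = 1 ∧ t ≤ 1)) (hz : r + t + 2 ≤ z)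
    (hmax : ∀ x u, x + u = z → x.choose r * u.choose t ≤ G)
    (h0 : x0 + u0 = z) (h0' : x0.choose r * u0.choose t = G) (x u : ℕ) (hx : x + u = z) :
    x.choose r * u.choose t + 1 ≠ G := by
  intro h
  have hG : 2 ≤ G := by
    have h1 := hmax (z - t) t (by omega)
    have h2 := le_choose (m := z - t) hr (by omega)
    rw [Nat.choose_self, mul_one] at h1
    omega
  rcases Nat.eq_zero_or_pos t with rfl | ht
  · simp only [Nat.choose_zero_right, mul_one] at *
    have h1 : G ≤ z.choose r := by rw [← h0']; exact Nat.choose_le_choose _ (by omega)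
    have h2 := hmax z 0 (by omega)
    have h3 : x < z := by
      rcases Nat.lt_or_ge x z with h | h
      · exact h
      · have : x = z := by omega
        subst this; omega
    obtain ⟨z, rfl⟩ := Nat.exists_eq_add_of_le' (show 1 ≤ z by omega)
    obtain ⟨r, rfl⟩ := Nat.exists_eq_add_of_le' hr
    have h4 : x.choose (r+1) ≤ z.choose (r+1) := Nat.choose_le_choose _ (by omega)
    have h5 := le_choose (m := z) (s := r) (by omega) (by omega)
    rw [Nat.choose_succ_succ'] at h1 h2
    omega
  · exact gap2 hr ht (by omega) hz hG hmax hx h _ x0 u0 h0 h0' le_rfl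

lemma choose_lt_lt {t u v : ℕ} (ht : 1 ≤ t) (hu : t ≤ u) (h : u < v) : u.choose t < v.choose t := by
  have h1 := choose_lt (m := u) ht (Nat.choose_pos (by omega))
  exact h1.trans_le (Nat.choose_le_choose _ h)

lemma gap2_le {r t z G x0 u0 : ℕ} (hr : 1 ≤ r) (hne : ¬ (r = 1 ∧ t ≤ 1)) (hz : r + t + 3 ≤ z)
    (hmax : ∀ x u, x + u = z → x.choose r * u.choose t ≤ G)
    (h0 : x0 + u0 = z) (h0' : x0.choose r * u0.choose t = G) (x u : ℕ) (hx : x + u ≤ z) :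
    x.choose r * u.choose t + 1 ≠ G := by
  intro h
  have hG : 4 ≤ G := by
    have h1 := hmax (z - t) t (by omega)
    have h2 := le_choose (m := z - t) hr (by omega)
    rw [Nat.choose_self, mul_one] at h1
    omega
  rcases Nat.eq_or_lt_of_le hx with he | hlt
  · exact gap2' hr hne (by omega) hmax h0 h0' x u he h
  rcases Nat.eq_zero_or_pos t with rfl | ht
  · apply gap2' hr hne (by omega) hmax h0 h0' x (z - x) (by omega)
    simpa using h
  · have hxp : 0 < x.choose r := by
      by_contra hc
      rw [show x.choose r = 0 by omega] at h; omega
    have hup : 0 < u.choose t := by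
      by_contra hc
      rw [show u.choose t = 0 by omega] at h; omega
    have a1 := choose_lt_lt ht (choose_pos_iff' hup) (show u < z - x by omega)
    have a2 := choose_lt_lt hr (choose_pos_iff' hxp) (show x < z - u by omega)
    have b1 := hmax x (z - x) (by omega)
    have b2 := hmax (z - u) u (by omega)
    generalize x.choose r = X at *
    generalize u.choose t = U at *
    have c1 : X * (U+1) ≤ G := (Nat.mul_le_mul_left _ a1).trans b1
    have c2 : (X+1) * U ≤ G := (Nat.mul_le_mul_right _ a2).trans b2
    have : X ≤ 1 := by nlinarith
    have : U ≤ 1 := by nlinarith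
    nlinarith

lemma exists_G (r t z : ℕ) : ∃ G x0 u0, x0 + u0 = z ∧ x0.choose r * u0.choose t = G ∧
    ∀ x u, x + u = z → x.choose r * u.choose t ≤ G := by
  obtain ⟨x0, hx0, h⟩ := Finset.exists_max_image (Finset.range (z+1))
    (fun x => x.choose r * (z - x).choose t) ⟨0, by simp⟩
  simp only [Finset.mem_range] at hx0 h
  refine ⟨_, x0, z - x0, by omega, rfl, ?_⟩
  intro x u hx
  have := h x (by omega)
  rwa [show z - x = u by omega] at this

lemma block_word (a : Bool) (r s t x y u : ℕ) :
    ∃ w : List Bool, w.length = x + y + u ∧ vv a r (s+1) t 0 w =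
      x.choose r * y.choose (s+1) * u.choose t :=
  ⟨replicate x a ++ (replicate y (!a) ++ replicate u a), by simp; omega,
    by rw [vv_block', zero_add]⟩

lemma zbound {r t m x0 u0 : ℕ} (hr : 1 ≤ r) (hne : ¬ (r = 1 ∧ t ≤ 1)) (hxp : r ≤ x0)
    (hup : t ≤ u0) (hz : x0 + u0 < r + t + 2) (hm3 : 3 ≤ m)
    (k1 : (x0+1).choose r * (m-1) * u0.choose t ≤ x0.choose r * u0.choose t * m)
    (k2 : x0.choose r * (m-1) * (u0+1).choose t ≤ x0.choose r * u0.choose t * m) : False := by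
  obtain ⟨q, hq⟩ := Nat.exists_eq_add_of_le hm3
  subst hq
  rw [show 3 + q - 1 = q + 2 by omega] at k1 k2
  by_cases hxr : x0 = r
  · subst hxr
    rw [Nat.choose_self, Nat.choose_succ_self_right] at k1
    have hU := Nat.choose_pos hup
    have : (1 + 1) * (q+2) * u0.choose t ≤ (x0+1) * (q+2) * u0.choose t :=
      Nat.mul_le_mul_right _ (Nat.mul_le_mul_right _ (by omega))
    nlinarith
  · have hx1 : x0 = r + 1 := by omega
    have hut : u0 = t := by omega
    subst hx1 hut
    rcases Nat.eq_zero_or_pos u0 with rfl | ht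
    · simp only [Nat.choose_zero_right, mul_one, Nat.choose_succ_self_right] at k1
      have hr2 : 2 ≤ r := by omega
      have e := Nat.choose_mul_succ_eq (r+1) r
      rw [Nat.choose_succ_self_right, show r + 1 + 1 - r = 2 by omega] at e
      have e' : (r+1) * (r+1+1) * (q+2) ≤ 2 * ((r+1) * (3+q)) := by
        rw [e]; nlinarith
      have : (r+1) * (2+1+1) * (q+2) ≤ (r+1) * (r+1+1) * (q+2) := by gcongr
      nlinarith
    · rw [Nat.choose_self, Nat.choose_succ_self_right u0] at k2
      have hX := Nat.choose_pos hxp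
      have : (r+1).choose r * (q+2) * (1+1) ≤ (r+1).choose r * (q+2) * (u0+1) :=
        Nat.mul_le_mul_left _ (by omega)
      nlinarith

lemma mbound {t s z x0 u0 M : ℕ} (ht : t ≤ 1) (hz : 1 + t + 3 ≤ z) (h0 : x0 + u0 = z)
    (hE : x0.choose 1 * u0.choose t = M)
    (hF : ∀ x u, x + 1 + u = z → x.choose 1 * (s+1+1+1).choose (s+1+1) * u.choose t ≤ M) :
    False := by
  simp only [Nat.choose_one_right, Nat.choose_succ_self_right] at hE hF
  rcases (show t = 0 ∨ t = 1 by omega) with rfl | rfl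
  · have k1 := hF (z - 1) 0 (by omega)
    simp only [Nat.choose_zero_right, mul_one] at hE k1
    have : (z - 1) * 3 ≤ (z - 1) * (s+2+1) := Nat.mul_le_mul_left _ (by omega)
    omega
  · simp only [Nat.choose_one_right] at hE hF
    rcases (show x0 = 0 ∨ u0 = 0 ∨ (1 ≤ x0 ∧ 1 ≤ u0) by omega) with h | h | ⟨hx, hu⟩
    · subst h
      have k1 := hF 1 (z - 2) (by omega)
      have : 1 * 1 * 1 ≤ 1 * (s+2+1) * (z-2) := by gcongr <;> omega
      simp only [zero_mul, mul_zero] at hE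
      omega
    · subst h
      have k1 := hF 1 (z - 2) (by omega)
      have : 1 * 1 * 1 ≤ 1 * (s+2+1) * (z-2) := by gcongr <;> omega
      simp only [zero_mul, mul_zero] at hE
      omega
    rcases (show 2 ≤ x0 ∨ 2 ≤ u0 by omega) with h2 | h2
    · have k1 := hF (x0 - 1) u0 (by omega)
      obtain ⟨q, rfl⟩ := Nat.exists_eq_add_of_le h2
      rw [show 2 + q - 1 = q + 1 by omega] at k1
      have : (q+1) * 3 * u0 ≤ (q+1) * (s+2+1) * u0 := by gcongr; omega
      nlinarith
    · have k2 := hF x0 (u0 - 1) (by omega)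
      obtain ⟨q, rfl⟩ := Nat.exists_eq_add_of_le h2
      rw [show 2 + q - 1 = q + 1 by omega] at k2
      have : x0 * 3 * (q+1) ≤ x0 * (s+2+1) * (q+1) := by gcongr; omega
      nlinarith

theorem core (a : Bool) (r s t n M : ℕ) (hr : 1 ≤ r) (hne : ¬ (r = 1 ∧ s = 0 ∧ t ≤ 1))
    (hn : r + (s+1) + t + 3 ≤ n)
    (hM : ∀ w : List Bool, w.length = n → vv a r (s+1) t 0 w ≤ M)
    (hA : ∃ w : List Bool, w.length = n ∧ vv a r (s+1) t 0 w = M) :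
    4 ≤ M ∧ ∀ w : List Bool, w.length = n → vv a r (s+1) t 0 w + 1 ≠ M := by
  have hF : ∀ x y u, x + y + u = n → x.choose r * y.choose (s+1) * u.choose t ≤ M := by
    intro x y u h
    obtain ⟨w, hw, hv⟩ := block_word a r s t x y u
    rw [← hv]; exact hM w (by omega)
  have hM2 : 4 ≤ M := by
    have h1 := hF (n - (s+1) - t) (s+1) t (by omega)
    have h2 := le_choose (m := n - (s+1) - t) hr (by omega)
    simp only [Nat.choose_self, mul_one] at h1
    omega
  refine ⟨hM2, ?_⟩
  have hFA : ∃ x y u, x + y + u = n ∧ x.choose r * y.choose (s+1) * u.choose t = M := by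
    obtain ⟨w, hw, hv⟩ := hA
    obtain ⟨G, x0, u0, h0, hG0, hG⟩ := exists_G r t (count a w)
    have h1 := vv_le a r s t G w 0 (by simpa using hG)
    have hc := count_len a w
    refine ⟨x0, count (!a) w, u0, by omega, ?_⟩
    apply le_antisymm (hF _ _ _ (by omega))
    rw [← hv]
    refine h1.trans (le_of_eq ?_)
    rw [← hG0]; ring
  intro w hw hv
  obtain ⟨G, x0, u0, h0, hG0, hG⟩ := exists_G r t (count a w)
  have hG' : ∀ x u, x + u = 0 + count a w → x.choose r * u.choose t ≤ G := by simpa using hG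
  have h1 := vv_le a r s t G w 0 hG'
  have hc := count_len a w
  have hf := hF x0 (count (!a) w) u0 (by omega)
  have hfe : x0.choose r * (count (!a) w).choose (s+1) * u0.choose t =
    G * (count (!a) w).choose (s+1) := by rw [← hG0]; ring
  rcases Nat.lt_or_ge (G * (count (!a) w).choose (s+1)) M with hlt | hge
  · -- the block value is `M - 1`
    have hv1 : x0.choose r * (count (!a) w).choose (s+1) * u0.choose t + 1 = M := by omega
    obtain ⟨x', y', u', hs', h'⟩ := hFA
    rcases Nat.eq_zero_or_pos t with rfl | ht
    · simp only [Nat.choose_zero_right, mul_one] at *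
      have hxz : (x0 + u0).choose r * (count (!a) w).choose (s+1) + 1 = M := by
        have e1 : x0.choose r ≤ (x0+u0).choose r := Nat.choose_le_choose _ (by omega)
        have e2 := hG (x0+u0) 0 (by omega)
        have : (x0+u0).choose r = x0.choose r := by omega
        rw [this]; exact hv1
      have hm2 : ∀ x u, x + u = n → x.choose r * u.choose (s+1) ≤ M := fun x u h =>
        hF x u 0 (by omega)
      refine gap2' hr (by omega) (by omega) hm2 (x0 := x' + u') (u0 := y') (by omega) ?_
        (x0 + u0) (count (!a) w) (by omega) hxz
      apply le_antisymm (hm2 _ _ (by omega))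
      rw [← h']
      exact Nat.mul_le_mul_right _ (Nat.choose_le_choose _ (by omega))
    · exact gap3 hr (by omega) ht (by omega) hn (by omega) hF (by omega) hv1 _ x' y' u' hs' h'
        le_rfl
  · have hE : G * (count (!a) w).choose (s+1) = M := by omega
    have hGp : 0 < G := by
      rcases Nat.eq_zero_or_pos G with h | h
      · subst h; omega
      · exact h
    have hmp : s + 1 ≤ count (!a) w := choose_pos_iff' (by
      by_contra hc
      rw [show (count (!a) w).choose (s+1) = 0 by omega] at hE; omega)
    have hxp : r ≤ x0 := choose_pos_iff' (by
      by_contra hc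
      rw [show x0.choose r = 0 by omega] at hG0; omega)
    have hup : t ≤ u0 := choose_pos_iff' (by
      by_contra hc
      rw [show u0.choose t = 0 by omega] at hG0; omega)
    rcases Nat.eq_zero_or_pos s with rfl | hs
    · -- s = 1
      have hne' : ¬ (r = 1 ∧ t ≤ 1) := by omega
      simp only [zero_add, Nat.choose_one_right] at hF hE hv hmp hn
      have hz : r + t + 2 ≤ count a w := by
        by_contra hcon
        have k1 := hF (x0+1) (count (!a) w-1) u0 (by omega)
        have k2 := hF x0 (count (!a) w-1) (u0+1) (by omega)
        rw [← hE, ← hG0] at k1 k2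
        exact zbound hr hne' hxp hup (by omega) (by omega) k1 k2
      refine vv_gap_one a r t G 0 w hG' ?_ (by omega)
      rw [zero_add]
      exact gap2' hr hne' hz hG h0 hG0
    · obtain ⟨s, rfl⟩ := Nat.exists_eq_add_of_le' (show 1 ≤ s from hs)
      rcases Nat.lt_or_ge (s + 2) (count (!a) w) with hm | hm
      · exact vv_gap a r s t G 0 hr hGp w hG' (by omega) (by
          change vv a r (s+1+1) t 0 w + 1 = G * (count (!a) w).choose (s+1+1)
          omega)
      · have hme : count (!a) w = s + 1 + 1 := by omega
        rw [hme, Nat.choose_self, mul_one] at hE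
        by_cases hrt : r = 1 ∧ t ≤ 1
        · obtain ⟨rfl, ht⟩ := hrt
          exact mbound ht (by omega) h0 (hG0.trans hE) (fun x u h => hF x _ u (by omega))
        · obtain ⟨x, u, hxu, hval⟩ := vv_exact a r (s+1) t 0 w hme
          exact gap2_le hr hrt (by omega) hG h0 hG0 x u (by omega) (by omega)

/-! ### Alternating words -/

lemma occ_one (a : Bool) (w : List Bool) : occ [a] w = count a w := by
  have := occ_replicate a 1 w
  simpa using this

lemma two_insert (a b : Bool) (h : a ≠ b) (u v : List Bool) :
    occ [a, b] (u ++ b :: v) = occ [a, b] (u ++ v) + count a u := by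
  induction u with
  | nil => simp [occ_cons_ne h]
  | cons c u ih =>
    by_cases hc : a = c
    · subst hc
      simp only [cons_append, occ_cons_same, ih, occ_one, count_append, count_cons_self]
      omega
    · simp only [cons_append, occ_cons_ne hc, ih]
      rw [count_cons_of_ne (Ne.symm hc)]

lemma two_insert' (a b : Bool) (h : a ≠ b) (u v : List Bool) :
    occ [b, a] (u ++ b :: v) = occ [b, a] (u ++ v) + count a v := by
  induction u with
  | nil => simp [occ_cons_same, occ_one, add_comm]
  | cons c u ih =>
    by_cases hc : b = c
    · subst hc
      simp only [cons_append, occ_cons_same, ih, occ_one, count_append]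
      rw [count_cons_of_ne (Ne.symm h)]
      omega
    · simp only [cons_append, occ_cons_ne hc, ih]

lemma three_insert (a b : Bool) (h : a ≠ b) (u v : List Bool) :
    occ [a, b, a] (u ++ b :: v) = occ [a, b, a] (u ++ v) + count a u * count a v := by
  induction u with
  | nil => simp [occ_cons_ne h]
  | cons c u ih =>
    by_cases hc : a = c
    · subst hc
      simp only [cons_append, occ_cons_same, ih, two_insert' a b h, count_cons_self]
      ring
    · simp only [cons_append, occ_cons_ne hc, ih]
      rw [count_cons_of_ne (Ne.symm hc)]

lemma split_count (a : Bool) (w : List Bool) (x : ℕ) (hx : x ≤ count a w) :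
    ∃ u v, w = u ++ v ∧ count a u = x ∧ count a v = count a w - x := by
  induction w generalizing x with
  | nil => exact ⟨[], [], rfl, by simp at *; omega, by simp⟩
  | cons c w ih =>
    rcases Nat.eq_zero_or_pos x with rfl | hp
    · exact ⟨[], c :: w, rfl, rfl, by simp⟩
    by_cases hc : c = a
    · subst hc
      rw [count_cons_self] at hx
      obtain ⟨u, v, h1, h2, h3⟩ := ih (x - 1) (by omega)
      refine ⟨c :: u, v, by rw [h1]; rfl, by rw [count_cons_self]; omega, ?_⟩
      rw [count_cons_self]; omega
    · rw [count_cons_of_ne hc] at hx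
      obtain ⟨u, v, h1, h2, h3⟩ := ih x hx
      exact ⟨c :: u, v, by rw [h1]; rfl, by rw [count_cons_of_ne hc]; omega,
        by rw [count_cons_of_ne hc]; omega⟩

lemma two_list (a : Bool) (z : ℕ) (L : List ℕ) (hL : ∀ x ∈ L, x ≤ z) :
    ∃ w : List Bool, w.length = z + L.length ∧ count a w = z ∧ occ [a, !a] w = L.sum := by
  have hab : a ≠ !a := by cases a <;> simp
  induction L with
  | nil =>
    refine ⟨replicate z a, by simp, by simp, ?_⟩
    have := vv_as a 1 0 0 0 z
    simpa [vv] using this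
  | cons x L ih =>
    obtain ⟨w, h1, h2, h3⟩ := ih (fun y hy => hL y (by simp [hy]))
    have hx := hL x (by simp)
    obtain ⟨u, v, rfl, h5, h6⟩ := split_count a w x (by omega)
    refine ⟨u ++ (!a) :: v, by simp at *; omega, ?_, ?_⟩
    · rw [count_append, count_cons_of_ne hab.symm, ← count_append, h2]
    · rw [two_insert a _ hab, h3, h5, sum_cons, add_comm]

lemma three_list (a : Bool) (z : ℕ) (L : List ℕ) (hL : ∀ x ∈ L, x ≤ z) :
    ∃ w : List Bool, w.length = z + L.length ∧ count a w = z ∧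
      occ [a, !a, a] w = (L.map (fun x => x * (z - x))).sum := by
  have hab : a ≠ !a := by cases a <;> simp
  induction L with
  | nil =>
    refine ⟨replicate z a, by simp, by simp, ?_⟩
    have := vv_as a 1 0 1 0 z
    simpa [vv] using this
  | cons x L ih =>
    obtain ⟨w, h1, h2, h3⟩ := ih (fun y hy => hL y (by simp [hy]))
    have hx := hL x (by simp)
    obtain ⟨u, v, rfl, h5, h6⟩ := split_count a w x (by omega)
    refine ⟨u ++ (!a) :: v, by simp at *; omega, ?_, ?_⟩
    · rw [count_append, count_cons_of_ne hab.symm, ← count_append, h2]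
    · rw [three_insert a _ hab, h3, h5, h6, h2, map_cons, sum_cons, add_comm]

lemma exists_sum_list (z m k : ℕ) (hk : k ≤ z * m) :
    ∃ L : List ℕ, L.length = m ∧ (∀ x ∈ L, x ≤ z) ∧ L.sum = k := by
  induction m generalizing k with
  | zero => exact ⟨[], rfl, by simp, by simp at *; omega⟩
  | succ m ih =>
    rw [mul_add, mul_one] at hk
    rcases le_total k z with h | h
    · obtain ⟨L, h1, h2, h3⟩ := ih 0 (by omega)
      exact ⟨k :: L, by simp [h1], by simpa [h] using h2, by simp [h3]⟩
    · obtain ⟨L, h1, h2, h3⟩ := ih (k - z) (by omega)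
      exact ⟨z :: L, by simp [h1], by simpa using h2, by rw [sum_cons, h3]; omega⟩

lemma alt_two (a : Bool) (n : ℕ) (w : List Bool) (hw : w.length = n) (k : ℕ)
    (hk : k ≤ occ [a, !a] w) : ∃ w' : List Bool, w'.length = n ∧ occ [a, !a] w' = k := by
  have h1 := vv_le a 1 0 0 (count a w) w 0 (by intro x u h; simp; omega)
  have h2 : vv a 1 1 0 0 w = occ [a, !a] w := by simp [vv]
  have hc := count_len a w
  simp only [zero_add, Nat.choose_one_right] at h1
  rw [h2] at h1
  obtain ⟨L, l1, l2, l3⟩ := exists_sum_list (count a w) (count (!a) w) k (hk.trans h1)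
  obtain ⟨w', w1, -, w3⟩ := two_list a _ L l2
  exact ⟨w', by omega, by rw [w3, l3]⟩

lemma sq_list (h m N : ℕ) (hN : N ≤ (m + 1) * h^2) :
    ∃ L : List ℕ, L.length = m + 4 ∧ (∀ x ∈ L, x ≤ 2 * h) ∧
      (L.map (fun x => x * (2 * h - x))).sum + N = (m + 4) * h^2 := by
  have key : ∀ d, d ≤ h → (h - d) * (2 * h - (h - d)) + d^2 = h^2 := by
    intro d hd
    obtain ⟨e, rfl⟩ := Nat.exists_eq_add_of_le hd
    rw [show 2 * (d + e) - (d + e - d) = 2 * d + e by omega, show d + e - d = e by omega]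
    ring
  induction m generalizing N with
  | zero =>
    obtain ⟨x, y, z, w, hs⟩ := Nat.sum_four_squares N
    have bd : ∀ q, q^2 ≤ h^2 → q ≤ h := fun q hq => (Nat.pow_le_pow_iff_left (by norm_num)).1 hq
    have hx := key x (bd x (by nlinarith))
    have hy := key y (bd y (by nlinarith))
    have hz := key z (bd z (by nlinarith))
    have hw := key w (bd w (by nlinarith))
    refine ⟨[h - x, h - y, h - z, h - w], rfl, by simp; omega, ?_⟩
    simp only [map_cons, map_nil, sum_cons, sum_nil]
    linarith
  | succ m ih =>
    rcases le_total N ((m+1) * h^2) with hc | hc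
    · obtain ⟨L, l1, l2, l3⟩ := ih N hc
      refine ⟨h :: L, by simp [l1], by simpa using ⟨by omega, l2⟩, ?_⟩
      have := key 0 (by omega)
      simp only [Nat.sub_zero] at this
      simp only [map_cons, sum_cons]
      linarith
    · obtain ⟨q, rfl⟩ := Nat.exists_eq_add_of_le
        (show h^2 ≤ N by nlinarith [Nat.zero_le (m * h^2)])
      obtain ⟨L, l1, l2, l3⟩ := ih q (by linarith)
      refine ⟨0 :: L, by simp [l1], by simpa using l2, ?_⟩
      simp only [map_cons, sum_cons]
      linarith

/-- The value `k` is attained by `a (!a) a` on words of length `n`. -/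
def Att (a : Bool) (n k : ℕ) : Prop := ∃ w : List Bool, w.length = n ∧ occ [a, !a, a] w = k

lemma Att.mono {a : Bool} {n k : ℕ} (h : Att a n k) : Att a (n+1) k := by
  obtain ⟨w, h1, h2⟩ := h
  refine ⟨(!a) :: w, by simp [h1], ?_⟩
  rw [occ_cons_ne (by cases a <;> simp), h2]

lemma Att.of_list (a : Bool) (z : ℕ) (L : List ℕ) (n k : ℕ) (hL : ∀ x ∈ L, x ≤ z)
    (hn : z + L.length = n) (hk : (L.map (fun x => x * (z - x))).sum = k) : Att a n k := by
  obtain ⟨w, h1, -, h3⟩ := three_list a z L hL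
  exact ⟨w, by omega, by omega⟩

lemma att_step (a : Bool) (n M h m : ℕ) (ih : ∀ k, k ≤ M → Att a n k)
    (hn : 2 * h + (m + 4) = n + 1) (hM : 3 * h^2 ≤ M + 1) :
    ∀ k, k ≤ (m + 4) * h^2 → Att a (n+1) k := by
  intro k hk
  rcases le_or_gt k M with hkM | hkM
  · exact (ih k hkM).mono
  · obtain ⟨L, l1, l2, l3⟩ := sq_list h m ((m+4) * h^2 - k) (by
      have : (m+4) * h^2 = (m+1) * h^2 + 3 * h^2 := by ring
      omega)
    exact Att.of_list a (2*h) L (n+1) k l2 (by omega) (by omega)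

lemma max_prod (t : ℕ) : ∀ x y u : ℕ, (x + y + u = 3*t → x*y*u ≤ t^3) ∧
    (x + y + u = 3*t+1 → x*y*u ≤ t^2*(t+1)) ∧ (x + y + u = 3*t+2 → x*y*u ≤ t*(t+1)^2) := by
  induction t with
  | zero =>
    intro x y u
    have : x + y + u ≤ 2 → x * y * u = 0 := by
      intro h
      rcases (show x = 0 ∨ y = 0 ∨ u = 0 by omega) with rfl | rfl | rfl <;> simp
    refine ⟨fun h => ?_, fun h => ?_, fun h => ?_⟩ <;> rw [this (by omega)] <;> simp
  | succ t ih =>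
    intro x y u
    by_cases h0 : x = 0 ∨ y = 0 ∨ u = 0
    · have : x * y * u = 0 := by rcases h0 with rfl | rfl | rfl <;> simp
      rw [this]; simp
    obtain ⟨x, rfl⟩ := Nat.exists_eq_succ_of_ne_zero (show x ≠ 0 by tauto)
    obtain ⟨y, rfl⟩ := Nat.exists_eq_succ_of_ne_zero (show y ≠ 0 by tauto)
    obtain ⟨u, rfl⟩ := Nat.exists_eq_succ_of_ne_zero (show u ≠ 0 by tauto)
    obtain ⟨i1, i2, i3⟩ := ih x y u
    have e : (x+1)*(y+1)*(u+1) = x*y*u + (x*y+y*u+u*x) + (x+y+u) + 1 := by ring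
    have hq : 3 * (x*y+y*u+u*x) ≤ (x+y+u)^2 := by
      zify
      nlinarith [sq_nonneg ((x:ℤ)-y), sq_nonneg ((y:ℤ)-u), sq_nonneg ((u:ℤ)-x)]
    simp only [Nat.succ_eq_add_one]
    refine ⟨fun h => ?_, fun h => ?_, fun h => ?_⟩
    · have hs : x + y + u = 3*t := by omega
      have := i1 hs
      rw [hs] at hq e
      rw [e]
      nlinarith
    · have hs : x + y + u = 3*t+1 := by omega
      have := i2 hs
      rw [hs] at hq e
      have hq' : x*y+y*u+u*x ≤ 3*t^2+2*t := by
        have : (3*t+1)^2 = 3 * (3*t^2+2*t) + 1 := by ring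
        omega
      rw [e]
      nlinarith
    · have hs : x + y + u = 3*t+2 := by omega
      have := i3 hs
      rw [hs] at hq e
      have hq' : x*y+y*u+u*x ≤ 3*t^2+4*t+1 := by
        have : (3*t+2)^2 = 3 * (3*t^2+4*t+1) + 1 := by ring
        omega
      rw [e]
      nlinarith

lemma att7 (a : Bool) : ∀ k, k ≤ 12 → Att a 7 k := by
  intro k hk
  interval_cases k
  · exact Att.of_list a 0 [0, 0, 0, 0, 0, 0, 0] _ _ (by decide) (by decide) (by decide)
  · exact Att.of_list a 2 [0, 0, 0, 0, 1] _ _ (by decide) (by decide) (by decide)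
  · exact Att.of_list a 2 [0, 0, 0, 1, 1] _ _ (by decide) (by decide) (by decide)
  · exact Att.of_list a 2 [0, 0, 1, 1, 1] _ _ (by decide) (by decide) (by decide)
  · exact Att.of_list a 2 [0, 1, 1, 1, 1] _ _ (by decide) (by decide) (by decide)
  · exact Att.of_list a 2 [1, 1, 1, 1, 1] _ _ (by decide) (by decide) (by decide)
  · exact Att.of_list a 3 [0, 1, 1, 1] _ _ (by decide) (by decide) (by decide)
  · exact Att.of_list a 4 [0, 1, 2] _ _ (by decide) (by decide) (by decide)
  · exact Att.of_list a 3 [1, 1, 1, 1] _ _ (by decide) (by decide) (by decide)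
  · exact Att.of_list a 4 [1, 1, 1] _ _ (by decide) (by decide) (by decide)
  · exact Att.of_list a 4 [1, 1, 2] _ _ (by decide) (by decide) (by decide)
  · exact Att.of_list a 4 [1, 2, 2] _ _ (by decide) (by decide) (by decide)
  · exact Att.of_list a 4 [2, 2, 2] _ _ (by decide) (by decide) (by decide)

lemma att8 (a : Bool) : ∀ k, k ≤ 18 → Att a 8 k := by
  intro k hk
  rcases le_or_gt k 12 with h | h
  · exact (att7 a k h).mono
  interval_cases k
  · exact Att.of_list a 4 [1, 1, 1, 2] _ _ (by decide) (by decide) (by decide)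
  · exact Att.of_list a 4 [1, 1, 2, 2] _ _ (by decide) (by decide) (by decide)
  · exact Att.of_list a 4 [1, 2, 2, 2] _ _ (by decide) (by decide) (by decide)
  · exact Att.of_list a 4 [2, 2, 2, 2] _ _ (by decide) (by decide) (by decide)
  · exact Att.of_list a 6 [2, 3] _ _ (by decide) (by decide) (by decide)
  · exact Att.of_list a 5 [2, 2, 2] _ _ (by decide) (by decide) (by decide)

lemma att9 (a : Bool) : ∀ k, k ≤ 27 → Att a 9 k := by
  intro k hk
  rcases le_or_gt k 18 with h | h
  · exact (att8 a k h).mono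
  interval_cases k
  · exact Att.of_list a 4 [1, 2, 2, 2, 2] _ _ (by decide) (by decide) (by decide)
  · exact Att.of_list a 4 [2, 2, 2, 2, 2] _ _ (by decide) (by decide) (by decide)
  · exact Att.of_list a 6 [1, 2, 2] _ _ (by decide) (by decide) (by decide)
  · exact Att.of_list a 5 [1, 2, 2, 2] _ _ (by decide) (by decide) (by decide)
  · exact Att.of_list a 6 [1, 3, 3] _ _ (by decide) (by decide) (by decide)
  · exact Att.of_list a 5 [2, 2, 2, 2] _ _ (by decide) (by decide) (by decide)
  · exact Att.of_list a 6 [2, 2, 3] _ _ (by decide) (by decide) (by decide)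
  · exact Att.of_list a 6 [2, 3, 3] _ _ (by decide) (by decide) (by decide)
  · exact Att.of_list a 6 [3, 3, 3] _ _ (by decide) (by decide) (by decide)

lemma att10 (a : Bool) : ∀ k, k ≤ 36 → Att a 10 k :=
  att_step a 9 27 3 0 (att9 a) (by norm_num) (by norm_num)

lemma att11 (a : Bool) : ∀ k, k ≤ 48 → Att a 11 k := by
  intro k hk
  rcases le_or_gt k 36 with h | h
  · exact (att10 a k h).mono
  interval_cases k
  · exact Att.of_list a 6 [1, 1, 3, 3, 3] _ _ (by decide) (by decide) (by decide)
  · exact Att.of_list a 6 [1, 2, 2, 2, 3] _ _ (by decide) (by decide) (by decide)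
  · exact Att.of_list a 6 [1, 2, 2, 3, 3] _ _ (by decide) (by decide) (by decide)
  · exact Att.of_list a 6 [1, 2, 3, 3, 3] _ _ (by decide) (by decide) (by decide)
  · exact Att.of_list a 6 [1, 3, 3, 3, 3] _ _ (by decide) (by decide) (by decide)
  · exact Att.of_list a 6 [2, 2, 2, 3, 3] _ _ (by decide) (by decide) (by decide)
  · exact Att.of_list a 6 [2, 2, 3, 3, 3] _ _ (by decide) (by decide) (by decide)
  · exact Att.of_list a 6 [2, 3, 3, 3, 3] _ _ (by decide) (by decide) (by decide)
  · exact Att.of_list a 6 [3, 3, 3, 3, 3] _ _ (by decide) (by decide) (by decide)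
  · exact Att.of_list a 7 [2, 3, 3, 3] _ _ (by decide) (by decide) (by decide)
  · exact Att.of_list a 8 [3, 4, 4] _ _ (by decide) (by decide) (by decide)
  · exact Att.of_list a 7 [3, 3, 3, 3] _ _ (by decide) (by decide) (by decide)

lemma att_all (a : Bool) (t : ℕ) : (∀ k, k ≤ (t+3)^3 → Att a (3*(t+3)) k) ∧
    (∀ k, k ≤ (t+3)^2*(t+4) → Att a (3*(t+3)+1) k) ∧
    (∀ k, k ≤ (t+3)*(t+4)^2 → Att a (3*(t+3)+2) k) := by
  induction t with
  | zero => exact ⟨att9 a, att10 a, att11 a⟩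
  | succ t ih =>
    obtain ⟨-, -, i3⟩ := ih
    have j1 : ∀ k, k ≤ (t+1+3)^3 → Att a (3*(t+1+3)) k := by
      intro k hk
      have := att_step a (3*(t+3)+2) _ (t+4) t i3 (by ring) (by nlinarith) k (by linarith)
      convert this using 1
      ring
    have j2 : ∀ k, k ≤ (t+1+3)^2*(t+1+4) → Att a (3*(t+1+3)+1) k := by
      intro k hk
      exact att_step a _ _ (t+4) (t+1) j1 (by ring) (by nlinarith) k (by linarith)
    have j3 : ∀ k, k ≤ (t+1+3)*(t+1+4)^2 → Att a (3*(t+1+3)+2) k := by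
      intro k hk
      exact att_step a _ _ (t+5) t j2 (by ring) (by nlinarith) k (by linarith)
    exact ⟨j1, j2, j3⟩

lemma alt_three (a : Bool) (n : ℕ) (hn : 7 ≤ n) (w : List Bool) (hw : w.length = n) (k : ℕ)
    (hk : k ≤ occ [a, !a, a] w) : Att a n k := by
  obtain ⟨G, x0, u0, h0, hG0, hG⟩ := exists_G 1 1 (count a w)
  have h1 := vv_le a 1 0 1 G w 0 (by simpa using hG)
  have h2 : vv a 1 1 1 0 w = occ [a, !a, a] w := by simp [vv]
  have hc := count_len a w
  simp only [zero_add, Nat.choose_one_right] at h1 hG0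
  rw [h2, ← hG0] at h1
  have hk' := hk.trans h1
  have hmod : n = 7 ∨ n = 8 ∨ ∃ t, n = 3*(t+3) ∨ n = 3*(t+3)+1 ∨ n = 3*(t+3)+2 := by
    rcases (show n = 7 ∨ n = 8 ∨ 9 ≤ n by omega) with h | h | h
    · exact Or.inl h
    · exact Or.inr (Or.inl h)
    · exact Or.inr (Or.inr ⟨n / 3 - 3, by omega⟩)
  rcases hmod with rfl | rfl | ⟨t, rfl | rfl | rfl⟩
  · exact att7 a k (hk'.trans ((max_prod 2 x0 u0 (count (!a) w)).2.1 (by omega)))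
  · exact att8 a k (hk'.trans ((max_prod 2 x0 u0 (count (!a) w)).2.2 (by omega)))
  · exact (att_all a t).1 k (hk'.trans ((max_prod (t+3) x0 u0 (count (!a) w)).1 (by omega)))
  · exact (att_all a t).2.1 k (hk'.trans ((max_prod (t+3) x0 u0 (count (!a) w)).2.1 (by omega)))
  · exact (att_all a t).2.2 k (hk'.trans ((max_prod (t+3) x0 u0 (count (!a) w)).2.2 (by omega)))


/-! ### Assembly -/

lemma B_ne_zero {n k : ℕ} {p : List Bool} :
    B n p k ≠ 0 ↔ ∃ w : List Bool, w.length = n ∧ occ p w = k := by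
  unfold B
  have hf : Finite {w : List Bool // w.length = n ∧ occ p w = k} :=
    Set.Finite.subset (List.finite_length_eq Bool n) (fun w hw => hw.1)
  rw [Nat.card_ne_zero]
  constructor
  · rintro ⟨⟨w, hw⟩, -⟩
    exact ⟨w, hw⟩
  · rintro ⟨w, hw⟩
    exact ⟨⟨w, hw⟩, hf⟩

lemma max_spec (n : ℕ) (p : List Bool) :
    (∀ w : List Bool, w.length = n → occ p w ≤ maxOcc n p) ∧
    ∃ w : List Bool, w.length = n ∧ occ p w = maxOcc n p := by
  have hf : {k | ∃ w : List Bool, w.length = n ∧ occ p w = k}.Finite :=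
    (List.finite_length_eq Bool n).image (occ p)
  refine ⟨fun w hw => le_csSup hf.bddAbove ⟨w, hw, rfl⟩, ?_⟩
  have : {k | ∃ w : List Bool, w.length = n ∧ occ p w = k}.Nonempty :=
    ⟨_, replicate n true, by simp, rfl⟩
  exact Nat.sSup_mem this hf.bddAbove

lemma conclude {n : ℕ} {p : List Bool} (h2 : 2 ≤ maxOcc n p)
    (h0 : ∃ w : List Bool, w.length = n ∧ occ p w = 0)
    (h : ∀ w : List Bool, w.length = n → occ p w + 1 ≠ maxOcc n p) :
    B n p (maxOcc n p - 1) = 0 ∧ HasInternalZeroAt p n := by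
  have hB : B n p (maxOcc n p - 1) = 0 := by
    by_contra hc
    obtain ⟨w, hw, hv⟩ := B_ne_zero.1 hc
    exact h w hw (by omega)
  exact ⟨hB, 0, maxOcc n p - 1, maxOcc n p, by omega, by omega, B_ne_zero.2 h0, hB,
    B_ne_zero.2 (max_spec n p).2⟩

lemma no_zero {n : ℕ} {p : List Bool} (h : ∀ w : List Bool, w.length = n → ∀ k, k ≤ occ p w →
    (∃ w' : List Bool, w'.length ≤ n ∧ k < occ p w') → k ≠ 0 →
    ∃ w' : List Bool, w'.length = n ∧ occ p w' = k) :
    ¬ HasInternalZeroAt p n := by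
  rintro ⟨k₁, k₂, k₃, h12, h23, -, h2, h3⟩
  obtain ⟨w, hw, hv⟩ := B_ne_zero.1 h3
  exact B_ne_zero.2 (h w hw k₂ (by omega) ⟨w, hw.le, by omega⟩ (by omega)) h2

lemma one_run (a : Bool) (r n : ℕ) (hr : 2 ≤ r) (hn : r + 3 ≤ n) :
    B n (replicate r a) (maxOcc n (replicate r a) - 1) = 0 ∧
      HasInternalZeroAt (replicate r a) n := by
  obtain ⟨hM, w0, hw0, hv0⟩ := max_spec n (replicate r a)
  have h1 := hM (replicate n a) (by simp)
  rw [occ_replicate, count_replicate_self] at h1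
  have hc0 := count_len a w0
  rw [occ_replicate] at hv0
  have h2 : (count a w0).choose r ≤ n.choose r := Nat.choose_le_choose _ (by omega)
  have hMe : maxOcc n (replicate r a) = n.choose r := by omega
  obtain ⟨m, rfl⟩ := Nat.exists_eq_add_of_le' (show 1 ≤ n by omega)
  obtain ⟨q, rfl⟩ := Nat.exists_eq_add_of_le' (show 1 ≤ r by omega)
  have hp := Nat.choose_succ_succ' m q
  have hle := le_choose (m := m) (show 1 ≤ q by omega) (by omega)
  apply conclude
  · omega
  · refine ⟨replicate (m+1) (!a), by simp, ?_⟩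
    rw [occ_replicate, count_replicate]
    cases a <;> simp
  · intro w hw
    have hc := count_len a w
    rw [occ_replicate, hMe]
    rcases (show count a w = m + 1 ∨ count a w ≤ m by omega) with h | h
    · rw [h]; omega
    · have := Nat.choose_le_choose (q+1) h
      omega

lemma more_runs (a : Bool) (r s t n : ℕ) (hr : 1 ≤ r) (hne : ¬ (r = 1 ∧ s = 0 ∧ t ≤ 1))
    (hn : r + (s+1) + t + 3 ≤ n) (p : List Bool)
    (hp : p = replicate r a ++ (replicate (s+1) (!a) ++ replicate t a)) :
    B n p (maxOcc n p - 1) = 0 ∧ HasInternalZeroAt p n := by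
  have hv : ∀ w, vv a r (s+1) t 0 w = occ p w := by intro w; rw [hp]; simp [vv]
  obtain ⟨hM, hA⟩ := max_spec n p
  have := core a r s t n (maxOcc n p) hr hne hn (by simpa only [hv] using hM)
    (by simpa only [hv] using hA)
  simp only [hv] at this
  refine conclude (by omega) ⟨replicate n a, by simp, ?_⟩ this.2
  rw [← hv, vv_as]

lemma alt_zero (n : ℕ) : ¬ HasInternalZeroAt [] n := by
  rintro ⟨k₁, k₂, k₃, h12, h23, h1, -, h3⟩
  obtain ⟨w, hw, hv⟩ := B_ne_zero.1 h1
  obtain ⟨w', hw', hv'⟩ := B_ne_zero.1 h3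
  rw [occ_nil] at hv hv'
  omega

lemma alt_one (a : Bool) (n : ℕ) : ¬ HasInternalZeroAt [a] n := by
  apply no_zero
  intro w hw k hk _ _
  rw [occ_one] at hk
  have hc := count_len a w
  refine ⟨replicate k a ++ replicate (n - k) (!a), by simp; omega, ?_⟩
  rw [occ_one, count_append, count_replicate_self, count_replicate]
  cases a <;> simp

lemma runs_cons (a : Bool) (r : ℕ) (q : List Bool) (hq : ∀ y ∈ q.head?, y = !a) :
    runs (replicate (r+1) a ++ q) = replicate (r+1) a :: runs q := by
  unfold runs
  rw [splitBy_append, splitBy_of_isChain]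
  · rfl
  · simp
  · exact isChain_replicate_of_rel _ (by simp)
  · intro x hx y hy
    rw [hq y hy]
    have : x = a := by
      have := mem_of_getLast? hx
      exact eq_of_mem_replicate this
    subst this
    cases x <;> rfl

lemma peel (a : Bool) (q : List Bool) :
    ∃ r q', a :: q = replicate (r+1) a ++ q' ∧ ∀ y ∈ q'.head?, y = !a := by
  induction q with
  | nil => exact ⟨0, [], by simp, by simp⟩
  | cons c q ih =>
    rcases bool_cases a c with rfl | rfl
    · obtain ⟨r, q', h1, h2⟩ := ih
      exact ⟨r+1, q', by rw [h1, replicate_succ (n := r+1)]; rfl, h2⟩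
    · exact ⟨0, (!a) :: q, by simp, by simp⟩

lemma peel' (a : Bool) (q : List Bool) (hq : ∀ y ∈ q.head?, y = a) (hne : q ≠ []) :
    ∃ r q', q = replicate (r+1) a ++ q' ∧ (∀ y ∈ q'.head?, y = !a) ∧
      runs q = replicate (r+1) a :: runs q' := by
  obtain ⟨c, q, rfl⟩ := exists_cons_of_ne_nil hne
  have hc : c = a := hq c (by simp)
  subst hc
  obtain ⟨r, q', h1, h2⟩ := peel c q
  exact ⟨r, q', h1, h2, by rw [h1, runs_cons _ _ _ h2]⟩

lemma runs_nil : runs [] = [] := rfl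

theorem final (p : List Bool) (l : ℕ) (hl : p.length = l) (hr : numRuns p ≤ 3) :
    ((∀ q ∈ runs p, q.length = 1) → ∀ n, 7 ≤ n → ¬ HasInternalZeroAt p n) ∧
    ((¬ ∀ q ∈ runs p, q.length = 1) → ∀ n, l + 3 ≤ n →
      B n p (maxOcc n p - 1) = 0 ∧ HasInternalZeroAt p n) := by
  unfold numRuns at hr
  rcases eq_or_ne p [] with rfl | hp
  · exact ⟨fun _ n _ => alt_zero n, fun h => absurd (by simp [runs_nil]) h⟩
  obtain ⟨a, ha⟩ : ∃ a, ∀ y ∈ p.head?, y = a := by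
    obtain ⟨c, q, rfl⟩ := exists_cons_of_ne_nil hp
    exact ⟨c, by simp⟩
  obtain ⟨r, q1, hp1, hh1, hr1⟩ := peel' a p ha hp
  rcases eq_or_ne q1 [] with rfl | hq1
  · rw [hr1, runs_nil]
    rw [append_nil] at hp1
    subst hp1
    simp only [length_replicate] at hl
    refine ⟨fun h n _ => ?_, fun h n hn => ?_⟩
    · have : r = 0 := by simpa using h
      subst this
      exact alt_one a n
    · have : r ≠ 0 := by simpa using h
      exact one_run a (r+1) n (by omega) (by omega)
  obtain ⟨s, q2, hp2, hh2, hr2⟩ := peel' (!a) q1 hh1 hq1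
  rcases eq_or_ne q2 [] with rfl | hq2
  · rw [hr1, hr2, runs_nil]
    rw [append_nil] at hp2
    have hp' : p = replicate (r+1) a ++ (replicate (s+1) (!a) ++ replicate 0 a) := by
      rw [hp1, hp2]; simp
    have hl' : r + 1 + (s + 1) = l := by rw [← hl, hp']; simp
    refine ⟨fun h n _ => ?_, fun h n hn => ?_⟩
    · have : r = 0 ∧ s = 0 := by simpa using h
      obtain ⟨rfl, rfl⟩ := this
      rw [show p = [a, !a] by rw [hp']; simp]
      apply no_zero
      intro w hw k hk _ _
      exact alt_two a n w hw k hk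
    · have : ¬ (r = 0 ∧ s = 0) := by simpa using h
      exact more_runs a (r+1) s 0 n (by omega) (by omega) (by omega) p hp'
  rw [Bool.not_not] at hh2
  obtain ⟨t, q3, hp3, hh3, hr3⟩ := peel' a q2 hh2 hq2
  have hq3 : q3 = [] := by
    by_contra hne
    obtain ⟨_, q4, -, -, hr4⟩ := peel' (!a) q3 hh3 hne
    rw [hr1, hr2, hr3, hr4] at hr
    simp only [length_cons] at hr
    omega
  subst hq3
  rw [hr1, hr2, hr3, runs_nil]
  rw [append_nil] at hp3
  have hp' : p = replicate (r+1) a ++ (replicate (s+1) (!a) ++ replicate (t+1) a) := by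
    rw [hp1, hp2, hp3]
  have hl' : r + 1 + (s + 1) + (t + 1) = l := by rw [← hl, hp']; simp; omega
  refine ⟨fun h n hn => ?_, fun h n hn => ?_⟩
  · have : r = 0 ∧ s = 0 ∧ t = 0 := by simpa using h
    obtain ⟨rfl, rfl, rfl⟩ := this
    rw [show p = [a, !a, a] by rw [hp']; simp]
    apply no_zero
    intro w hw k hk _ _
    exact alt_three a n hn w hw k hk
  · have : ¬ (r = 0 ∧ s = 0 ∧ t = 0) := by simpa using h
    exact more_runs a (r+1) s (t+1) n (by omega) (by omega) (by omega) p hp'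

end ThreeRuns

theorem at_most_three_runs_internalZeros (p : List Bool) (l : ℕ) (hl : p.length = l)
    (hr : numRuns p ≤ 3) :
    ((∀ q ∈ runs p, q.length = 1) → ∀ n, 7 ≤ n → ¬ HasInternalZeroAt p n) ∧
    ((¬ ∀ q ∈ runs p, q.length = 1) → ∀ n, l + 3 ≤ n →
      B n p (maxOcc n p - 1) = 0 ∧ HasInternalZeroAt p n) := by
  exact ThreeRuns.final p l hl hr
end

section
/- Let p be a binary word with exactly 2 runs and of length l ≥ 3. For all n ≥ l + 2, B_{n,p}(M_{n,p} − 1) = 0; that is, no binary word of length n has exactly M_{n,p} − 1 occurrences of p. In particular, p has an internal zero at every n ≥ l + 2. -/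
theorem occ_nil_left (w : List Bool) : occ [] w = 1 := by
  unfold occ
  rw [(List.sublists_perm_sublists' w).count_eq]
  induction w with
  | nil => simp
  | cons d w ih =>
    rw [List.sublists'_cons, List.count_append, ih]
    simp [List.count_eq_zero]

theorem occ_cons_nil (c : Bool) (p : List Bool) : occ (c :: p) [] = 0 := by
  simp [occ]

theorem occ_cons_self (c : Bool) (p w : List Bool) :
    occ (c :: p) (c :: w) = occ (c :: p) w + occ p w := by
  unfold occ
  rw [(List.sublists_perm_sublists' (c :: w)).count_eq, (List.sublists_perm_sublists' w).count_eq,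
    (List.sublists_perm_sublists' w).count_eq, List.sublists'_cons, List.count_append]
  congr 1
  exact List.count_map_of_injective _ _ (List.cons_injective) _

theorem occ_cons_ne (c d : Bool) (h : d ≠ c) (p w : List Bool) :
    occ (c :: p) (d :: w) = occ (c :: p) w := by
  unfold occ
  rw [(List.sublists_perm_sublists' (d :: w)).count_eq, (List.sublists_perm_sublists' w).count_eq,
    List.sublists'_cons, List.count_append]
  simp [List.count_eq_zero, h]

/-- The two-run word. -/
def pw (a : Bool) (r s : ℕ) : List Bool := List.replicate r a ++ List.replicate s (!a)

theorem occ_rep (b : Bool) (s : ℕ) (w : List Bool) :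
    occ (List.replicate s b) w = (w.count b).choose s := by
  induction w generalizing s with
  | nil =>
    cases s with
    | zero => simp [occ_nil_left]
    | succ s => simp [List.replicate_succ, occ_cons_nil]
  | cons d w ih =>
    cases s with
    | zero => simp [occ_nil_left]
    | succ s =>
      by_cases h : d = b
      · subst h
        rw [List.replicate_succ, occ_cons_self, ← List.replicate_succ, ih, ih,
          List.count_cons_self, Nat.choose_succ_succ]
        ring
      · rw [List.replicate_succ, occ_cons_ne _ _ h, ← List.replicate_succ, ih,
          List.count_cons_of_ne h]

theorem occ_pw_zero (a : Bool) (s : ℕ) (w : List Bool) :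
    occ (pw a 0 s) w = (w.count (!a)).choose s := by
  simp [pw, occ_rep]

theorem occ_pw_succ_nil (a : Bool) (r s : ℕ) : occ (pw a (r+1) s) [] = 0 := by
  simp [pw, List.replicate_succ, occ_cons_nil]

theorem occ_pw_self (a : Bool) (r s : ℕ) (w : List Bool) :
    occ (pw a (r+1) s) (a :: w) = occ (pw a (r+1) s) w + occ (pw a r s) w := by
  simp [pw, List.replicate_succ, occ_cons_self]

theorem occ_pw_not (a : Bool) (r s : ℕ) (w : List Bool) :
    occ (pw a (r+1) s) ((!a) :: w) = occ (pw a (r+1) s) w := by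
  simp only [pw, List.replicate_succ, List.cons_append]
  exact occ_cons_ne _ _ (by simp) _ _

theorem occ_pw_le (a : Bool) (w : List Bool) : ∀ r s : ℕ,
    occ (pw a r s) w ≤ (w.count a).choose r * (w.count (!a)).choose s := by
  induction w with
  | nil =>
    intro r s
    cases r with
    | zero => simp [occ_pw_zero]
    | succ r => simp [occ_pw_succ_nil]
  | cons d w ih =>
    intro r s
    cases r with
    | zero => simp [occ_pw_zero]
    | succ r =>
      by_cases h : d = a
      · subst h
        rw [occ_pw_self, List.count_cons_self, Nat.choose_succ_succ,
          List.count_cons_of_ne (by simp)]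
        have h1 := ih (r+1) s
        have h2 := ih r s
        simp only [Nat.succ_eq_add_one]
        nlinarith
      · have h' : d = !a := by cases d <;> cases a <;> simp_all
        subst h'
        rw [occ_pw_not, List.count_cons_self, List.count_cons_of_ne (by simp)]
        exact (ih (r+1) s).trans (Nat.mul_le_mul_left _ (Nat.choose_le_choose _ (Nat.le_succ _)))

theorem occ_pw_dich (a : Bool) (w : List Bool) :
    (∀ r s : ℕ, occ (pw a r s) w = (w.count a).choose r * (w.count (!a)).choose s) ∨
    ∃ x y : ℕ, w.count a = x + 1 ∧ w.count (!a) = y + 1 ∧ ∀ r s : ℕ,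
      occ (pw a (r+1) (s+1)) w + x.choose r * y.choose s ≤
        (x+1).choose (r+1) * (y+1).choose (s+1) := by
  induction w with
  | nil =>
    left
    intro r s
    cases r with
    | zero => simp [occ_pw_zero]
    | succ r => simp [occ_pw_succ_nil]
  | cons d w ih =>
    by_cases h : d = a
    · subst h
      rcases ih with ih | ⟨x, y, hx, hy, ih⟩
      · left
        intro r s
        cases r with
        | zero => simp [occ_pw_zero]
        | succ r =>
          rw [occ_pw_self, List.count_cons_self, Nat.choose_succ_succ,
            List.count_cons_of_ne (by simp), ih, ih]
          ring
      · right
        refine ⟨x+1, y, by simp [hx], by simpa using hy, ?_⟩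
        intro r s
        rw [occ_pw_self]
        cases r with
        | zero =>
          have := ih 0 s
          rw [occ_pw_zero, hy]
          simp at this ⊢
          nlinarith
        | succ r =>
          have h1 := ih (r+1) s
          have h2 := ih r s
          rw [Nat.choose_succ_succ (x+1) (r+1), Nat.choose_succ_succ x r]
          rw [Nat.choose_succ_succ x r] at h2
          simp only [Nat.succ_eq_add_one] at h2 ⊢
          nlinarith
    · have h' : d = !a := by cases d <;> cases a <;> simp_all
      subst h'
      rcases Nat.eq_zero_or_pos (w.count a) with h0 | h0
      · left
        intro r s
        cases r with
        | zero => simp [occ_pw_zero]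
        | succ r =>
          have := occ_pw_le a w (r+1) s
          rw [h0] at this
          rw [occ_pw_not, List.count_cons_of_ne (by simp), h0]
          simp at this ⊢
          exact this
      · right
        obtain ⟨x, hx⟩ := Nat.exists_eq_succ_of_ne_zero h0.ne'
        refine ⟨x, w.count (!a), by simpa using hx, by simp, ?_⟩
        intro r s
        have := occ_pw_le a w (r+1) (s+1)
        rw [hx] at this
        rw [occ_pw_not, Nat.choose_succ_succ (w.count (!a)) s]
        have h3 : x.choose r ≤ (x+1).choose (r+1) := by
          rw [Nat.choose_succ_succ]; omega
        have h4 := Nat.mul_le_mul_right ((w.count (!a)).choose s) h3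
        simp only [Nat.succ_eq_add_one] at *
        nlinarith

theorem occ_pw_sorted (a : Bool) (x y r s : ℕ) :
    occ (pw a r s) (pw a x y) = x.choose r * y.choose s := by
  induction x generalizing r with
  | zero =>
    cases r with
    | zero => rw [occ_pw_zero]; simp [pw]
    | succ r =>
      have := occ_pw_le a (pw a 0 y) (r+1) s
      simpa [pw, List.count_replicate] using this
  | succ x ih =>
    have e : pw a (x+1) y = a :: pw a x y := by simp [pw, List.replicate_succ]
    cases r with
    | zero => rw [occ_pw_zero]; simp [pw, List.count_replicate]
    | succ r =>
      rw [e, occ_pw_self, ih, ih, Nat.choose_succ_succ]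
      ring

theorem const_of_chain (l : List Bool) (h : l.IsChain fun x y => (x == y) = true) (hn : l ≠ []) :
    ∃ a r, l = List.replicate (r+1) a := by
  induction l with
  | nil => exact absurd rfl hn
  | cons c l ih =>
    cases l with
    | nil => exact ⟨c, 0, by simp⟩
    | cons d l =>
      rw [List.isChain_cons_cons] at h
      obtain ⟨a, r, har⟩ := ih h.2 (by simp)
      have h1 : c = d := by simpa using h.1
      have h2 : d = a := by
        rw [List.replicate_succ] at har
        exact (List.cons.inj har).1
      exact ⟨a, r+1, by rw [har, List.replicate_succ (n := r+1), h1, h2]⟩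

theorem pw_of_numRuns (p : List Bool) (hr : numRuns p = 2) :
    ∃ a r s, p = pw a (r+1) (s+1) := by
  unfold numRuns runs at hr
  obtain ⟨l1, l2, h⟩ := List.length_eq_two.1 hr
  obtain ⟨hf, hn, hc, hc'⟩ := List.splitBy_eq_iff.1 h
  obtain ⟨a, r, h1⟩ := const_of_chain l1 (hc l1 (by simp)) (by rintro rfl; simp at hn)
  obtain ⟨b, s, h2⟩ := const_of_chain l2 (hc l2 (by simp)) (by rintro rfl; simp at hn)
  subst h1 h2
  have hb : b = !a := by
    simp at hc'
    cases a <;> cases b <;> simp_all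
  exact ⟨a, r, s, by simp [hf, pw, hb]⟩

theorem choose_int (x k : ℕ) :
    (x.choose (k+1) : ℤ) * (k+1) = x.choose k * ((x:ℤ) - k) := by
  rcases le_or_gt k x with h | h
  · have := Nat.choose_succ_right_eq x k
    zify [h] at this
    exact this
  · rw [Nat.choose_eq_zero_of_lt h, Nat.choose_eq_zero_of_lt (by omega)]; simp

/-- Difference identity. -/
theorem diff_id (r s x y : ℕ) :
    ((r:ℤ)+1) * (s+1) * (((x+1).choose (r+1) * y.choose (s+1) : ℕ) -
      (x.choose (r+1) * (y+1).choose (s+1) : ℕ)) =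
    (x.choose r * y.choose s : ℕ) * ((r+1) * ((y:ℤ) - s) - (s+1) * ((x:ℤ) - r)) := by
  have h1 := choose_int x r
  have h2 := choose_int y s
  rw [Nat.choose_succ_succ x r, Nat.choose_succ_succ y s]
  push_cast
  simp only [Nat.succ_eq_add_one]
  linear_combination ((r:ℤ)+1) * (x.choose r) * h2 - ((s:ℤ)+1) * (y.choose s) * h1

theorem choose_lower (r u : ℕ) : r + 1 ≤ (r + (u+1)).choose r := by
  have h := Nat.choose_le_choose r (show r + 1 ≤ r + (u+1) by omega)
  rwa [Nat.choose_succ_self_right] at h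

theorem choose_lower2 (r u : ℕ) (hr : 1 ≤ r) (hu : 1 ≤ u) : r + 2 ≤ (r + (u+1)).choose r := by
  obtain ⟨q, rfl⟩ := Nat.exists_eq_add_of_le' hr
  have h := Nat.choose_le_choose (q+1) (show q + 1 + 2 ≤ q + 1 + (u+1) by omega)
  rw [Nat.choose_succ_succ (q+2) q] at h
  have h1 : (q+2).choose (q+1) = q + 2 := Nat.choose_succ_self_right (q+1)
  have h2 : q + 1 ≤ (q+2).choose q := choose_lower q 1
  simp only [Nat.succ_eq_add_one] at h
  omega

theorem no_step (r s x y : ℕ) (hrs : 1 ≤ r + s) (hxy : r + s + 3 ≤ x + y) :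
    (x+1).choose (r+1) * y.choose (s+1) ≠ x.choose (r+1) * (y+1).choose (s+1) + 1 := by
  intro h
  have hd := diff_id r s x y
  rw [h] at hd
  push_cast at hd
  rcases lt_trichotomy x r with hx | hx | hx
  · rw [Nat.choose_eq_zero_of_lt (show x + 1 < r + 1 by omega)] at h
    omega
  · subst hx
    rw [Nat.choose_self, Nat.choose_eq_zero_of_lt (Nat.lt_succ_self x)] at h
    have := Nat.choose_le_choose (s+1) (show s + 1 + 1 ≤ y by omega)
    rw [Nat.choose_succ_self_right] at this
    omega
  · rcases le_or_gt y s with hy | hy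
    · rw [Nat.choose_eq_zero_of_lt (show y < s + 1 by omega)] at h
      omega
    · obtain ⟨u, rfl⟩ : ∃ u, x = r + (u+1) := ⟨x - r - 1, by omega⟩
      obtain ⟨v, rfl⟩ : ∃ v, y = s + (v+1) := ⟨y - s - 1, by omega⟩
      have ha := choose_lower r u
      have hb := choose_lower s v
      have ha2 := choose_lower2 r u
      have hb2 := choose_lower2 s v
      generalize (r + (u+1)).choose r = A at *
      generalize (s + (v+1)).choose s = C at *
      clear h
      push_cast at hd
      have hd' : ((r:ℤ)+1) * (s+1) = A * C * ((r+1) * (v+1) - (s+1) * (u+1)) := by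
        linear_combination hd
      have hAC : (r+1) * (s+1) ≤ A * C := Nat.mul_le_mul ha hb
      set g : ℤ := ((r:ℤ)+1) * (v+1) - (s+1) * (u+1) with hg
      have hg1 : 1 ≤ g := by
        by_contra hcon
        have : g ≤ 0 := by omega
        have h2 : (A:ℤ) * C * g ≤ 0 := mul_nonpos_of_nonneg_of_nonpos (by positivity) this
        have : (0:ℤ) < ((r:ℤ)+1) * (s+1) := by positivity
        linarith
      have hAC' : ((r:ℤ)+1) * (s+1) ≤ A * C := by exact_mod_cast hAC
      have hpos : (0:ℤ) < ((r:ℤ)+1) * (s+1) := by positivity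
      have hg2 : g = 1 := by nlinarith
      rw [hg2, mul_one] at hd'
      have hEq : (r+1) * (s+1) = A * C := by exact_mod_cast hd'
      have hA : A = r + 1 := by
        by_contra hne
        have : r + 2 ≤ A := by omega
        have := Nat.mul_le_mul this hb
        nlinarith
      have hC : C = s + 1 := by
        by_contra hne
        have : s + 2 ≤ C := by omega
        have := Nat.mul_le_mul ha this
        nlinarith
      have c1 : r = 0 ∨ u = 0 := by
        by_contra hcon
        have := ha2 (by omega) (by omega)
        omega
      have c2 : s = 0 ∨ v = 0 := by
        by_contra hcon
        have := hb2 (by omega) (by omega)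
        omega
      rcases c1 with rfl | rfl
      · rcases c2 with rfl | rfl
        · omega
        · push_cast at hg
          nlinarith
      · rcases c2 with rfl | rfl
        · push_cast at hg
          have : (1:ℤ) ≤ r := by omega
          have : (1:ℤ) ≤ v := by omega
          nlinarith
        · omega

/-- Once the linear factor is nonpositive the product is nonincreasing. -/
theorem desc (r s : ℕ) (d x y : ℕ)
    (hg : ((r:ℤ)+1) * ((y:ℤ) + d - 1 - s) - (s+1) * ((x:ℤ) - r) ≤ 0) :
    (x+d).choose (r+1) * y.choose (s+1) ≤ x.choose (r+1) * (y+d).choose (s+1) := by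
  induction d generalizing y with
  | zero => simp
  | succ d ih =>
    have h1 := ih (y+1) (by push_cast at hg ⊢; linarith)
    have h2 : (x+d+1).choose (r+1) * y.choose (s+1) ≤ (x+d).choose (r+1) * (y+1).choose (s+1) := by
      have hd := diff_id r s (x+d) y
      have hneg : ((r:ℤ)+1) * ((y:ℤ) - s) - (s+1) * (((x+d:ℕ):ℤ) - r) ≤ 0 := by
        push_cast at hg ⊢
        have : (0:ℤ) ≤ (r+1) * d := by positivity
        have : (0:ℤ) ≤ (s+1) * d := by positivity
        nlinarith
      have h3 := mul_nonpos_of_nonneg_of_nonpos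
        (Int.natCast_nonneg ((x+d).choose r * y.choose s)) hneg
      rw [← hd] at h3
      have hpos : (0:ℤ) < ((r:ℤ)+1) * (s+1) := by positivity
      have h4 := nonpos_of_mul_nonpos_right h3 hpos
      have : (((x+d+1).choose (r+1) * y.choose (s+1) : ℕ) : ℤ) ≤
        ((x+d).choose (r+1) * (y+1).choose (s+1) : ℕ) := by linarith
      exact_mod_cast this
    have e : y + (d+1) = y + 1 + d := by omega
    rw [e]
    exact h2.trans h1

theorem no_gap_aux (r s M : ℕ) (hrs : 1 ≤ r + s) (d x y : ℕ) (hxy : r + s + 4 ≤ x + y + d)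
    (hM : ∀ x' y', x' + y' = x + y + d → x'.choose (r+1) * y'.choose (s+1) ≤ M)
    (h1 : (x+d).choose (r+1) * y.choose (s+1) = M)
    (h2 : x.choose (r+1) * (y+d).choose (s+1) + 1 = M) : False := by
  induction d generalizing x with
  | zero => simp at h1 h2; omega
  | succ d ih =>
    by_cases hg : ((r:ℤ)+1) * ((y:ℤ) + (d+1:ℕ) - 1 - s) - (s+1) * ((x:ℤ) - r) ≤ 0
    · have := desc r s (d+1) x y hg
      omega
    · push Not at hg
      have hd := diff_id r s x (y+d)
      have h3 : (0:ℤ) ≤ ((x.choose r * (y+d).choose s : ℕ):ℤ) *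
          ((r+1) * (((y+d:ℕ):ℤ) - s) - (s+1) * ((x:ℤ) - r)) := by
        apply mul_nonneg (Int.natCast_nonneg _)
        push_cast at hg ⊢
        linarith
      rw [← hd] at h3
      have hpos : (0:ℤ) < ((r:ℤ)+1) * (s+1) := by positivity
      have h4 := nonneg_of_mul_nonneg_right h3 hpos
      have h5 : x.choose (r+1) * (y+d+1).choose (s+1) ≤
          (x+1).choose (r+1) * (y+d).choose (s+1) := by
        have : ((x.choose (r+1) * (y+d+1).choose (s+1) : ℕ) : ℤ) ≤
          ((x+1).choose (r+1) * (y+d).choose (s+1) : ℕ) := by linarith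
        exact_mod_cast this
      have h6 := hM (x+1) (y+d) (by omega)
      have h7 := no_step r s x (y+d) hrs (by omega)
      have e : y + (d+1) = y + d + 1 := by omega
      rw [e] at h2
      apply ih (x+1) (by omega)
      · intro x' y' h; exact hM x' y' (by omega)
      · rw [← h1]; congr 2; omega
      · omega

theorem no_gap (r s M n : ℕ) (hrs : 1 ≤ r + s) (hn : r + s + 4 ≤ n)
    (hM : ∀ x' y', x' + y' = n → x'.choose (r+1) * y'.choose (s+1) ≤ M)
    (X Y x y : ℕ) (hXY : X + Y = n) (hxy : x + y = n)
    (h1 : X.choose (r+1) * Y.choose (s+1) = M)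
    (h2 : x.choose (r+1) * y.choose (s+1) + 1 = M) : False := by
  rcases le_total x X with h | h
  · obtain ⟨d, rfl⟩ := Nat.exists_eq_add_of_le h
    have : y = Y + d := by omega
    subst this
    exact no_gap_aux r s M hrs d x Y (by omega) (fun x' y' h' => hM x' y' (by omega)) h1 h2
  · obtain ⟨d, rfl⟩ := Nat.exists_eq_add_of_le h
    have : Y = y + d := by omega
    subst this
    refine no_gap_aux s r M (by omega) d y X (by omega) (fun x' y' h' => ?_) ?_ ?_
    · rw [mul_comm]; exact hM y' x' (by omega)
    · rw [mul_comm]; exact h1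
    · rw [mul_comm]; exact h2

theorem B_ne_zero (n k : ℕ) (p : List Bool) (w : List Bool) (h : w.length = n) (h' : occ p w = k) :
    B n p k ≠ 0 := by
  unfold B
  have hf : Finite {w : List Bool // w.length = n ∧ occ p w = k} :=
    ((List.finite_length_eq Bool n).subset (fun w hw => hw.1) :
      {w : List Bool | w.length = n ∧ occ p w = k}.Finite).to_subtype
  have : Nonempty {w : List Bool // w.length = n ∧ occ p w = k} := ⟨⟨w, h, h'⟩⟩
  exact Nat.card_pos.ne'

theorem B_eq_zero (n k : ℕ) (p : List Bool) (h : ∀ w : List Bool, w.length = n → occ p w ≠ k) :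
    B n p k = 0 := by
  unfold B
  have : IsEmpty {w : List Bool // w.length = n ∧ occ p w = k} := ⟨fun w => h w.1 w.2.1 w.2.2⟩
  exact Nat.card_of_isEmpty

theorem loss_case (s x M : ℕ) (_hs : 1 ≤ s) (hx : 2 ≤ x)
    (hM : x * (s + 2) ≤ M) (h : x + 1 = M) : False := by
  nlinarith

theorem choose_eq_one' (x r : ℕ) (h : x.choose r = 1) : r = 0 ∨ r = x := by
  have := Nat.choose_eq_one_iff.1 h
  omega

theorem two_runs_B_max_sub_one (p : List Bool) (l : ℕ) (hl : p.length = l)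
    (hr : numRuns p = 2) (hl3 : 3 ≤ l) (n : ℕ) (hn : l + 2 ≤ n) :
    B n p (maxOcc n p - 1) = 0 ∧ HasInternalZeroAt p n := by
  obtain ⟨a, r, s, rfl⟩ := pw_of_numRuns p hr
  have hlen : ∀ x y, (pw a x y).length = x + y := by intro x y; simp [pw]
  rw [hlen] at hl
  have hcount : ∀ w : List Bool, w.count a + w.count (!a) = w.length := by
    intro w
    exact List.count_add_count_not w a
  set S := {k | ∃ w : List Bool, w.length = n ∧ occ (pw a (r+1) (s+1)) w = k} with hS
  have hne : S.Nonempty := ⟨_, pw a n 0, by simp [hlen], rfl⟩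
  have hbdd : BddAbove S := by
    refine ⟨2 ^ n, ?_⟩
    rintro k ⟨w, hw, rfl⟩
    unfold occ
    refine List.count_le_length.trans ?_
    rw [List.length_sublists, hw]
  have hmem : maxOcc n (pw a (r+1) (s+1)) ∈ S := Nat.sSup_mem hne hbdd
  have hle : ∀ w : List Bool, w.length = n →
      occ (pw a (r+1) (s+1)) w ≤ maxOcc n (pw a (r+1) (s+1)) :=
    fun w hw => le_csSup hbdd ⟨w, hw, rfl⟩
  generalize maxOcc n (pw a (r+1) (s+1)) = M at *
  have hM : ∀ x y, x + y = n → x.choose (r+1) * y.choose (s+1) ≤ M := by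
    intro x y hxy
    rw [← occ_pw_sorted a]
    exact hle _ (by rw [hlen, hxy])
  obtain ⟨W, hW, hWM⟩ := hmem
  have hX : (W.count a).choose (r+1) * (W.count (!a)).choose (s+1) = M := by
    apply le_antisymm
    · exact hM _ _ (by rw [hcount, hW])
    · rw [← hWM]; exact occ_pw_le a W _ _
  have hM3 : 3 ≤ M := by
    have h1 := hM (r+1) (n - (r+1)) (by omega)
    have h2 := Nat.choose_le_choose (s+1) (show s + 1 + 2 ≤ n - (r+1) by omega)
    have h3 := choose_lower2 (s+1) 1 (by omega) (by omega)
    rw [Nat.choose_self, one_mul] at h1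
    simp only [Nat.reduceAdd] at h3
    omega
  have hzero : B n (pw a (r+1) (s+1)) (M - 1) = 0 := by
    apply B_eq_zero
    intro w hw hocc
    have hc := hcount w
    rw [hw] at hc
    rcases occ_pw_dich a w with h | ⟨x, y, hx, hy, h⟩
    · have h1 := h (r+1) (s+1)
      exact no_gap r s M n (by omega) (by omega) hM _ _ _ _ (by rw [hcount, hW]) hc hX
        (by omega)
    · have h1 := h r s
      rw [hocc] at h1
      rw [hx, hy] at hc
      have h2 := hM (x+1) (y+1) hc
      have hpos : 0 < (x+1).choose (r+1) * (y+1).choose (s+1) := by omega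
      have hxr : r ≤ x := by
        by_contra hcon
        rw [Nat.choose_eq_zero_of_lt (show x + 1 < r + 1 by omega)] at hpos
        simp at hpos
      have hys : s ≤ y := by
        by_contra hcon
        rw [Nat.choose_eq_zero_of_lt (show y + 1 < s + 1 by omega)] at hpos
        simp at hpos
      have hp1 : 0 < x.choose r * y.choose s :=
        Nat.mul_pos (Nat.choose_pos hxr) (Nat.choose_pos hys)
      have hp2 : x.choose r * y.choose s = 1 := by omega
      have hfM : (x+1).choose (r+1) * (y+1).choose (s+1) = M := by omega
      have e1 := Nat.eq_one_of_mul_eq_one_right hp2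
      have e2 := Nat.eq_one_of_mul_eq_one_left hp2
      rcases choose_eq_one' _ _ e1 with rfl | rfl
      · rcases choose_eq_one' _ _ e2 with rfl | rfl
        · omega
        · have h3 := hM x (s+2) (by omega)
          rw [show (s+2).choose (s+1) = s + 2 from Nat.choose_succ_self_right (s+1)] at h3
          simp only [zero_add, Nat.choose_one_right, Nat.choose_self, mul_one] at h3 hfM
          exact loss_case s x M (by omega) (by omega) h3 hfM
      · rcases choose_eq_one' _ _ e2 with rfl | rfl
        · have h3 := hM (r+2) y (by omega)
          rw [show (r+2).choose (r+1) = r + 2 from Nat.choose_succ_self_right (r+1)] at h3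
          simp only [zero_add, Nat.choose_one_right, Nat.choose_self, one_mul] at h3 hfM
          exact loss_case r y M (by omega) (by omega) (by rw [mul_comm]; exact h3) hfM
        · omega
  refine ⟨hzero, 0, M - 1, M, by omega, by omega, ?_, hzero, ?_⟩
  · exact B_ne_zero _ _ _ (pw a n 0) (by simp [hlen]) (by rw [occ_pw_sorted]; simp)
  · exact B_ne_zero _ _ _ W hW hWM
end
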